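/- arXiv:2201.11145 — 6 statements merged into one kernel-verified Lean document; each statement's English description precedes it below -/
import Mathlib

section
/- For every nonnegative integer k there exist constants c_k > 0 and x_k > 0, independent of χ₁, χ₂ and w, such that for all integers q₁, q₂ > 1, all primitive quadratic Dirichlet characters χ₁ mod q₁ and χ₂ mod q₂, every real number w, and every real x ≥ x_k, one has A_k(x,w) ≥ c_k·x^k. -/
open Finset

/-- The Dirichlet series coefficients of
`f(s) = ζ(s) L(s,χ₁) L(s,χ₂) L(s,χ₁χ₂)`, given explicitly by
`a n = Σ_{j k l m = n} χ₁(k) χ₂(l) χ₁(m) χ₂(m)`. -/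
noncomputable def goldfeldCoeff {q₁ q₂ : ℕ} (χ₁ : DirichletCharacter ℂ q₁)
    (χ₂ : DirichletCharacter ℂ q₂) (n : ℕ) : ℂ :=
  ∑ p ∈ n.divisorsAntidiagonal, ∑ r ∈ p.2.divisorsAntidiagonal,
    ∑ t ∈ r.2.divisorsAntidiagonal,
      χ₁ (r.1 : ZMod q₁) * χ₂ (t.1 : ZMod q₂) * χ₁ (t.2 : ZMod q₁) * χ₂ (t.2 : ZMod q₂)

/-- `A₀(x,w) = Σ_{n ≤ x} a n * n ^ (-w)` and `A_{k+1}(x,w) = ∫₀ˣ A_k(y,w) dy`. -/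
noncomputable def goldfeldA {q₁ q₂ : ℕ} (χ₁ : DirichletCharacter ℂ q₁)
    (χ₂ : DirichletCharacter ℂ q₂) : ℕ → ℝ → ℝ → ℂ
  | 0, x, w => ∑ n ∈ Icc 1 ⌊x⌋₊, goldfeldCoeff χ₁ χ₂ n * (((n : ℝ) ^ (-w) : ℝ) : ℂ)
  | (k + 1), x, w => ∫ y in (0:ℝ)..x, goldfeldA χ₁ χ₂ k y w

open scoped ComplexOrder ArithmeticFunction ArithmeticFunction.zeta in
/-- Nonnegativity at powers of `p` is preserved by Dirichlet convolution. -/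
lemma pn_mul {p : ℕ} (hp : p.Prime) {f g : ArithmeticFunction ℂ}
    (hf : ∀ m, 0 ≤ f (p ^ m)) (hg : ∀ m, 0 ≤ g (p ^ m)) (m : ℕ) : 0 ≤ (f * g) (p ^ m) := by
  rw [ArithmeticFunction.mul_apply, Nat.sum_divisorsAntidiagonal (fun a b => f a * g b),
    Nat.sum_divisors_prime_pow hp]
  refine Finset.sum_nonneg fun i hi => ?_
  have : i ≤ m := by simpa [Nat.lt_succ_iff] using hi
  rw [Nat.pow_div this hp.pos]
  exact mul_nonneg (hf _) (hg _)

open scoped ComplexOrder in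
lemma pn_mul_one {p : ℕ} (hp : p.Prime) {f g : ArithmeticFunction ℂ} {b : ℂ}
    (hb : b = 0 ∨ b = 1 ∨ b = -1)
    (hf : ∀ m, f (p ^ m) = 1) (hg : ∀ m, g (p ^ m) = b ^ m) (m : ℕ) : 0 ≤ (f * g) (p ^ m) := by
  rw [mul_comm, ArithmeticFunction.mul_apply, Nat.sum_divisorsAntidiagonal (fun a b => g a * f b),
    Nat.sum_divisors_prime_pow hp]
  have : ∀ i ∈ range (m + 1), g (p ^ i) * f (p ^ m / p ^ i) = b ^ i := by
    intro i hi
    have : i ≤ m := by simpa [Nat.lt_succ_iff] using hi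
    rw [Nat.pow_div this hp.pos, hf, hg, mul_one]
  rw [Finset.sum_congr rfl this]
  rcases hb with rfl | rfl | rfl
  · exact Finset.sum_nonneg fun i _ => pow_nonneg le_rfl _
  · simp only [one_pow]; exact Finset.sum_nonneg fun i _ => zero_le_one
  · rw [neg_one_geom_sum]; split_ifs <;> simp

lemma quad_val {q : ℕ} {χ : DirichletCharacter ℂ q} (h : χ ^ 2 = 1) (a : ZMod q) :
    χ a = 0 ∨ χ a = 1 ∨ χ a = -1 := by
  by_cases ha : IsUnit a
  · right
    have : χ a ^ 2 = 1 := by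
      rw [← MulChar.pow_apply' χ two_ne_zero, h, MulChar.one_apply ha]
    have h3 : (χ a - 1) * (χ a + 1) = 0 := by linear_combination this
    rcases mul_eq_zero.1 h3 with h | h
    · left; linear_combination h
    · right; linear_combination h
  · left; exact χ.map_nonunit ha

/-- The arithmetic function attached to a Dirichlet character. -/
noncomputable def chF {q : ℕ} (χ : DirichletCharacter ℂ q) : ArithmeticFunction ℂ :=
  ⟨fun n => if n = 0 then 0 else χ (n : ZMod q), by simp⟩

lemma chF_apply {q : ℕ} (χ : DirichletCharacter ℂ q) {n : ℕ} (h : n ≠ 0) :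
    chF χ n = χ (n : ZMod q) := by simp [chF, h]

lemma chF_mult {q : ℕ} (χ : DirichletCharacter ℂ q) : (chF χ).IsMultiplicative := by
  rw [ArithmeticFunction.IsMultiplicative.iff_ne_zero]
  refine ⟨by simp [chF], fun {m n} hm hn _ => ?_⟩
  rw [chF_apply _ hm, chF_apply _ hn, chF_apply _ (mul_ne_zero hm hn)]
  simp

open scoped ArithmeticFunction.zeta in
lemma goldfeldCoeff_eq {q₁ q₂ : ℕ} (χ₁ : DirichletCharacter ℂ q₁)
    (χ₂ : DirichletCharacter ℂ q₂) (n : ℕ) :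
    goldfeldCoeff χ₁ χ₂ n =
      ((ζ : ArithmeticFunction ℂ) * (chF χ₁ * (chF χ₂ * (chF χ₁).pmul (chF χ₂)))) n := by
  unfold goldfeldCoeff
  rw [ArithmeticFunction.mul_apply]
  refine Finset.sum_congr rfl fun p hp => ?_
  have hp1 := Nat.ne_zero_of_mem_divisorsAntidiagonal hp
  rw [ArithmeticFunction.natCoe_apply, ArithmeticFunction.zeta_apply_ne hp1.1, Nat.cast_one,
    one_mul, ArithmeticFunction.mul_apply]
  refine Finset.sum_congr rfl fun r hr => ?_
  have hr1 := Nat.ne_zero_of_mem_divisorsAntidiagonal hr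
  rw [chF_apply _ hr1.1, ArithmeticFunction.mul_apply, Finset.mul_sum]
  refine Finset.sum_congr rfl fun t ht => ?_
  have ht1 := Nat.ne_zero_of_mem_divisorsAntidiagonal ht
  rw [ArithmeticFunction.pmul_apply, chF_apply _ ht1.1, chF_apply _ ht1.2, chF_apply _ ht1.2]
  ring

open scoped ComplexOrder ArithmeticFunction.zeta in
lemma goldfeldCoeff_nonneg {q₁ q₂ : ℕ} {χ₁ : DirichletCharacter ℂ q₁}
    {χ₂ : DirichletCharacter ℂ q₂} (h₁ : χ₁ ^ 2 = 1) (h₂ : χ₂ ^ 2 = 1) (n : ℕ) :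
    0 ≤ goldfeldCoeff χ₁ χ₂ n := by
  rw [goldfeldCoeff_eq]
  set Z : ArithmeticFunction ℂ := ((ζ : ArithmeticFunction ℕ) : ArithmeticFunction ℂ) with hZ
  set X := chF χ₁ with hX
  set Y := chF χ₂ with hY
  have hm : (Z * (X * (Y * X.pmul Y))).IsMultiplicative :=
    ArithmeticFunction.isMultiplicative_zeta.natCast.mul ((chF_mult χ₁).mul
      ((chF_mult χ₂).mul ((chF_mult χ₁).pmul (chF_mult χ₂))))
  rcases eq_or_ne n 0 with rfl | hn
  · simp
  rw [hm.multiplicative_factorization _ hn]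
  refine Finset.prod_nonneg fun p hp => ?_
  have hp : p.Prime := Nat.prime_of_mem_primeFactors hp
  generalize n.factorization p = m
  have e1 : ∀ m, Z (p ^ m) = 1 := fun m => by
    simp [hZ, ArithmeticFunction.natCoe_apply, ArithmeticFunction.zeta_apply, hp.ne_zero]
  have e2 : ∀ m, X (p ^ m) = χ₁ (p : ZMod q₁) ^ m := fun m => by
    rw [hX, chF_apply _ (pow_ne_zero _ hp.ne_zero)]; simp
  have e3 : ∀ m, Y (p ^ m) = χ₂ (p : ZMod q₂) ^ m := fun m => by
    rw [hY, chF_apply _ (pow_ne_zero _ hp.ne_zero)]; simp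
  have e4 : ∀ m, X.pmul Y (p ^ m) = (χ₁ (p : ZMod q₁) * χ₂ (p : ZMod q₂)) ^ m := fun m => by
    rw [ArithmeticFunction.pmul_apply, e2, e3, mul_pow]
  have hα := quad_val h₁ (p : ZMod q₁)
  have hβ := quad_val h₂ (p : ZMod q₂)
  generalize χ₁ (p : ZMod q₁) = α at *
  generalize χ₂ (p : ZMod q₂) = β at *
  generalize X.pmul Y = W at *
  have r1 : Z * (X * (Y * W)) = (Z * Y) * (X * W) := by ring
  have r2 : Z * (X * (Y * W)) = (Z * X) * (Y * W) := by ring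
  have r3 : Z * (X * (Y * W)) = (Z * X) * (W * Y) := by ring
  rcases hα with rfl | rfl | rfl
  · rw [r1]
    refine pn_mul hp (pn_mul_one hp hβ e1 e3) (pn_mul hp ?_ ?_) m
    · intro m; rw [e2]; exact pow_nonneg le_rfl _
    · intro m; rw [e4, zero_mul]; exact pow_nonneg le_rfl _
  · rw [r1]
    refine pn_mul hp (pn_mul_one hp hβ e1 e3) (pn_mul_one hp hβ ?_ ?_) m
    · intro m; rw [e2, one_pow]
    · intro m; rw [e4, one_mul]
  · have hα : (-1 : ℂ) = 0 ∨ (-1 : ℂ) = 1 ∨ (-1 : ℂ) = -1 := Or.inr (Or.inr rfl)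
    rcases hβ with rfl | rfl | rfl
    · rw [r2]
      refine pn_mul hp (pn_mul_one hp hα e1 e2) (pn_mul hp ?_ ?_) m
      · intro m; rw [e3]; exact pow_nonneg le_rfl _
      · intro m; rw [e4, mul_zero]; exact pow_nonneg le_rfl _
    · rw [r2]
      refine pn_mul hp (pn_mul_one hp hα e1 e2) (pn_mul_one hp hα ?_ ?_) m
      · intro m; rw [e3, one_pow]
      · intro m; rw [e4, mul_one]
    · rw [r3]
      refine pn_mul hp (pn_mul_one hp hα e1 e2) (pn_mul_one hp hα ?_ ?_) m
      · intro m; rw [e4]; norm_num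
      · intro m; rw [e3]

lemma goldfeldCoeff_one {q₁ q₂ : ℕ} (χ₁ : DirichletCharacter ℂ q₁)
    (χ₂ : DirichletCharacter ℂ q₂) : goldfeldCoeff χ₁ χ₂ 1 = 1 := by
  simp [goldfeldCoeff]

lemma goldfeldA_aux {q₁ q₂ : ℕ} {χ₁ : DirichletCharacter ℂ q₁}
    {χ₂ : DirichletCharacter ℂ q₂} (h₁ : χ₁ ^ 2 = 1) (h₂ : χ₂ ^ 2 = 1) (w : ℝ) (k : ℕ) :
    ∃ g : ℝ → ℝ, (∀ y, goldfeldA χ₁ χ₂ k y w = (g y : ℂ)) ∧ Monotone g ∧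
      (∀ y < 1, g y = 0) ∧ ∀ y, 1 ≤ y → (y - 1) ^ k / (k.factorial : ℝ) ≤ g y := by
  induction k with
  | zero =>
    have hc : ∀ n, 0 ≤ (goldfeldCoeff χ₁ χ₂ n).re ∧
        goldfeldCoeff χ₁ χ₂ n = ((goldfeldCoeff χ₁ χ₂ n).re : ℂ) := fun n => by
      have := Complex.le_def.1 (goldfeldCoeff_nonneg h₁ h₂ n)
      refine ⟨by simpa using this.1, Complex.ext (by simp) ?_⟩
      simpa using this.2.symm
    have ht : ∀ n : ℕ, 0 ≤ (goldfeldCoeff χ₁ χ₂ n).re * (n : ℝ) ^ (-w) := fun n =>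
      mul_nonneg (hc n).1 (Real.rpow_nonneg (Nat.cast_nonneg _) _)
    refine ⟨fun y => ∑ n ∈ Icc 1 ⌊y⌋₊, (goldfeldCoeff χ₁ χ₂ n).re * (n : ℝ) ^ (-w), ?_, ?_, ?_, ?_⟩
    · intro y
      simp only [goldfeldA]
      rw [Complex.ofReal_sum]
      refine Finset.sum_congr rfl fun n _ => ?_
      rw [Complex.ofReal_mul, ← (hc n).2]
    · intro a b hab
      exact Finset.sum_le_sum_of_subset_of_nonneg
        (Finset.Icc_subset_Icc_right (Nat.floor_mono hab)) fun n _ _ => ht n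
    · intro y hy
      simp [Nat.floor_eq_zero.2 hy]
    · intro y hy
      have h1 : 1 ∈ Icc 1 ⌊y⌋₊ := by
        rw [Finset.mem_Icc]; exact ⟨le_rfl, Nat.le_floor (by simpa using hy)⟩
      have := Finset.single_le_sum (fun n _ => ht n) h1
      simpa [goldfeldCoeff_one] using this
  | succ k ih =>
    obtain ⟨g, hg, hmono, hzero, hlow⟩ := ih
    have hint : ∀ a b, IntervalIntegrable g MeasureTheory.volume a b := fun a b =>
      hmono.intervalIntegrable
    have hpos : ∀ y, 0 ≤ g y := fun y => by
      rcases lt_or_ge y 1 with h | h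
      · rw [hzero y h]
      · exact le_trans (div_nonneg (pow_nonneg (by linarith) _) (Nat.cast_nonneg _)) (hlow y h)
    have hz : ∀ y, y ≤ 1 → ∫ t in (0:ℝ)..y, g t = 0 := fun y hy => by
      apply intervalIntegral.integral_zero_ae
      have : ∀ᵐ t : ℝ, t ≠ 1 := by simp [MeasureTheory.ae_iff]
      filter_upwards [this] with t ht hty
      apply hzero
      refine lt_of_le_of_ne (hty.2.trans (max_le zero_le_one hy)) ht
    refine ⟨fun x => ∫ y in (0:ℝ)..x, g y, ?_, ?_, fun y hy => hz y hy.le, ?_⟩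
    · intro x
      simp only [goldfeldA, hg]
      exact intervalIntegral.integral_ofReal
    · intro a b hab
      have := intervalIntegral.integral_add_adjacent_intervals (hint 0 a) (hint a b)
      have h2 : 0 ≤ ∫ y in a..b, g y := intervalIntegral.integral_nonneg hab fun y _ => hpos y
      simp only
      linarith
    · intro x hx
      have := intervalIntegral.integral_add_adjacent_intervals (hint 0 1) (hint 1 x)
      rw [hz 1 le_rfl, zero_add] at this
      simp only
      rw [← this]
      have h2 : ∫ y in (1:ℝ)..x, (y - 1) ^ k / (k.factorial : ℝ) ≤ ∫ y in (1:ℝ)..x, g y := by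
        apply intervalIntegral.integral_mono_on hx _ (hint _ _) fun y hy => hlow y hy.1
        exact Continuous.intervalIntegrable (by fun_prop) _ _
      refine le_trans (le_of_eq ?_) h2
      rw [intervalIntegral.integral_div,
        intervalIntegral.integral_comp_sub_right (fun y => y ^ k) 1, integral_pow,
        Nat.factorial_succ]
      push_cast
      have : (k.factorial : ℝ) ≠ 0 := by positivity
      have : (k : ℝ) + 1 ≠ 0 := by positivity
      simp
      field_simp

/-- For every `k` there are constants `c_k > 0` and `x_k > 0`, independent of `χ₁`, `χ₂`
and `w`, such that `A_k(x,w) ≥ c_k * x ^ k` for all `x ≥ x_k`. -/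
theorem goldfeldA_lower_bound (k : ℕ) :
    ∃ c : ℝ, 0 < c ∧ ∃ x₀ : ℝ, 0 < x₀ ∧
      ∀ (q₁ q₂ : ℕ), 1 < q₁ → 1 < q₂ →
        ∀ (χ₁ : DirichletCharacter ℂ q₁) (χ₂ : DirichletCharacter ℂ q₂),
          χ₁.IsPrimitive → χ₁ ≠ 1 → χ₁ ^ 2 = 1 →
          χ₂.IsPrimitive → χ₂ ≠ 1 → χ₂ ^ 2 = 1 →
            ∀ w x : ℝ, x₀ ≤ x →
              ∃ r : ℝ, goldfeldA χ₁ χ₂ k x w = (r : ℂ) ∧ c * x ^ k ≤ r := by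
  refine ⟨1 / (2 ^ k * (k.factorial : ℝ)), by positivity, 2, by norm_num, ?_⟩
  intro q₁ q₂ _ _ χ₁ χ₂ _ _ h₁ _ _ h₂ w x hx
  obtain ⟨g, hg, -, -, hlow⟩ := goldfeldA_aux h₁ h₂ w k
  refine ⟨g x, hg x, le_trans ?_ (hlow x (by linarith))⟩
  have : 1 / (2 ^ k * (k.factorial : ℝ)) * x ^ k = (x / 2) ^ k / (k.factorial : ℝ) := by
    rw [div_pow]; field_simp
  rw [this]
  gcongr
  linarith
end

section
/- For all integers q₁, q₂ > 1 and all primitive quadratic Dirichlet characters χ₁ mod q₁ and χ₂ mod q₂, the Dirichlet series coefficients a_n of f(s) satisfy: a₁ = 1, and a_n is a nonnegative real number for every positive integer n. -/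
open Finset

open scoped ComplexOrder in
lemma gc_conv (u v : ArithmeticFunction ℂ) {p : ℕ} (hp : p.Prime) (k : ℕ) :
    (u * v) (p ^ k) = ∑ i ∈ range (k + 1), u (p ^ i) * v (p ^ (k - i)) := by
  rw [ArithmeticFunction.mul_apply, Nat.sum_divisorsAntidiagonal (fun a b => u a * v b),
    Nat.sum_divisors_prime_pow hp]
  refine Finset.sum_congr rfl fun i hi => ?_
  rw [Nat.pow_div (by simpa [Nat.lt_succ_iff] using hi) hp.pos]

open scoped ComplexOrder in
lemma gc_conv_nonneg (u v : ArithmeticFunction ℂ) {p : ℕ} (hp : p.Prime)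
    (hu : ∀ k, 0 ≤ u (p ^ k)) (hv : ∀ k, 0 ≤ v (p ^ k)) (k : ℕ) :
    0 ≤ (u * v) (p ^ k) := by
  rw [gc_conv u v hp]
  exact Finset.sum_nonneg fun i _ => mul_nonneg (hu _) (hv _)

open scoped ComplexOrder in
lemma gc_one (u v : ArithmeticFunction ℂ) {p : ℕ} (hp : p.Prime) (y : ℂ)
    (hu : ∀ k, u (p ^ k) = 1) (hv : ∀ k, v (p ^ k) = y ^ k)
    (hy : y = 0 ∨ y = 1 ∨ y = -1) (k : ℕ) :
    0 ≤ (u * v) (p ^ k) := by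
  rw [mul_comm, gc_conv v u hp]
  simp only [hu, hv, mul_one]
  rcases hy with h | h | h
  · exact Finset.sum_nonneg fun i _ => by simp only [h, le_refl, pow_nonneg]
  · exact Finset.sum_nonneg fun i _ => by simp only [h, one_pow, zero_le_one]
  · simp only [h, neg_one_geom_sum]
    split_ifs
    exacts [le_rfl, zero_le_one]

open scoped ComplexOrder in
lemma gc_four (z f g h : ArithmeticFunction ℂ) {p : ℕ} (hp : p.Prime) (a b : ℂ)
    (hz : ∀ k, z (p ^ k) = 1) (hf : ∀ k, f (p ^ k) = a ^ k) (hg : ∀ k, g (p ^ k) = b ^ k)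
    (hh : ∀ k, h (p ^ k) = (a * b) ^ k)
    (ha : a = 0 ∨ a = 1 ∨ a = -1) (hb : b = 0 ∨ b = 1 ∨ b = -1) (k : ℕ) :
    0 ≤ (z * (f * (g * h))) (p ^ k) := by
  have e1 : z * (f * (g * h)) = (z * f) * (g * h) := by ring
  have e2 : z * (f * (g * h)) = (z * g) * (f * h) := by ring
  have h0 : ∀ k : ℕ, (0 : ℂ) ≤ 0 ^ k := fun k => pow_nonneg le_rfl k
  have zf := gc_one z f hp a hz hf ha
  have zg := gc_one z g hp b hz hg hb
  rcases ha with ha | ha | ha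
  · rw [e2]
    refine gc_conv_nonneg _ _ hp zg (gc_conv_nonneg _ _ hp ?_ ?_) k
    · intro k; rw [hf, ha]; exact h0 k
    · intro k; rw [hh, ha, zero_mul]; exact h0 k
  · rw [e2]
    refine gc_conv_nonneg _ _ hp zg (gc_one _ _ hp b ?_ ?_ hb) k
    · intro k; rw [hf, ha, one_pow]
    · intro k; rw [hh, ha, one_mul]
  · rcases hb with hb | hb | hb
    · rw [e1]
      refine gc_conv_nonneg _ _ hp zf (gc_conv_nonneg _ _ hp ?_ ?_) k
      · intro k; rw [hg, hb]; exact h0 k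
      · intro k; rw [hh, hb, mul_zero]; exact h0 k
    · rw [e1]
      refine gc_conv_nonneg _ _ hp zf (gc_one _ _ hp a ?_ ?_ (Or.inr (Or.inr ha))) k
      · intro k; rw [hg, hb, one_pow]
      · intro k; rw [hh, hb, mul_one]
    · rw [e1, mul_comm g h]
      refine gc_conv_nonneg _ _ hp zf (gc_one _ _ hp b ?_ hg (Or.inr (Or.inr hb))) k
      intro k; rw [hh, ha, hb]; norm_num

open scoped ComplexOrder in
/-- `a 1 = 1` and every `a n` is a nonnegative real number. -/
theorem goldfeldCoeff_one_and_nonneg (q₁ q₂ : ℕ) (hq₁ : 1 < q₁) (hq₂ : 1 < q₂)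
    (χ₁ : DirichletCharacter ℂ q₁) (χ₂ : DirichletCharacter ℂ q₂)
    (hχ₁ : χ₁.IsPrimitive) (hχ₁' : χ₁ ≠ 1) (hχ₁'' : χ₁ ^ 2 = 1)
    (hχ₂ : χ₂.IsPrimitive) (hχ₂' : χ₂ ≠ 1) (hχ₂'' : χ₂ ^ 2 = 1) :
    goldfeldCoeff χ₁ χ₂ 1 = 1 ∧
      ∀ n : ℕ, 0 < n → ∃ r : ℝ, goldfeldCoeff χ₁ χ₂ n = (r : ℂ) ∧ 0 ≤ r := by
  refine ⟨by simp [goldfeldCoeff], fun n hn => ?_⟩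
  let z : ArithmeticFunction ℂ := (ArithmeticFunction.zeta : ArithmeticFunction ℂ)
  let f : ArithmeticFunction ℂ := toArithmeticFunction (fun n : ℕ => χ₁ n)
  let g : ArithmeticFunction ℂ := toArithmeticFunction (fun n : ℕ => χ₂ n)
  let h : ArithmeticFunction ℂ := f.pmul g
  have mf : f.IsMultiplicative := DirichletCharacter.isMultiplicative_toArithmeticFunction χ₁
  have mg : g.IsMultiplicative := DirichletCharacter.isMultiplicative_toArithmeticFunction χ₂
  have mz : z.IsMultiplicative := ArithmeticFunction.isMultiplicative_zeta.natCast
  have mF : (z * (f * (g * h))).IsMultiplicative := mz.mul (mf.mul (mg.mul (mf.pmul mg)))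
  have fv : ∀ m : ℕ, m ≠ 0 → f m = χ₁ m := fun m hm => by
    simp [f, toArithmeticFunction, hm]
  have gv : ∀ m : ℕ, m ≠ 0 → g m = χ₂ m := fun m hm => by
    simp [g, toArithmeticFunction, hm]
  have zv : ∀ m : ℕ, m ≠ 0 → z m = 1 := fun m hm => by
    simp [z, ArithmeticFunction.natCoe_apply, ArithmeticFunction.zeta_apply, hm]
  have hv : ∀ m : ℕ, h m = f m * g m := fun m => rfl
  have key : goldfeldCoeff χ₁ χ₂ n = (z * (f * (g * h))) n := by
    rw [goldfeldCoeff, ArithmeticFunction.mul_apply]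
    refine Finset.sum_congr rfl fun p hp => ?_
    have hp2 := Nat.ne_zero_of_mem_divisorsAntidiagonal hp
    rw [zv _ hp2.1, one_mul, ArithmeticFunction.mul_apply]
    refine Finset.sum_congr rfl fun r hr => ?_
    have hr2 := Nat.ne_zero_of_mem_divisorsAntidiagonal hr
    rw [fv _ hr2.1, ArithmeticFunction.mul_apply, Finset.mul_sum]
    refine Finset.sum_congr rfl fun t ht => ?_
    have ht2 := Nat.ne_zero_of_mem_divisorsAntidiagonal ht
    rw [hv, gv _ ht2.1, fv _ ht2.2, gv _ ht2.2]
    ring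
  have nn : 0 ≤ goldfeldCoeff χ₁ χ₂ n := by
    rw [key, mF.multiplicative_factorization _ hn.ne']
    refine Finset.prod_nonneg fun p hp => ?_
    have hp' := Nat.prime_of_mem_primeFactors hp
    have hk : ∀ k, p ^ k ≠ 0 := fun k => pow_ne_zero _ hp'.ne_zero
    refine gc_four z f g h hp' (χ₁ p) (χ₂ p) (fun k => zv _ (hk k)) ?_ ?_ ?_
      (MulChar.isQuadratic_iff_sq_eq_one.mpr hχ₁'' p)
      (MulChar.isQuadratic_iff_sq_eq_one.mpr hχ₂'' p) _
    · intro k; rw [fv _ (hk k), Nat.cast_pow, map_pow]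
    · intro k; rw [gv _ (hk k), Nat.cast_pow, map_pow]
    · intro k
      rw [hv, fv _ (hk k), gv _ (hk k), Nat.cast_pow, Nat.cast_pow, map_pow, map_pow, mul_pow]
  obtain ⟨h1, h2⟩ := Complex.le_def.mp nn
  exact ⟨(goldfeldCoeff χ₁ χ₂ n).re, Complex.ext (by simp) (by simpa using h2.symm),
    by simpa using h1⟩
end

section
/- (Perron's formula for A₁) For all integers q₁, q₂ > 1, all primitive quadratic Dirichlet characters χ₁ mod q₁ and χ₂ mod q₂, every real w > 0, and every real x ≥ 1, one has A₁(x,w) = (1/2π)·∫_{−∞}^{∞} f(2 + w + it)·x^(3+it) / ((2+it)(3+it)) dt; in particular the integral on the right converges and is equal to the real number A₁(x,w). -/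
open DirichletCharacter Finset MeasureTheory Complex

/-- `f(s) = ζ(s) L(s,χ₁) L(s,χ₂) L(s,χ₁χ₂)`, where `χ₁χ₂` is the Dirichlet character
mod `q₁ q₂` given by `n ↦ χ₁(n) χ₂(n)`. -/
noncomputable def goldfeldF {q₁ q₂ : ℕ} [NeZero q₁] [NeZero q₂]
    (χ₁ : DirichletCharacter ℂ q₁) (χ₂ : DirichletCharacter ℂ q₂) (s : ℂ) : ℂ :=
  riemannZeta s * χ₁.LFunction s * χ₂.LFunction s *
    (changeLevel (dvd_mul_right q₁ q₂) χ₁ * changeLevel (dvd_mul_left q₂ q₁) χ₂).LFunction s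

/-- The partial sum `A₀(x,w) = Σ_{n ≤ x} a n * n ^ (-w)`. -/
noncomputable def goldfeldA₀ {q₁ q₂ : ℕ} (χ₁ : DirichletCharacter ℂ q₁)
    (χ₂ : DirichletCharacter ℂ q₂) (x w : ℝ) : ℂ :=
  ∑ n ∈ Icc 1 ⌊x⌋₊, goldfeldCoeff χ₁ χ₂ n * (((n : ℝ) ^ (-w) : ℝ) : ℂ)

/-- `A₁(x,w) = ∫₀ˣ A₀(y,w) dy`. -/
noncomputable def goldfeldA₁ {q₁ q₂ : ℕ} (χ₁ : DirichletCharacter ℂ q₁)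
    (χ₂ : DirichletCharacter ℂ q₂) (x w : ℝ) : ℂ :=
  ∫ y in (0:ℝ)..x, goldfeldA₀ χ₁ χ₂ y w


lemma gp_K_cont : Continuous (fun t : ℝ => 1 / (((2:ℂ) + t * I) * (3 + t * I))) := by
  refine continuous_const.div (by fun_prop) fun t => mul_ne_zero ?_ ?_
  · intro h; simpa using congrArg Complex.re h
  · intro h; simpa using congrArg Complex.re h

lemma gp_K_int : Integrable (fun t : ℝ => 1 / (((2:ℂ) + t * I) * (3 + t * I))) := by
  refine integrable_inv_one_add_sq.mono' gp_K_cont.aestronglyMeasurable ?_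
  refine Filter.Eventually.of_forall fun t => ?_
  have key : ∀ c : ℝ, 1 ≤ c → Real.sqrt (1 + t ^ 2) ≤ ‖(c:ℂ) + t * I‖ := by
    intro c hc
    rw [Complex.norm_add_mul_I]
    apply Real.sqrt_le_sqrt
    nlinarith
  have h2 := key 2 (by norm_num)
  have h3 := key 3 (by norm_num)
  push_cast at h2 h3
  have hpos : 0 < 1 + t ^ 2 := by positivity
  rw [norm_div, norm_one, norm_mul, one_div]
  apply inv_anti₀ hpos
  calc 1 + t ^ 2 = Real.sqrt (1 + t ^ 2) * Real.sqrt (1 + t ^ 2) :=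
        (Real.mul_self_sqrt hpos.le).symm
    _ ≤ _ := by gcongr

lemma gp_norm_cpow (u : ℝ) (hu : 0 < u) (t : ℝ) :
    ‖(u : ℂ) ^ (-((2:ℂ) + t * I))‖ = u ^ (-2 : ℝ) := by
  rw [Complex.norm_cpow_eq_rpow_re_of_pos hu]
  simp

lemma gp_kernel_int (u : ℝ) (hu : 0 < u) :
    Integrable (fun t : ℝ => (u : ℂ) ^ (-((2:ℂ) + t * I)) *
      (1 / (((2:ℂ) + t * I) * (3 + t * I)))) := by
  refine gp_K_int.bdd_mul (c := u ^ (-2 : ℝ)) ?_ ?_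
  · refine Continuous.aestronglyMeasurable ?_
    refine Continuous.const_cpow (by fun_prop) (Or.inl ?_)
    exact_mod_cast hu.ne'
  · exact Filter.Eventually.of_forall fun t => (gp_norm_cpow u hu t).le

lemma gp_mellin (s : ℂ) (hs : 0 < s.re) :
    HasMellin (fun t : ℝ => Set.indicator (Set.Ioc 0 1) (fun _ => 1 : ℝ → ℂ) t -
      Set.indicator (Set.Ioc 0 1) (fun t => (t:ℂ) ^ (1:ℂ) : ℝ → ℂ) t) s
      (1 / (s * (s + 1))) := by
  have h1 := hasMellin_one_Ioc hs
  have h2 := hasMellin_cpow_Ioc 1 (s := s) (by simp; linarith)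
  have h3 := hasMellin_sub h1.1 h2.1
  refine ⟨h3.1, h3.2.trans ?_⟩
  rw [h1.2, h2.2]
  have a1 : s ≠ 0 := by rintro rfl; simp at hs
  have a2 : s + 1 ≠ 0 := by
    intro h; have := congrArg Complex.re h; simp at this; linarith
  field_simp
  ring

lemma gp_kernel (u : ℝ) (hu : 0 < u) :
    ∫ t : ℝ, (u : ℂ) ^ (-((2:ℂ) + t * I)) * (1 / (((2:ℂ) + t * I) * (3 + t * I)))
      = 2 * Real.pi * ((max 0 (1 - u) : ℝ) : ℂ) := by
  set g : ℝ → ℂ := (fun t : ℝ => Set.indicator (Set.Ioc 0 1) (fun _ => 1 : ℝ → ℂ) t -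
      Set.indicator (Set.Ioc 0 1) (fun t => (t:ℂ) ^ (1:ℂ) : ℝ → ℂ) t) with hg
  have hgv : ∀ v : ℝ, 0 < v → g v = ((max 0 (1 - v) : ℝ) : ℂ) := by
    intro v hv
    simp only [hg, Set.indicator_apply, Set.mem_Ioc, hv, true_and, Complex.cpow_one]
    split_ifs with h
    · rw [max_eq_right (by linarith)]; push_cast; rfl
    · rw [max_eq_left (by linarith)]; simp
  have hm : ∀ t : ℝ, mellin g (((2:ℝ):ℂ) + t * I) = 1 / (((2:ℂ) + t * I) * (3 + t * I)) := by
    intro t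
    rw [(gp_mellin _ (by simp)).2]
    push_cast
    congr 2
    ring
  have hinv := mellinInv_mellin_eq 2 g hu (gp_mellin _ (by simp)).1 ?_ ?_
  · rw [mellinInv, hgv u hu] at hinv
    simp only [hm, smul_eq_mul] at hinv
    rw [← hinv, Complex.real_smul]
    push_cast
    have : (2 * Real.pi : ℂ) ≠ 0 :=
      mul_ne_zero two_ne_zero (by exact_mod_cast Real.pi_ne_zero)
    rw [← mul_assoc, mul_one_div_cancel this, one_mul]
  · have : (fun t : ℝ => mellin g (((2:ℝ):ℂ) + t * I)) = _ := funext hm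
    unfold Complex.VerticalIntegrable
    rw [this]
    exact gp_K_int
  · have hc : ContinuousAt (fun v : ℝ => ((max 0 (1 - v) : ℝ) : ℂ)) u := by
      apply Continuous.continuousAt; fun_prop
    refine hc.congr ?_
    filter_upwards [lt_mem_nhds hu] with v hv
    exact (hgv v hv).symm

lemma gp_char {q₁ q₂ : ℕ} (χ₁ : DirichletCharacter ℂ q₁) (χ₂ : DirichletCharacter ℂ q₂) (m : ℕ) :
    (changeLevel (dvd_mul_right q₁ q₂) χ₁ * changeLevel (dvd_mul_left q₂ q₁) χ₂)
      (m : ZMod (q₁ * q₂)) = χ₁ (m : ZMod q₁) * χ₂ (m : ZMod q₂) := by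
  by_cases h : m.Coprime (q₁ * q₂)
  · have h' : IsCoprime (m : ℤ) ((q₁ * q₂ : ℕ) : ℤ) := Nat.isCoprime_iff_coprime.mpr h
    have e1 := changeLevel_eq_cast_of_dvd' χ₁ (dvd_mul_right q₁ q₂) h'
    have e2 := changeLevel_eq_cast_of_dvd' χ₂ (dvd_mul_left q₂ q₁) h'
    simp only [Int.cast_natCast] at e1 e2
    rw [MulChar.mul_apply, e1, e2]
  · rw [MulChar.map_nonunit _ (by rwa [ZMod.isUnit_iff_coprime])]
    rw [Nat.coprime_mul_iff_right, not_and_or] at h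
    rcases h with h | h
    · rw [MulChar.map_nonunit χ₁ (by rwa [ZMod.isUnit_iff_coprime]), zero_mul]
    · rw [MulChar.map_nonunit χ₂ (by rwa [ZMod.isUnit_iff_coprime]), mul_zero]

lemma gp_coeff {q₁ q₂ : ℕ} (χ₁ : DirichletCharacter ℂ q₁) (χ₂ : DirichletCharacter ℂ q₂) :
    goldfeldCoeff χ₁ χ₂ = LSeries.convolution (1 : ℕ → ℂ) (LSeries.convolution
      (fun n : ℕ => χ₁ (n : ZMod q₁)) (LSeries.convolution (fun n : ℕ => χ₂ (n : ZMod q₂))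
        (fun n : ℕ => (changeLevel (dvd_mul_right q₁ q₂) χ₁ *
          changeLevel (dvd_mul_left q₂ q₁) χ₂) (n : ZMod (q₁ * q₂))))) := by
  simp only [LSeries.convolution_def, gp_char]
  funext n
  simp only [goldfeldCoeff, Pi.one_apply, one_mul, Finset.mul_sum]
  refine Finset.sum_congr rfl fun p _ => Finset.sum_congr rfl fun r _ =>
    Finset.sum_congr rfl fun t _ => ?_
  ring

lemma gp_hasSum {q₁ q₂ : ℕ} [NeZero q₁] [NeZero q₂] (χ₁ : DirichletCharacter ℂ q₁)
    (χ₂ : DirichletCharacter ℂ q₂) {s : ℂ} (hs : 1 < s.re) :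
    LSeriesHasSum (goldfeldCoeff χ₁ χ₂) s (goldfeldF χ₁ χ₂ s) := by
  have hL : ∀ {N : ℕ} [NeZero N] (χ : DirichletCharacter ℂ N),
      LSeriesHasSum (fun n : ℕ => χ (n : ZMod N)) s (χ.LFunction s) := by
    intro N _ χ
    rw [LFunction_eq_LSeries χ hs]
    exact (LSeriesSummable_of_one_lt_re χ hs).LSeriesHasSum
  rw [gp_coeff, goldfeldF, mul_assoc, mul_assoc]
  exact (LSeriesHasSum_one hs).convolution ((hL χ₁).convolution ((hL χ₂).convolution (hL _)))

lemma gp_A₁ {q₁ q₂ : ℕ} (χ₁ : DirichletCharacter ℂ q₁) (χ₂ : DirichletCharacter ℂ q₂)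
    (x w : ℝ) (hx : 1 ≤ x) :
    goldfeldA₁ χ₁ χ₂ x w = ∑ n ∈ Icc 1 ⌊x⌋₊,
      goldfeldCoeff χ₁ χ₂ n * (((n : ℝ) ^ (-w) : ℝ) : ℂ) * ((x - n : ℝ) : ℂ) := by
  have hx0 : 0 ≤ x := by linarith
  set c : ℕ → ℂ := fun n => goldfeldCoeff χ₁ χ₂ n * (((n : ℝ) ^ (-w) : ℝ) : ℂ) with hc
  have h1 : goldfeldA₁ χ₁ χ₂ x w = ∫ y in (0:ℝ)..x, ∑ n ∈ Icc 1 ⌊x⌋₊,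
      Set.indicator (Set.Ici (n:ℝ)) (fun _ => c n) y := by
    unfold goldfeldA₁
    refine intervalIntegral.integral_congr fun y hy => ?_
    rw [Set.uIcc_of_le hx0] at hy
    simp only [goldfeldA₀, Set.indicator_apply, Set.mem_Ici]
    rw [← Finset.sum_filter]
    refine Finset.sum_congr ?_ fun _ _ => rfl
    ext n
    simp only [Finset.mem_Icc, Finset.mem_filter, Nat.le_floor_iff hy.1, Nat.le_floor_iff hx0]
    constructor
    · rintro ⟨a, b⟩; exact ⟨⟨a, b.trans hy.2⟩, b⟩
    · rintro ⟨⟨a, _⟩, b⟩; exact ⟨a, b⟩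
  rw [h1, intervalIntegral.integral_finsetSum]
  · refine Finset.sum_congr rfl fun n hn => ?_
    rw [Finset.mem_Icc, Nat.le_floor_iff hx0] at hn
    rw [intervalIntegral.integral_of_le hx0, integral_indicator measurableSet_Ici,
      Measure.restrict_restrict measurableSet_Ici]
    have : Set.Ici (n:ℝ) ∩ Set.Ioc 0 x = Set.Icc (n:ℝ) x := by
      have hn1 : (1:ℝ) ≤ n := by exact_mod_cast hn.1
      ext y
      simp only [Set.mem_inter_iff, Set.mem_Ici, Set.mem_Ioc, Set.mem_Icc]
      constructor
      · rintro ⟨a, _, b⟩; exact ⟨a, b⟩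
      · rintro ⟨a, b⟩; exact ⟨a, by linarith, b⟩
    rw [this]
    simp [hn.2, mul_comm, Measure.real, hc]
  · intro n _
    rw [intervalIntegrable_iff]
    refine Integrable.indicator ?_ measurableSet_Ici
    exact integrableOn_const (by simp)

lemma gp_term (a : ℕ → ℂ) (w x : ℝ) (hx : 0 < x) (n : ℕ) (hn : n ≠ 0) (t : ℝ) :
    LSeries.term a (2 + (w : ℂ) + t * I) n * (x : ℂ) ^ (3 + t * I)
      = (a n * (((n : ℝ) ^ (-w) : ℝ) : ℂ) * x) *
        ((((n : ℝ) / x : ℝ) : ℂ) ^ (-((2:ℂ) + t * I))) := by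
  have hn0 : (n : ℂ) ≠ 0 := by exact_mod_cast hn
  have hx0 : (x : ℂ) ≠ 0 := by exact_mod_cast hx.ne'
  have hnr : (0:ℝ) ≤ n := Nat.cast_nonneg n
  have e1 : (((n : ℝ) / x : ℝ) : ℂ) ^ (-((2:ℂ) + t * I))
      = (n : ℂ) ^ (-((2:ℂ) + t * I)) * (x : ℂ) ^ ((2:ℂ) + t * I) := by
    rw [div_eq_mul_inv, Complex.ofReal_mul,
      Complex.mul_cpow_ofReal_nonneg hnr (inv_nonneg.2 hx.le), Complex.ofReal_inv,
      Complex.inv_cpow, ← Complex.cpow_neg, neg_neg]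
    · simp
    · rw [Complex.arg_ofReal_of_nonneg hx.le]; exact Real.pi_pos.ne
  have e2 : (x : ℂ) ^ (3 + t * I) = (x : ℂ) ^ ((2:ℂ) + t * I) * x := by
    rw [show (3:ℂ) + t * I = (2 + t * I) + 1 by ring, Complex.cpow_add _ _ hx0, Complex.cpow_one]
  have e3 : (((n : ℝ) ^ (-w) : ℝ) : ℂ) = (n : ℂ) ^ (-(w:ℂ)) := by
    rw [Complex.ofReal_cpow hnr]; simp
  rw [LSeries.term_of_ne_zero hn, e1, e2, e3, div_eq_mul_inv, ← Complex.cpow_neg,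
    show -(2 + (w:ℂ) + t * I) = -(w:ℂ) + -(2 + t * I) by ring, Complex.cpow_add _ _ hn0]
  ring

/-- **Perron's formula for `A₁`:** for `w > 0` and `x ≥ 1`,
`A₁(x,w) = (1/2π) ∫_{-∞}^{∞} f(2+w+it) x^(3+it) / ((2+it)(3+it)) dt`,
the integral being convergent. -/
theorem goldfeldA₁_perron (q₁ q₂ : ℕ) (hq₁ : 1 < q₁) (hq₂ : 1 < q₂) :
    haveI : NeZero q₁ := ⟨by omega⟩
    haveI : NeZero q₂ := ⟨by omega⟩
    ∀ (χ₁ : DirichletCharacter ℂ q₁) (χ₂ : DirichletCharacter ℂ q₂),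
      χ₁.IsPrimitive → χ₁ ≠ 1 → χ₁ ^ 2 = 1 →
      χ₂.IsPrimitive → χ₂ ≠ 1 → χ₂ ^ 2 = 1 →
        ∀ w : ℝ, 0 < w → ∀ x : ℝ, 1 ≤ x →
          Integrable (fun t : ℝ =>
            goldfeldF χ₁ χ₂ (2 + (w : ℂ) + t * I) * (x : ℂ) ^ (3 + t * I) /
              ((2 + t * I) * (3 + t * I))) ∧
          goldfeldA₁ χ₁ χ₂ x w = (1 / (2 * (Real.pi : ℂ))) *
            ∫ t : ℝ, goldfeldF χ₁ χ₂ (2 + (w : ℂ) + t * I) * (x : ℂ) ^ (3 + t * I) /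
              ((2 + t * I) * (3 + t * I)) := by
  intro χ₁ χ₂ _ _ _ _ _ _ w hw x hx
  have : NeZero q₁ := ⟨by omega⟩
  have : NeZero q₂ := ⟨by omega⟩
  have hx0 : 0 < x := by linarith
  set a : ℕ → ℂ := goldfeldCoeff χ₁ χ₂ with ha
  have hre : ∀ t : ℝ, (2 + (w : ℂ) + t * I).re = 2 + w := by intro t; simp
  have hsum : ∀ t : ℝ, HasSum (LSeries.term a (2 + (w : ℂ) + t * I))
      (goldfeldF χ₁ χ₂ (2 + (w : ℂ) + t * I)) :=
    fun t => gp_hasSum χ₁ χ₂ (by rw [hre]; linarith)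
  have hnorm : ∀ (t : ℝ) (n : ℕ), ‖LSeries.term a (2 + (w : ℂ) + t * I) n‖
      = ‖LSeries.term a (2 + (w : ℂ) + (0:ℝ) * I) n‖ := by
    intro t n
    rw [LSeries.norm_term_eq, LSeries.norm_term_eq, hre, hre]
  have hsn : Summable fun n => ‖LSeries.term a (2 + (w : ℂ) + (0:ℝ) * I) n‖ :=
    (hsum 0).summable.norm
  have hxn : ∀ t : ℝ, ‖(x : ℂ) ^ (3 + t * I)‖ = x ^ (3:ℝ) := by
    intro t
    rw [Complex.norm_cpow_eq_rpow_re_of_pos hx0]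
    simp
  have hxc : Continuous fun t : ℝ => (x : ℂ) ^ (3 + t * I) :=
    Continuous.const_cpow (by fun_prop) (Or.inl (by exact_mod_cast hx0.ne'))
  set F : ℕ → ℝ → ℂ := fun n t => LSeries.term a (2 + (w : ℂ) + t * I) n *
    (x : ℂ) ^ (3 + t * I) * (1 / (((2:ℂ) + t * I) * (3 + t * I))) with hF
  have hFeq : ∀ n, n ≠ 0 → F n = fun t : ℝ => (a n * (((n : ℝ) ^ (-w) : ℝ) : ℂ) * x) *
      ((((n : ℝ) / x : ℝ) : ℂ) ^ (-((2:ℂ) + t * I)) *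
        (1 / (((2:ℂ) + t * I) * (3 + t * I)))) := by
    intro n hn
    funext t
    simp only [hF]
    rw [gp_term a w x hx0 n hn t, mul_assoc]
  have hFint : ∀ n, Integrable (F n) := by
    intro n
    rcases eq_or_ne n 0 with rfl | hn
    · simp [hF]
    · rw [hFeq n hn]
      exact (gp_kernel_int _ (by positivity)).const_mul _
  have hFsum : Summable fun n => ∫ t, ‖F n t‖ := by
    have : ∀ n, ∫ t, ‖F n t‖ = ‖LSeries.term a (2 + (w : ℂ) + (0:ℝ) * I) n‖ *
        (x ^ (3:ℝ) * ∫ t : ℝ, ‖1 / (((2:ℂ) + t * I) * (3 + t * I))‖) := by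
      intro n
      have h : ∀ t, ‖F n t‖ = (‖LSeries.term a (2 + (w : ℂ) + (0:ℝ) * I) n‖ * x ^ (3:ℝ)) *
          ‖1 / (((2:ℂ) + t * I) * (3 + t * I))‖ := by
        intro t
        rw [← hnorm t n, ← hxn t, ← norm_mul, ← norm_mul]
      simp only [h]
      rw [integral_const_mul, mul_assoc]
    simp only [this]
    exact hsn.mul_right _
  have htsum : ∀ t : ℝ, ∑' n, F n t = goldfeldF χ₁ χ₂ (2 + (w : ℂ) + t * I) *
      (x : ℂ) ^ (3 + t * I) / ((2 + t * I) * (3 + t * I)) := by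
    intro t
    rw [div_eq_mul_one_div]
    exact (((hsum t).mul_right _).mul_right _).tsum_eq
  have hFI : ∀ n, n ≠ 0 → ∫ t, F n t = 2 * Real.pi * (a n * (((n : ℝ) ^ (-w) : ℝ) : ℂ) *
      ((max 0 (x - n) : ℝ) : ℂ)) := by
    intro n hn
    rw [hFeq n hn, integral_const_mul, gp_kernel _ (by positivity)]
    have : max 0 (x - n) = x * max 0 (1 - n / x) := by
      rw [mul_max_of_nonneg _ _ hx0.le, mul_zero]
      congr 1
      field_simp
    rw [this]
    push_cast
    ring
  constructor
  · have hi : Integrable (fun t : ℝ => (goldfeldF χ₁ χ₂ (2 + (w : ℂ) + t * I) *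
        (x : ℂ) ^ (3 + t * I)) * (1 / (((2:ℂ) + t * I) * (3 + t * I)))) := by
      refine gp_K_int.bdd_mul
        (c := (∑' n, ‖LSeries.term a (2 + (w : ℂ) + (0:ℝ) * I) n‖) * x ^ (3:ℝ)) ?_ ?_
      · refine Continuous.aestronglyMeasurable (Continuous.mul ?_ hxc)
        have hline : Continuous fun t : ℝ => 2 + (w : ℂ) + t * I := by fun_prop
        have hne : ∀ t : ℝ, 2 + (w : ℂ) + t * I ≠ 1 := by
          intro t h
          have := congrArg Complex.re h
          rw [hre] at this
          simp at this
          linarith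
        have hL : ∀ {N : ℕ} [NeZero N] (χ : DirichletCharacter ℂ N),
            Continuous fun t : ℝ => χ.LFunction (2 + (w : ℂ) + t * I) := by
          intro N _ χ
          rw [continuous_iff_continuousAt]
          intro t
          exact ContinuousAt.comp (g := χ.LFunction) (f := fun t : ℝ => 2 + (w : ℂ) + t * I)
            (differentiableAt_LFunction χ _ (Or.inl (hne t))).continuousAt
            hline.continuousAt
        have hz : Continuous fun t : ℝ => riemannZeta (2 + (w : ℂ) + t * I) := by
          rw [continuous_iff_continuousAt]
          intro t
          exact ContinuousAt.comp (g := riemannZeta) (f := fun t : ℝ => 2 + (w : ℂ) + t * I)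
            (differentiableAt_riemannZeta (hne t)).continuousAt
            hline.continuousAt
        exact ((hz.mul (hL _)).mul (hL _)).mul (hL _)
      · refine Filter.Eventually.of_forall fun t => ?_
        rw [norm_mul, hxn]
        gcongr
        rw [← (hsum t).tsum_eq]
        refine (norm_tsum_le_tsum_norm ?_).trans_eq ?_
        · simpa only [hnorm t] using hsn
        · simp only [hnorm t]
    refine hi.congr (Filter.Eventually.of_forall fun t => ?_)
    simp only [mul_one_div]
  · have hS := hasSum_integral_of_summable_integral_norm hFint hFsum
    simp only [htsum] at hS
    have hfin : ∑' n, ∫ t, F n t = ∑ n ∈ Icc 1 ⌊x⌋₊, ∫ t, F n t := by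
      refine tsum_eq_sum fun n hn => ?_
      rcases eq_or_ne n 0 with rfl | h0
      · simp [hF]
      · rw [hFI n h0]
        have : x < n := by
          rw [Finset.mem_Icc, not_and, Nat.le_floor_iff hx0.le] at hn
          exact not_le.1 (hn (Nat.one_le_iff_ne_zero.2 h0))
        rw [max_eq_left (by linarith)]
        simp
    rw [← hS.tsum_eq, hfin, gp_A₁ χ₁ χ₂ x w hx, Finset.mul_sum]
    refine Finset.sum_congr rfl fun n hn => ?_
    rw [Finset.mem_Icc, Nat.le_floor_iff hx0.le] at hn
    rw [hFI n (by omega), max_eq_right (by linarith [hn.2])]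
    have : (Real.pi : ℂ) ≠ 0 := by exact_mod_cast Real.pi_ne_zero
    field_simp
    ring
end

section
/- There exist absolute constants X > 0 and M > 0 such that for all integers q₁, q₂ > 1, all primitive quadratic Dirichlet characters χ₁ mod q₁ and χ₂ mod q₂, every real w with 0 < w < 1, and every real x ≥ X, the (convergent) integral J(x,w) = (1/2π)·∫_{−∞}^{∞} f(2 + w + it)·x^(2+it) / ((2+it)(3+it)(4+it)(5+it)(6+it)) dt has real part at least M. -/
open DirichletCharacter MeasureTheory Complex

/-- The denominator of the Perron kernel. -/
noncomputable def gD (t : ℝ) : ℂ :=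
  (2 + t * I) * (3 + t * I) * (4 + t * I) * (5 + t * I) * (6 + t * I)

/-- The Perron weight `(1-u)₊⁴ / 24`. -/
noncomputable def gK (u : ℝ) : ℝ := (max (1 - u) 0) ^ 4 / 24

lemma gK_nonneg (u : ℝ) : 0 ≤ gK u := by unfold gK; positivity

lemma norm_lin (c : ℝ) (t : ℝ) : ‖((c : ℂ) + t * I)‖ = Real.sqrt (c ^ 2 + t ^ 2) :=
  Complex.norm_add_mul_I c t

lemma lin_ne (c : ℝ) (hc : 0 < c) (t : ℝ) : ((c : ℂ) + t * I) ≠ 0 := by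
  intro h
  have := congrArg Complex.re h
  simp at this
  linarith

lemma gD_ne (t : ℝ) : gD t ≠ 0 := by
  have h2 := lin_ne 2 (by norm_num) t
  have h3 := lin_ne 3 (by norm_num) t
  have h4 := lin_ne 4 (by norm_num) t
  have h5 := lin_ne 5 (by norm_num) t
  have h6 := lin_ne 6 (by norm_num) t
  push_cast at *
  unfold gD
  exact mul_ne_zero (mul_ne_zero (mul_ne_zero (mul_ne_zero h2 h3) h4) h5) h6

lemma gD_cont : Continuous gD := by unfold gD; fun_prop

lemma gD_norm (t : ℝ) : 1 + t ^ 2 ≤ ‖gD t‖ := by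
  have h2 := norm_lin 2 t
  have h3 := norm_lin 3 t
  have h4 := norm_lin 4 t
  have h5 := norm_lin 5 t
  have h6 := norm_lin 6 t
  push_cast at *
  unfold gD
  rw [norm_mul, norm_mul, norm_mul, norm_mul, h2, h3, h4, h5, h6]
  have key : ∀ c : ℝ, 1 ≤ c → Real.sqrt (1 + t ^ 2) ≤ Real.sqrt (c ^ 2 + t ^ 2) := fun c hc =>
    Real.sqrt_le_sqrt (by nlinarith)
  have one : ∀ c : ℝ, 1 ≤ c → 1 ≤ Real.sqrt (c ^ 2 + t ^ 2) := fun c hc =>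
    Real.one_le_sqrt.2 (by nlinarith [sq_nonneg t])
  calc 1 + t ^ 2 = Real.sqrt (1 + t ^ 2) * Real.sqrt (1 + t ^ 2) * 1 * 1 * 1 := by
        rw [Real.mul_self_sqrt (by positivity)]; ring
    _ ≤ _ := by
        have k2 := key 2 (by norm_num)
        have k3 := key 3 (by norm_num)
        refine mul_le_mul (mul_le_mul (mul_le_mul (mul_le_mul k2 k3 ?_ ?_) ?_ ?_ ?_) ?_ ?_ ?_) ?_ ?_ ?_
          <;> try positivity
        · exact one 4 (by norm_num)
        · exact one 5 (by norm_num)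
        · exact one 6 (by norm_num)

lemma gD_int : Integrable (fun t : ℝ => (gD t)⁻¹) := by
  refine integrable_inv_one_add_sq.mono ((gD_cont.inv₀ gD_ne).aestronglyMeasurable) ?_
  refine Filter.Eventually.of_forall fun t => ?_
  rw [norm_inv, Real.norm_of_nonneg (by positivity)]
  exact inv_anti₀ (by positivity) (gD_norm t)

lemma gK_cont : Continuous gK := by unfold gK; fun_prop

lemma gK_eq_indicator (s : ℂ) :
    (Set.Ioi (0:ℝ)).indicator (fun t : ℝ => (t : ℂ) ^ (s - 1) • ((gK t : ℝ) : ℂ)) =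
    (Set.Ioc (0:ℝ) 1).indicator
      (fun t : ℝ => ((t : ℂ) ^ (s - 1) * (1 - (t : ℂ)) ^ ((4 + 1 : ℂ) - 1)) / 24) := by
  ext t
  have e4 : ((4 + 1 : ℂ) - 1) = ((4 : ℕ) : ℂ) := by norm_num
  by_cases h0 : 0 < t
  · by_cases h1 : t ≤ 1
    · rw [Set.indicator_of_mem (by exact h0), Set.indicator_of_mem (by exact ⟨h0, h1⟩), e4,
        cpow_natCast, gK, max_eq_left (by linarith), smul_eq_mul]
      push_cast; ring
    · rw [Set.indicator_of_mem (by exact h0), Set.indicator_of_notMem (by simp [h1]),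
        gK, max_eq_right (by linarith)]
      simp
  · rw [Set.indicator_of_notMem (by simpa using h0), Set.indicator_of_notMem (by simp [h0])]

lemma gK_conv (s : ℂ) (hs : 0 < s.re) : MellinConvergent (fun u => ((gK u : ℝ) : ℂ)) s := by
  unfold MellinConvergent
  rw [← integrable_indicator_iff measurableSet_Ioi, gK_eq_indicator,
    integrable_indicator_iff measurableSet_Ioc]
  have := betaIntegral_convergent (u := s) (v := 4 + 1) hs (by norm_num)
  rw [intervalIntegrable_iff_integrableOn_Ioc_of_le zero_le_one] at this
  exact this.div_const 24

lemma gK_mellin (s : ℂ) (hs : 0 < s.re) : mellin (fun u => ((gK u : ℝ) : ℂ)) s =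
    (s * (s + 1) * (s + 2) * (s + 3) * (s + 4))⁻¹ := by
  unfold mellin
  rw [← integral_indicator measurableSet_Ioi, gK_eq_indicator, integral_indicator measurableSet_Ioc,
    integral_div, ← intervalIntegral.integral_of_le zero_le_one]
  have := betaIntegral_eval_nat_add_one_right hs 4
  unfold betaIntegral at this
  push_cast at this
  rw [this]
  simp only [Finset.prod_range_succ, Finset.prod_range_zero, Nat.factorial]
  push_cast
  rw [div_div, mul_comm _ (24:ℂ), ← div_div]
  norm_num

lemma gK_mellin_line (t : ℝ) :
    mellin (fun u => ((gK u : ℝ) : ℂ)) (((2:ℝ):ℂ) + t * I) = (gD t)⁻¹ := by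
  rw [gK_mellin _ (by simp), gD]
  push_cast
  congr 1
  ring

lemma perron (y : ℝ) (hy : 0 < y) :
    ∫ t : ℝ, (y : ℂ) ^ (-(2 + t * I)) * (gD t)⁻¹ = 2 * Real.pi * (gK y : ℂ) := by
  have h := mellinInv_mellin_eq 2 (fun u => ((gK u : ℝ) : ℂ)) hy (gK_conv _ (by simp))
    (by
      unfold VerticalIntegrable
      simp only [gK_mellin_line]
      exact gD_int) (by exact (continuous_ofReal.comp gK_cont).continuousAt)
  unfold mellinInv at h
  simp only [gK_mellin_line] at h
  rw [← h]
  have : (Real.pi : ℂ) ≠ 0 := by exact_mod_cast Real.pi_ne_zero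
  simp only [smul_eq_mul, Complex.real_smul]
  push_cast
  rw [← mul_assoc, mul_one_div_cancel (mul_ne_zero two_ne_zero this), one_mul]

open ComplexOrder in
/-- A power series with nonnegative coefficients. -/
def PSNonneg (F : PowerSeries ℂ) : Prop := ∀ n, 0 ≤ PowerSeries.coeff n F

open ComplexOrder in
lemma PSNonneg.mul {F G : PowerSeries ℂ} (hF : PSNonneg F) (hG : PSNonneg G) :
    PSNonneg (F * G) := fun n => by
  rw [PowerSeries.coeff_mul]
  exact Finset.sum_nonneg fun i _ => mul_nonneg (hF _) (hG _)

/-- Geometric power series. -/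
noncomputable def geo (a : ℂ) : PowerSeries ℂ := PowerSeries.mk fun k => a ^ k

open ComplexOrder in
lemma geo_nonneg {a : ℂ} (ha : 0 ≤ a) : PSNonneg (geo a) := fun n => by
  simp only [geo, PowerSeries.coeff_mk]
  exact pow_nonneg ha n

open ComplexOrder in
lemma geo_pm : PSNonneg (geo 1 * geo (-1)) := fun n => by
  rw [mul_comm, PowerSeries.coeff_mul, Finset.Nat.sum_antidiagonal_eq_sum_range_succ_mk]
  simp only [geo, PowerSeries.coeff_mk, one_pow, mul_one]
  rw [neg_one_geom_sum]
  split_ifs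
  exacts [le_rfl, zero_le_one]

open ComplexOrder in
lemma geo_four {a b : ℂ} (ha : a = 0 ∨ a = 1 ∨ a = -1) (hb : b = 0 ∨ b = 1 ∨ b = -1) :
    PSNonneg (geo 1 * geo a * geo b * geo (a * b)) := by
  have h0 : PSNonneg (geo 0) := geo_nonneg le_rfl
  have h1 : PSNonneg (geo 1) := geo_nonneg zero_le_one
  have h2 := geo_pm
  rcases ha with rfl | rfl | rfl <;> rcases hb with rfl | rfl | rfl <;>
    simp only [mul_zero, zero_mul, one_mul, mul_one, mul_neg, neg_neg, neg_zero]
  · exact ((h1.mul h0).mul h0).mul h0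
  · exact ((h1.mul h0).mul h1).mul h0
  · convert (h2.mul h0).mul h0 using 1; ring
  · exact ((h1.mul h1).mul h0).mul h0
  · exact ((h1.mul h1).mul h1).mul h1
  · convert h2.mul h2 using 1; ring
  · exact (h2.mul h0).mul h0
  · convert h2.mul h2 using 1; ring
  · convert h2.mul h2 using 1; ring

/-- The local power series of an arithmetic function. -/
noncomputable def loc (p : ℕ) (f : ArithmeticFunction ℂ) : PowerSeries ℂ :=
  PowerSeries.mk fun k => f (p ^ k)

lemma loc_mul {p : ℕ} (hp : p.Prime) (f g : ArithmeticFunction ℂ) :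
    loc p (f * g) = loc p f * loc p g := by
  ext n
  rw [PowerSeries.coeff_mul]
  simp only [loc, PowerSeries.coeff_mk]
  rw [ArithmeticFunction.mul_apply, Nat.sum_divisorsAntidiagonal (fun i j => f i * g j),
    Nat.divisors_prime_pow hp, Finset.sum_map,
    Finset.Nat.sum_antidiagonal_eq_sum_range_succ_mk]
  refine Finset.sum_congr rfl fun i hi => ?_
  simp only [Function.Embedding.coeFn_mk]
  rw [Nat.pow_div (by simp at hi; omega) hp.pos]

/-- The arithmetic function of a Dirichlet character. -/
noncomputable def af {N : ℕ} (χ : DirichletCharacter ℂ N) : ArithmeticFunction ℂ :=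
  toArithmeticFunction (χ ·)

lemma loc_af {N : ℕ} (χ : DirichletCharacter ℂ N) {p : ℕ} (hp : p.Prime) :
    loc p (af χ) = geo (χ p) := by
  ext n
  simp [loc, af, geo, toArithmeticFunction, hp.ne_zero]

lemma loc_zeta {p : ℕ} (hp : p.Prime) :
    loc p ((ArithmeticFunction.zeta : ArithmeticFunction ℕ) : ArithmeticFunction ℂ) = geo 1 := by
  ext n
  simp [loc, geo, hp.ne_zero]

section coeffs

variable {q₁ q₂ : ℕ}

/-- The product character modulo `q₁ q₂`. -/
noncomputable def chiProd
    (χ₁ : DirichletCharacter ℂ q₁) (χ₂ : DirichletCharacter ℂ q₂) :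
    DirichletCharacter ℂ (q₁ * q₂) :=
  changeLevel (dvd_mul_right q₁ q₂) χ₁ * changeLevel (dvd_mul_left q₂ q₁) χ₂

/-- The Dirichlet coefficients of `goldfeldF`. -/
noncomputable def gA (χ₁ : DirichletCharacter ℂ q₁) (χ₂ : DirichletCharacter ℂ q₂) :
    ArithmeticFunction ℂ :=
  ((ArithmeticFunction.zeta : ArithmeticFunction ℕ) : ArithmeticFunction ℂ) * af χ₁ * af χ₂ *
    af (chiProd χ₁ χ₂)

lemma chiProd_apply (χ₁ : DirichletCharacter ℂ q₁) (χ₂ : DirichletCharacter ℂ q₂) (n : ℕ) :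
    chiProd χ₁ χ₂ n = χ₁ n * χ₂ n := by
  by_cases h : IsUnit ((n : ℕ) : ZMod (q₁ * q₂))
  · rw [chiProd, MulChar.mul_apply]
    have e1 := changeLevel_eq_cast_of_dvd χ₁ (dvd_mul_right q₁ q₂) h.unit
    have e2 := changeLevel_eq_cast_of_dvd χ₂ (dvd_mul_left q₂ q₁) h.unit
    simp only [IsUnit.unit_spec] at e1 e2
    rw [e1, e2, ZMod.cast_natCast (dvd_mul_right q₁ q₂), ZMod.cast_natCast (dvd_mul_left q₂ q₁)]
  · rw [MulChar.map_nonunit _ h]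
    rw [ZMod.isUnit_iff_coprime, Nat.coprime_mul_iff_right, not_and_or] at h
    rcases h with h | h
    · rw [MulChar.map_nonunit χ₁ (by rwa [ZMod.isUnit_iff_coprime]), zero_mul]
    · rw [MulChar.map_nonunit χ₂ (by rwa [ZMod.isUnit_iff_coprime]), mul_zero]

lemma gA_mult (χ₁ : DirichletCharacter ℂ q₁) (χ₂ : DirichletCharacter ℂ q₂) :
    (gA χ₁ χ₂).IsMultiplicative :=
  ((ArithmeticFunction.isMultiplicative_zeta.natCast.mul
    (isMultiplicative_toArithmeticFunction χ₁)).mul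
    (isMultiplicative_toArithmeticFunction χ₂)).mul (isMultiplicative_toArithmeticFunction _)

open ComplexOrder in
lemma gA_nonneg (χ₁ : DirichletCharacter ℂ q₁) (χ₂ : DirichletCharacter ℂ q₂)
    (h1 : χ₁ ^ 2 = 1) (h2 : χ₂ ^ 2 = 1) (n : ℕ) : 0 ≤ gA χ₁ χ₂ n := by
  rcases eq_or_ne n 0 with rfl | hn
  · simp
  · rw [(gA_mult χ₁ χ₂).multiplicative_factorization _ hn]
    refine Finset.prod_nonneg fun p hp => ?_
    have hp := Nat.prime_of_mem_primeFactors hp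
    have key : loc p (gA χ₁ χ₂) = geo 1 * geo (χ₁ p) * geo (χ₂ p) * geo (χ₁ p * χ₂ p) := by
      rw [gA, loc_mul hp, loc_mul hp, loc_mul hp, loc_zeta hp, loc_af _ hp, loc_af _ hp,
        loc_af _ hp, chiProd_apply]
    have := geo_four (MulChar.isQuadratic_iff_sq_eq_one.mpr h1 p)
      (MulChar.isQuadratic_iff_sq_eq_one.mpr h2 p) (n.factorization p)
    rw [← key] at this
    simpa [loc] using this

lemma af_hasSum {N : ℕ} [NeZero N] (χ : DirichletCharacter ℂ N) {s : ℂ} (hs : 1 < s.re) :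
    LSeriesHasSum (fun n => af χ n) s (χ.LFunction s) := by
  have h1 : LSeriesSummable (fun n => af χ n) s :=
    (LSeriesSummable_congr _ fun h ↦ (χ.apply_eq_toArithmeticFunction_apply h).symm).mpr <|
      ZMod.LSeriesSummable_of_one_lt_re χ hs
  rw [LFunction_eq_LSeries χ hs,
    LSeries_congr (χ.apply_eq_toArithmeticFunction_apply) s]
  exact h1.LSeriesHasSum

lemma gA_hasSum [NeZero q₁] [NeZero q₂]
    (χ₁ : DirichletCharacter ℂ q₁) (χ₂ : DirichletCharacter ℂ q₂)
    {s : ℂ} (hs : 1 < s.re) :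
    LSeriesHasSum (fun n => gA χ₁ χ₂ n) s (riemannZeta s * χ₁.LFunction s * χ₂.LFunction s *
    (chiProd χ₁ χ₂).LFunction s) := by
  refine ArithmeticFunction.LSeriesHasSum_mul (ArithmeticFunction.LSeriesHasSum_mul
    (ArithmeticFunction.LSeriesHasSum_mul ?_ (af_hasSum χ₁ hs)) (af_hasSum χ₂ hs)) (af_hasSum _ hs)
  exact ArithmeticFunction.LSeriesHasSum_zeta hs

end coeffs

lemma F_term (a : ArithmeticFunction ℂ) (w x t : ℝ) (hx : 0 < x) (n : ℕ) (hn : n ≠ 0) :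
    LSeries.term (fun n => a n) (2 + (w : ℂ) + t * I) n * (x : ℂ) ^ (2 + t * I) * (gD t)⁻¹ =
      (a n * ((n : ℝ) ^ (-w) : ℝ)) *
        (((n / x : ℝ) : ℂ) ^ (-(2 + t * I)) * (gD t)⁻¹) := by
  have hn' : (0 : ℝ) < n := by exact_mod_cast Nat.pos_of_ne_zero hn
  have hnc : (n : ℂ) ≠ 0 := by exact_mod_cast hn
  have hxc : (x : ℂ) ≠ 0 := by exact_mod_cast hx.ne'
  rw [LSeries.term_of_ne_zero hn, div_eq_mul_inv (n : ℝ) x, ofReal_mul,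
    mul_cpow_ofReal_nonneg hn'.le (inv_nonneg.2 hx.le), ofReal_cpow hn'.le, ofReal_inv,
    inv_cpow _ _ (by rw [arg_ofReal_of_nonneg hx.le]; exact Real.pi_pos.ne), cpow_neg (x : ℂ),
    inv_inv]
  have : ((n : ℝ) : ℂ) ^ (((-w : ℝ)) : ℂ) * ((n : ℝ) : ℂ) ^ (-(2 + t * I)) =
      ((n : ℂ) ^ (2 + (w : ℂ) + t * I))⁻¹ := by
    rw [ofReal_natCast, ← cpow_add _ _ hnc, ← cpow_neg]
    congr 1
    push_cast
    ring
  rw [div_eq_mul_inv, ← this]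
  ring

lemma F_norm (a : ArithmeticFunction ℂ) (w x t : ℝ) (hx : 0 < x) (n : ℕ) :
    ‖LSeries.term (fun n => a n) (2 + (w : ℂ) + t * I) n * (x : ℂ) ^ (2 + t * I) * (gD t)⁻¹‖ =
      ‖LSeries.term (fun n => a n) (2 + (w : ℂ)) n‖ * x ^ (2 : ℝ) * ‖(gD t)⁻¹‖ := by
  rw [norm_mul, norm_mul, LSeries.norm_term_eq, LSeries.norm_term_eq,
    norm_cpow_eq_rpow_re_of_pos hx]
  simp

lemma F_int (a : ArithmeticFunction ℂ) (w x : ℝ) (hx : 0 < x) (n : ℕ) :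
    Integrable (fun t : ℝ => LSeries.term (fun n => a n) (2 + (w : ℂ) + t * I) n *
      (x : ℂ) ^ (2 + t * I) * (gD t)⁻¹) := by
  refine (gD_int.norm.const_mul
    (‖LSeries.term (fun n => a n) (2 + (w : ℂ)) n‖ * x ^ (2 : ℝ))).mono' ?_
    (Filter.Eventually.of_forall fun t => (F_norm a w x t hx n).le)
  have hxc : (x : ℂ) ≠ 0 := by exact_mod_cast hx.ne'
  rcases eq_or_ne n 0 with rfl | hn
  · simpa using aestronglyMeasurable_const
  · have hnc : (n : ℂ) ≠ 0 := by exact_mod_cast hn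
    simp only [LSeries.term_of_ne_zero hn]
    refine Continuous.aestronglyMeasurable ?_
    refine (Continuous.mul ?_ ?_).mul (gD_cont.inv₀ gD_ne)
    · refine continuous_const.div ?_ fun t => by simp [cpow_eq_zero_iff, hnc]
      exact Continuous.const_cpow (by fun_prop) (Or.inl hnc)
    · exact Continuous.const_cpow (by fun_prop) (Or.inl hxc)

open ComplexOrder in
lemma J_main (a : ArithmeticFunction ℂ) (ha : ∀ n, 0 ≤ a n) (ha1 : a 1 = 1) (f : ℂ → ℂ)
    (hf : ∀ s : ℂ, 1 < s.re → LSeriesHasSum (fun n => a n) s (f s))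
    (w : ℝ) (hw : 0 < w) (hfc : Continuous fun t : ℝ => f (2 + (w : ℂ) + t * I))
    (x : ℝ) (hx : 2 ≤ x) :
    Integrable (fun t : ℝ => f (2 + (w : ℂ) + t * I) * (x : ℂ) ^ (2 + t * I) / gD t) ∧
    1 / 384 ≤ ((1 / (2 * (Real.pi : ℂ))) *
      ∫ t : ℝ, f (2 + (w : ℂ) + t * I) * (x : ℂ) ^ (2 + t * I) / gD t).re := by
  have hx0 : 0 < x := by linarith
  have hxc : (x : ℂ) ≠ 0 := by exact_mod_cast hx0.ne'
  have hsum : Summable fun n => ‖LSeries.term (fun n => a n) (2 + (w : ℂ)) n‖ :=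
    (hf (2 + w) (by simp; linarith)).summable.norm
  have hS : ∀ t : ℝ, HasSum (fun n => LSeries.term (fun n => a n) (2 + (w : ℂ) + t * I) n *
      (x : ℂ) ^ (2 + t * I) * (gD t)⁻¹)
      (f (2 + (w : ℂ) + t * I) * (x : ℂ) ^ (2 + t * I) / gD t) := fun t => by
    rw [div_eq_mul_inv]
    have h : LSeriesHasSum (fun n => a n) (2 + (w : ℂ) + t * I) (f (2 + (w : ℂ) + t * I)) :=
      hf _ (by simp; linarith)
    exact (HasSum.mul_right _ h).mul_right _
  constructor
  · refine (gD_int.norm.const_mul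
      ((∑' n, ‖LSeries.term (fun n => a n) (2 + (w : ℂ)) n‖) * x ^ (2 : ℝ))).mono' ?_
      (Filter.Eventually.of_forall fun t => ?_)
    · refine Continuous.aestronglyMeasurable ((hfc.mul ?_).div gD_cont gD_ne)
      exact Continuous.const_cpow (by fun_prop) (Or.inl hxc)
    · rw [← (hS t).tsum_eq, mul_assoc, ← tsum_mul_right]
      refine tsum_of_norm_bounded (hsum.mul_right _).hasSum fun n => ?_
      rw [F_norm a w x t hx0 n, mul_assoc]
  · have H := hasSum_integral_of_summable_integral_norm (fun n => F_int a w x hx0 n) (by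
      simp only [F_norm a w x _ hx0, integral_const_mul]
      exact (hsum.mul_right _).mul_right _)
    simp only [(hS _).tsum_eq] at H
    have H2 := H.mul_left (1 / (2 * (Real.pi : ℂ)))
    have hval : ∀ n : ℕ, (1 / (2 * (Real.pi : ℂ))) *
        ∫ t : ℝ, LSeries.term (fun n => a n) (2 + (w : ℂ) + t * I) n *
          (x : ℂ) ^ (2 + t * I) * (gD t)⁻¹ =
        a n * (((n : ℝ) ^ (-w) * gK (n / x) : ℝ) : ℂ) := fun n => by
      rcases eq_or_ne n 0 with rfl | hn
      · simp
      · have hn' : (0 : ℝ) < n := by exact_mod_cast Nat.pos_of_ne_zero hn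
        simp only [F_term a w x _ hx0 n hn]
        rw [integral_const_mul, perron _ (by positivity)]
        have : (Real.pi : ℂ) ≠ 0 := by exact_mod_cast Real.pi_ne_zero
        push_cast
        field_simp
    simp only [hval] at H2
    have H3 := Complex.hasSum_re H2
    have h1 := le_hasSum H3 1 fun n _ => by
      have h0 : (0 : ℂ) ≤ a n * (((n : ℝ) ^ (-w) * gK (n / x) : ℝ) : ℂ) :=
        mul_nonneg (ha n) (by
          have := gK_nonneg (n / x)
          exact_mod_cast (by positivity : (0 : ℝ) ≤ (n : ℝ) ^ (-w) * gK (n / x)))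
      exact (Complex.le_def.1 h0).1
    refine le_trans ?_ h1
    rw [ha1, one_mul, ofReal_re]
    simp only [Nat.cast_one, Real.one_rpow, one_mul, gK]
    have hi : 1 / x ≤ 1 / 2 := one_div_le_one_div_of_le (by norm_num) hx
    have hm : (1 : ℝ) / 2 ≤ max (1 - 1 / x) 0 := le_max_of_le_left (by linarith)
    have := pow_le_pow_left₀ (by norm_num) hm 4
    linarith

/-- There are absolute constants `X, M > 0` such that for all primitive quadratic `χ₁, χ₂`,
all `0 < w < 1` and all `x ≥ X`, the Perron-type integral
`J(x,w) = (1/2π) ∫ f(2+w+it) x^(2+it) / ((2+it)(3+it)(4+it)(5+it)(6+it)) dt`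
converges and has real part at least `M`. -/
theorem goldfeldJ_lower_bound :
    ∃ X : ℝ, 0 < X ∧ ∃ M : ℝ, 0 < M ∧
      ∀ (q₁ q₂ : ℕ) (hq₁ : 1 < q₁) (hq₂ : 1 < q₂),
        haveI : NeZero q₁ := ⟨by omega⟩
        haveI : NeZero q₂ := ⟨by omega⟩
        ∀ (χ₁ : DirichletCharacter ℂ q₁) (χ₂ : DirichletCharacter ℂ q₂),
          χ₁.IsPrimitive → χ₁ ≠ 1 → χ₁ ^ 2 = 1 →
          χ₂.IsPrimitive → χ₂ ≠ 1 → χ₂ ^ 2 = 1 →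
            ∀ w : ℝ, 0 < w → w < 1 → ∀ x : ℝ, X ≤ x →
              Integrable (fun t : ℝ =>
                goldfeldF χ₁ χ₂ (2 + (w : ℂ) + t * I) * (x : ℂ) ^ (2 + t * I) /
                  ((2 + t * I) * (3 + t * I) * (4 + t * I) * (5 + t * I) * (6 + t * I))) ∧
              M ≤ ((1 / (2 * (Real.pi : ℂ))) *
                ∫ t : ℝ, goldfeldF χ₁ χ₂ (2 + (w : ℂ) + t * I) * (x : ℂ) ^ (2 + t * I) /
                  ((2 + t * I) * (3 + t * I) * (4 + t * I) * (5 + t * I) * (6 + t * I))).re := by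
  refine ⟨2, by norm_num, 1 / 384, by norm_num, ?_⟩
  intro q₁ q₂ hq₁ hq₂ χ₁ χ₂ _ _ h1 _ _ h2 w hw _ x hx
  have : NeZero q₁ := ⟨by omega⟩
  have : NeZero q₂ := ⟨by omega⟩
  refine J_main (gA χ₁ χ₂) (gA_nonneg χ₁ χ₂ h1 h2) (gA_mult χ₁ χ₂).map_one (goldfeldF χ₁ χ₂)
    (fun s hs => gA_hasSum χ₁ χ₂ hs) w hw ?_ x hx
  rw [continuous_iff_continuousAt]
  intro t
  have hs : (2 + (w : ℂ) + t * I) ≠ 1 := fun h => by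
    have := congrArg Complex.re h
    simp at this
    linarith
  have hc : ContinuousAt (goldfeldF χ₁ χ₂) (2 + (w : ℂ) + t * I) := by
    unfold goldfeldF
    exact ((((differentiableAt_riemannZeta hs).mul (differentiableAt_LFunction χ₁ _ (.inl hs))).mul
      (differentiableAt_LFunction χ₂ _ (.inl hs))).mul
      (differentiableAt_LFunction _ _ (.inl hs))).continuousAt
  exact ContinuousAt.comp (f := fun t : ℝ => (2 + (w : ℂ) + t * I)) hc (by fun_prop)
end

section
/- For every ε > 0 there exists a constant C(ε) > 0 such that for all integers q₁, q₂ > 1, all primitive quadratic Dirichlet characters χ₁ mod q₁ and χ₂ mod q₂, every real w with 0 < w < 1, and every real x ≥ 1, the shifted-line integral satisfies |(1/2π)·∫_{−∞}^{∞} f(it)·x^(−w+it) / ((−w+it)(1−w+it)(2−w+it)(3−w+it)(4−w+it)) dt| ≤ C(ε)·(q₁q₂)^(1+ε)·x^(−w)/(w(1−w)). -/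
open DirichletCharacter MeasureTheory Complex

lemma gs_cosh_aux {x : ℝ} (hx : 0 ≤ x) : x * Real.cosh x ≤ (1 + x) * Real.sinh x := by
  have h1 : x ≤ Real.sinh x := Real.self_le_sinh_iff.mpr hx
  have h2 : Real.cosh x - Real.sinh x = Real.exp (-x) := Real.cosh_sub_sinh x
  have h3 : Real.exp (-x) ≤ 1 := Real.exp_le_one_iff.mpr (by linarith)
  nlinarith

lemma gs_Gamma_norm_neg (z : ℝ) (a : ℝ) : ‖Gammaℝ (a - z * I)‖ = ‖Gammaℝ (a + z * I)‖ := by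
  have h : ((a : ℂ) - z * I) / 2 = (starRingEnd ℂ) (((a : ℂ) + z * I) / 2) := by
    simp [sub_eq_add_neg, Complex.conj_ofNat]
  rw [Gammaℝ_def, Gammaℝ_def, norm_mul, norm_mul, h, Gamma_conj, norm_conj]
  congr 1
  rw [norm_cpow_eq_rpow_re_of_pos Real.pi_pos, norm_cpow_eq_rpow_re_of_pos Real.pi_pos]
  simp

lemma gs_Gamma_one (t : ℝ) : ‖Gammaℝ (1 + t * I)‖ ^ 2 * Real.cosh (Real.pi * t / 2) = 1 := by
  have h := Gammaℝ_one_sub_mul_Gammaℝ_one_add (t * I)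
  have h2 : (Real.pi : ℂ) * (t * I) / 2 = ((Real.pi * t / 2 : ℝ) : ℂ) * I := by
    push_cast; ring
  rw [h2, Complex.cos_mul_I, ← ofReal_cosh] at h
  have h3 := congrArg norm h
  have h4 := gs_Gamma_norm_neg t 1
  simp only [ofReal_one] at h4
  rw [norm_mul, h4, norm_inv, norm_real, Real.norm_of_nonneg (Real.cosh_pos _).le] at h3
  rw [sq, h3, inv_mul_cancel₀ (Real.cosh_pos _).ne']

lemma gs_Gamma_zero (t : ℝ) (ht : t ≠ 0) :
    ‖Gammaℝ (t * I)‖ ^ 2 * |t| * |Real.sinh (Real.pi * t / 2)| = 2 * Real.pi := by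
  have hz : (t * I / 2 : ℂ) ≠ 0 := by simp [ht]
  have h := Complex.Gamma_mul_Gamma_one_sub (t * I / 2)
  have h2 : (Real.pi : ℂ) * (t * I / 2) = ((Real.pi * t / 2 : ℝ) : ℂ) * I := by
    push_cast; ring
  have h1 : Gamma (1 - t * I / 2) = -(t * I / 2) * Gamma (-(t * I / 2)) := by
    rw [← Gamma_add_one _ (neg_ne_zero.mpr hz)]; ring_nf
  have h5 : (-(t * I / 2) : ℂ) = (starRingEnd ℂ) (t * I / 2) := by simp [neg_div, Complex.conj_ofNat]
  rw [h2, Complex.sin_mul_I, ← ofReal_sinh, h1] at h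
  have h3 := congrArg norm h
  rw [norm_mul, norm_mul, h5, Gamma_conj, norm_conj, norm_conj] at h3
  simp only [norm_div, norm_mul, norm_real, norm_I, Real.norm_eq_abs, mul_one] at h3
  rw [abs_of_pos Real.pi_pos] at h3
  have h6 : ‖Gammaℝ (t * I)‖ = ‖Gamma (t * I / 2)‖ := by
    rw [Gammaℝ_def, norm_mul, norm_cpow_eq_rpow_re_of_pos Real.pi_pos]
    simp
  have hs : |Real.sinh (Real.pi * t / 2)| ≠ 0 := by
    simp [ht, Real.pi_ne_zero]
  rw [h6]
  rw [eq_div_iff hs] at h3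
  have h7 : ‖(2 : ℂ)‖ = 2 := by simp
  rw [h7] at h3
  linarith

lemma gs_ratio_even (t : ℝ) (ht : t ≠ 0) :
    ‖Gammaℝ (1 - t * I)‖ ^ 2 ≤ (1 + |t|) * ‖Gammaℝ (t * I)‖ ^ 2 := by
  have h4 := gs_Gamma_norm_neg t 1
  simp only [ofReal_one] at h4
  have h1 := gs_Gamma_one t
  have h0 := gs_Gamma_zero t ht
  rw [h4]
  have hc := Real.cosh_pos (Real.pi * t / 2)
  have hcs : |Real.sinh (Real.pi * t / 2)| ≤ Real.cosh (Real.pi * t / 2) := by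
    rw [← Real.cosh_abs, Real.abs_sinh]
    exact (Real.sinh_lt_cosh _).le
  set A := ‖Gammaℝ (1 + t * I)‖ ^ 2
  set B := ‖Gammaℝ (t * I)‖ ^ 2
  have hB : 0 ≤ B := by positivity
  have hpi := Real.pi_gt_three
  have : A * Real.cosh (Real.pi * t / 2) ≤ (1 + |t|) * B * Real.cosh (Real.pi * t / 2) := by
    rw [h1]
    have : B * |t| * |Real.sinh (Real.pi * t / 2)| ≤ B * |t| * Real.cosh (Real.pi * t / 2) := by
      gcongr
    have : 0 ≤ B * Real.cosh (Real.pi * t / 2) := by positivity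
    nlinarith
  exact le_of_mul_le_mul_right this hc

lemma gs_ratio_odd (t : ℝ) (ht : t ≠ 0) :
    ‖Gammaℝ (2 - t * I)‖ ^ 2 ≤ (1 + |t|) * ‖Gammaℝ (1 + t * I)‖ ^ 2 := by
  have h1 := gs_Gamma_one t
  have h0 := gs_Gamma_zero t ht
  have h2 : ‖Gammaℝ (2 - t * I)‖ ^ 2 = ‖Gammaℝ (t * I)‖ ^ 2 * |t| ^ 2 / (4 * Real.pi ^ 2) := by
    have h4 := gs_Gamma_norm_neg t 2
    simp only [ofReal_ofNat] at h4
    rw [h4, add_comm, Gammaℝ_add_two (by simp [ht])]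
    simp only [norm_div, norm_mul, norm_real, norm_I, Real.norm_eq_abs, mul_one]
    rw [abs_of_pos Real.pi_pos]
    have h7 : ‖(2 : ℂ)‖ = 2 := by simp
    rw [h7]
    field_simp
    norm_num
  rw [h2]
  have hc := Real.cosh_pos (Real.pi * t / 2)
  have hpi := Real.pi_gt_three
  have hx : |Real.pi * t / 2| = Real.pi * |t| / 2 := by
    rw [abs_div, abs_mul, abs_of_pos Real.pi_pos, abs_two]
  have haux := gs_cosh_aux (abs_nonneg (Real.pi * t / 2))
  rw [Real.cosh_abs, ← Real.abs_sinh, hx] at haux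
  have hs : 0 < |Real.sinh (Real.pi * t / 2)| := by
    rw [abs_pos]; simp [ht, Real.pi_ne_zero]
  set S := |Real.sinh (Real.pi * t / 2)|
  set D := Real.cosh (Real.pi * t / 2)
  set A := ‖Gammaℝ (1 + t * I)‖ ^ 2
  set B := ‖Gammaℝ (t * I)‖ ^ 2
  have hB : 0 ≤ B := by positivity
  have ht0 : 0 < |t| := abs_pos.mpr ht
  have e : B * |t| ^ 2 / (4 * Real.pi ^ 2) * (S * D) = |t| * D / (2 * Real.pi) := by
    field_simp
    linear_combination 2 * h0
  have : B * |t| ^ 2 / (4 * Real.pi ^ 2) * (S * D) ≤ (1 + |t|) * A * (S * D) := by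
    rw [e]
    have : (1 + |t|) * A * (S * D) = (1 + |t|) * S := by linear_combination (1 + |t|) * S * h1
    rw [this, div_le_iff₀ (by positivity)]
    have k : |t| * D ≤ 2 / Real.pi * ((1 + Real.pi * |t| / 2) * S) := by
      rw [div_mul_eq_mul_div, le_div_iff₀ Real.pi_pos]; linarith
    refine k.trans ?_
    rw [div_mul_eq_mul_div, div_le_iff₀ Real.pi_pos]
    have : (1 + Real.pi * |t| / 2) ≤ (1 + |t|) * Real.pi := by nlinarith
    have : (1 + Real.pi * |t| / 2) * S ≤ (1 + |t|) * Real.pi * S := by gcongr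
    have : 0 ≤ (1 + |t|) * Real.pi * S := by positivity
    nlinarith
  exact le_of_mul_le_mul_right this (by positivity)


lemma gs_head (f : ℕ → ℂ) (hf : ∀ n, ‖f n‖ ≤ 1) (N : ℕ) {s : ℂ} (hs : 1 < s.re) :
    ‖LSeries (fun n ↦ if n ≤ N then f n else 0) s‖ ≤ 1 + Real.log N := by
  rw [LSeries, tsum_eq_sum (s := Finset.Icc 1 N)]
  · refine (norm_sum_le _ _).trans ((Finset.sum_le_sum (g := fun n : ℕ ↦ (n : ℝ)⁻¹) ?_).trans ?_)
    · intro n hn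
      rw [Finset.mem_Icc] at hn
      have hn0 : 0 < n := by omega
      rw [LSeries.term_of_ne_zero (by omega), if_pos hn.2, norm_div,
        norm_natCast_cpow_of_pos hn0, div_eq_mul_inv]
      have h1 : (n : ℝ) ≤ (n : ℝ) ^ s.re := by
        have : (1 : ℝ) ≤ n := by exact_mod_cast hn0
        calc (n : ℝ) = (n : ℝ) ^ (1 : ℝ) := (Real.rpow_one _).symm
          _ ≤ _ := Real.rpow_le_rpow_of_exponent_le this hs.le
      have h2 : (0 : ℝ) < n := by exact_mod_cast hn0
      have h3 : ((n : ℝ) ^ s.re)⁻¹ ≤ (n : ℝ)⁻¹ := inv_anti₀ h2 h1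
      have := hf n
      have h4 : 0 ≤ ((n : ℝ) ^ s.re)⁻¹ := by positivity
      nlinarith
    · have := harmonic_le_one_add_log N
      rw [harmonic_eq_sum_Icc] at this
      push_cast at this
      exact this
  · intro n hn
    rw [Finset.mem_Icc] at hn
    rw [LSeries.term_def]
    split_ifs with h1 h2
    · rfl
    · omega
    · simp

lemma gs_partial (f : ℕ → ℂ) (N n : ℕ) (h : N ≤ n) :
    ∑ k ∈ Finset.Icc 1 n, (if k ≤ N then 0 else f k) =
      ∑ k ∈ Finset.Icc 1 n, f k - ∑ k ∈ Finset.Icc 1 N, f k := by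
  induction n, h using Nat.le_induction with
  | base =>
    rw [sub_self]
    apply Finset.sum_eq_zero
    intro k hk
    rw [if_pos (Finset.mem_Icc.mp hk).2]
  | succ n hn ih =>
    rw [Finset.sum_Icc_succ_top (by omega), Finset.sum_Icc_succ_top (by omega), ih,
      if_neg (by omega)]
    ring

lemma gs_tail (f : ℕ → ℂ) (hf : ∀ n, ‖f n‖ ≤ 1) (c : ℂ) (B : ℝ)
    (hB : ∀ n : ℕ, ‖∑ k ∈ Finset.Icc 1 n, f k - c * n‖ ≤ B) (N : ℕ) (hN : 1 ≤ N)
    {s : ℂ} (hs : 1 < s.re) :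
    ‖LSeries (fun n ↦ if n ≤ N then 0 else f n) s‖ ≤
      ‖c‖ / ‖s - 1‖ + (2 * B + ‖c‖) * ‖s‖ / N := by
  set g : ℕ → ℂ := fun n ↦ if n ≤ N then 0 else f n with hg
  have hgn : ∀ n, ‖g n‖ ≤ 1 := by
    intro n; simp only [hg]; split_ifs
    · simp
    · exact hf n
  have hN1 : (1 : ℝ) ≤ N := by exact_mod_cast hN
  have hN0 : (0 : ℝ) < N := by linarith
  have hNc : (N : ℂ) ≠ 0 := by exact_mod_cast hN0.ne'
  have hs0 : s ≠ 0 := by rintro rfl; simp at hs; linarith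
  have hs1 : s - 1 ≠ 0 := by
    intro h; rw [sub_eq_zero] at h; subst h; simp at hs
  have hB0 : 0 ≤ B := (norm_nonneg _).trans (hB 0)
  rw [LSeries_eq_mul_integral' g zero_le_one hs]
  swap
  · refine Asymptotics.isBigO_of_le _ fun n ↦ ?_
    rw [Real.norm_of_nonneg (Finset.sum_nonneg fun _ _ ↦ norm_nonneg _), Real.rpow_one,
      Real.norm_of_nonneg (by positivity)]
    refine (Finset.sum_le_sum fun k _ ↦ hgn k).trans ?_
    simp
  have hsub : ∫ t in Set.Ioi (1 : ℝ), (∑ k ∈ Finset.Icc 1 ⌊t⌋₊, g k) * (t : ℂ) ^ (-(s + 1)) =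
      ∫ t in Set.Ioi (N : ℝ), (∑ k ∈ Finset.Icc 1 ⌊t⌋₊, g k) * (t : ℂ) ^ (-(s + 1)) := by
    refine setIntegral_eq_of_subset_of_forall_sdiff_eq_zero measurableSet_Ioi
      (Set.Ioi_subset_Ioi hN1) ?_
    intro t ht
    have ht2 : t ≤ N := not_lt.mp ht.2
    rw [Finset.sum_eq_zero, zero_mul]
    intro k hk
    have h1 : ⌊t⌋₊ ≤ N := Nat.floor_le_of_le ht2
    simp only [hg]
    rw [if_pos ((Finset.mem_Icc.mp hk).2.trans h1)]
  rw [hsub]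
  set R : ℝ → ℂ := fun t ↦ (∑ k ∈ Finset.Icc 1 ⌊t⌋₊, g k) - c * (t - N) with hR
  have hRb : ∀ t ∈ Set.Ioi (N : ℝ), ‖R t‖ ≤ 2 * B + ‖c‖ := by
    intro t ht
    have ht : (N : ℝ) < t := ht
    have h1 : N ≤ ⌊t⌋₊ := Nat.le_floor ht.le
    simp only [hR, hg]
    rw [gs_partial f N _ h1]
    have e : ∑ k ∈ Finset.Icc 1 ⌊t⌋₊, f k - ∑ k ∈ Finset.Icc 1 N, f k - c * ((t : ℂ) - N) =
        (∑ k ∈ Finset.Icc 1 ⌊t⌋₊, f k - c * (⌊t⌋₊ : ℂ)) - (∑ k ∈ Finset.Icc 1 N, f k - c * N)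
        - c * (((t - ⌊t⌋₊ : ℝ)) : ℂ) := by push_cast; ring
    rw [e]
    have h2 : ‖c * (((t - ⌊t⌋₊ : ℝ)) : ℂ)‖ ≤ ‖c‖ := by
      rw [norm_mul, norm_real]
      have h3 := Nat.floor_le (hN0.le.trans ht.le)
      have h4 := Nat.lt_floor_add_one t
      rw [Real.norm_of_nonneg (by linarith)]
      have := norm_nonneg c
      nlinarith
    have h5 := hB ⌊t⌋₊
    have h6 := hB N
    have h7 := norm_sub_le ((∑ k ∈ Finset.Icc 1 ⌊t⌋₊, f k - c * (⌊t⌋₊ : ℂ)) - (∑ k ∈ Finset.Icc 1 N, f k - c * N)) (c * (((t - ⌊t⌋₊ : ℝ)) : ℂ))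
    have h8 := norm_sub_le (∑ k ∈ Finset.Icc 1 ⌊t⌋₊, f k - c * (⌊t⌋₊ : ℂ)) (∑ k ∈ Finset.Icc 1 N, f k - c * N)
    linarith
  have hRm : Measurable R := by
    have : Measurable fun t : ℝ ↦ (∑ k ∈ Finset.Icc 1 ⌊t⌋₊, g k) :=
      (measurable_from_nat (f := fun n ↦ ∑ k ∈ Finset.Icc 1 n, g k)).comp Nat.measurable_floor
    exact this.sub (by fun_prop)
  have hbd : IntegrableOn (fun t : ℝ ↦ (2 * B + ‖c‖) * t ^ (-2 : ℝ)) (Set.Ioi (N : ℝ)) :=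
    (integrableOn_Ioi_rpow_of_lt (by norm_num) hN0).const_mul _
  have hRn : ∀ t ∈ Set.Ioi (N : ℝ), ‖R t * (t : ℂ) ^ (-(s + 1))‖ ≤ (2 * B + ‖c‖) * t ^ (-2 : ℝ) := by
    intro t ht
    have ht' : (N : ℝ) < t := ht
    rw [norm_mul, norm_cpow_eq_rpow_re_of_pos (by linarith)]
    have : t ^ (-(s + 1)).re ≤ t ^ (-2 : ℝ) :=
      Real.rpow_le_rpow_of_exponent_le (by linarith) (by simp; linarith)
    have h1 := hRb t ht
    have h2 : 0 ≤ t ^ (-(s + 1)).re := Real.rpow_nonneg (by linarith) _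
    exact mul_le_mul h1 this h2 (by positivity)
  have hcm : Measurable fun t : ℝ ↦ (t : ℂ) ^ (-(s + 1)) := by fun_prop
  have hRi : IntegrableOn (fun t : ℝ ↦ R t * (t : ℂ) ^ (-(s + 1))) (Set.Ioi (N : ℝ)) := by
    refine Integrable.mono' hbd (hRm.mul hcm).aestronglyMeasurable ?_
    exact (ae_restrict_mem measurableSet_Ioi).mono hRn
  have i1 : IntegrableOn (fun t : ℝ ↦ c * (t : ℂ) ^ (-s)) (Set.Ioi (N : ℝ)) :=
    (integrableOn_Ioi_cpow_of_lt (by simpa using hs) hN0).const_mul _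
  have i2 : IntegrableOn (fun t : ℝ ↦ c * N * (t : ℂ) ^ (-(s + 1))) (Set.Ioi (N : ℝ)) :=
    (integrableOn_Ioi_cpow_of_lt (by simp; linarith) hN0).const_mul _
  have i12 : IntegrableOn (fun t : ℝ ↦ c * (t : ℂ) ^ (-s) - c * N * (t : ℂ) ^ (-(s + 1)))
      (Set.Ioi (N : ℝ)) := i1.sub i2
  have hsplit : ∫ t in Set.Ioi (N : ℝ), (∑ k ∈ Finset.Icc 1 ⌊t⌋₊, g k) * (t : ℂ) ^ (-(s + 1)) =
      ∫ t in Set.Ioi (N : ℝ), (R t * (t : ℂ) ^ (-(s + 1)) +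
        (c * (t : ℂ) ^ (-s) - c * N * (t : ℂ) ^ (-(s + 1)))) := by
    refine setIntegral_congr_fun measurableSet_Ioi fun t ht ↦ ?_
    have ht' : (N : ℝ) < t := ht
    have ht0 : (t : ℂ) ≠ 0 := by exact_mod_cast (hN0.trans ht').ne'
    have : (t : ℂ) ^ (-s) = t * (t : ℂ) ^ (-(s + 1)) := by
      rw [show -s = 1 + -(s + 1) by ring, cpow_add _ _ ht0, cpow_one]
    simp only [hR]
    rw [this]; ring
  rw [hsplit, integral_add hRi i12, integral_sub i1 i2, integral_const_mul,
    integral_const_mul, integral_Ioi_cpow_of_lt (by simpa using hs) hN0,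
    integral_Ioi_cpow_of_lt (by simp; linarith) hN0, mul_add]
  have hmain : s * (c * (-(((N : ℝ) : ℂ)) ^ (-s + 1) / (-s + 1)) -
      c * N * (-(((N : ℝ) : ℂ)) ^ (-(s + 1) + 1) / (-(s + 1) + 1))) =
      c * (N : ℂ) ^ (1 - s) / (s - 1) := by
    have e1 : (-s + 1) ≠ 0 := by intro h; apply hs1; linear_combination -h
    have e2 : (-(s + 1) + 1) ≠ 0 := by intro h; apply hs0; linear_combination -h
    have e3 : (N : ℂ) ^ (-(s + 1) + 1) = (N : ℂ) ^ (1 - s) / N := by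
      rw [show -(s + 1) + 1 = (1 - s) - 1 by ring, cpow_sub _ _ hNc, cpow_one]
    rw [ofReal_natCast, e3, show -s + 1 = 1 - s by ring, show -(s + 1) + 1 = -s by ring]
    have e4 : 1 - s ≠ 0 := by intro h; apply hs1; linear_combination -h
    field_simp
    ring
  rw [hmain]
  refine (norm_add_le _ _).trans ?_
  rw [add_comm]
  refine add_le_add ?_ ?_
  · rw [norm_div, norm_mul, norm_natCast_cpow_of_pos (by omega)]
    have : (N : ℝ) ^ (1 - s).re ≤ 1 :=
      Real.rpow_le_one_of_one_le_of_nonpos hN1 (by simp; linarith)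
    gcongr
    exact mul_le_of_le_one_right (norm_nonneg _) this
  · rw [norm_mul]
    have h := norm_integral_le_of_norm_le hbd ((ae_restrict_mem measurableSet_Ioi).mono hRn)
    rw [integral_const_mul, integral_Ioi_rpow_of_lt (by norm_num) hN0] at h
    have e : -(N : ℝ) ^ ((-2 : ℝ) + 1) / (-2 + 1) = 1 / N := by
      rw [show (-2 : ℝ) + 1 = -1 by norm_num, Real.rpow_neg_one]; ring
    rw [e] at h
    calc _ ≤ ‖s‖ * ((2 * B + ‖c‖) * (1 / N)) := by gcongr
      _ = _ := by ring

lemma gs_lseries (f : ℕ → ℂ) (hf : ∀ n, ‖f n‖ ≤ 1) (c : ℂ) (B : ℝ)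
    (hB : ∀ n : ℕ, ‖∑ k ∈ Finset.Icc 1 n, f k - c * n‖ ≤ B) (N : ℕ) (hN : 1 ≤ N)
    {s : ℂ} (hs : 1 < s.re) :
    ‖LSeries f s‖ ≤ 1 + Real.log N + ‖c‖ / ‖s - 1‖ + (2 * B + ‖c‖) * ‖s‖ / N := by
  have e : f = (fun n ↦ if n ≤ N then f n else 0) + (fun n ↦ if n ≤ N then 0 else f n) := by
    ext n; simp only [Pi.add_apply]; split_ifs <;> simp
  have h1 := gs_head f hf N hs
  have h2 := gs_tail f hf c B hB N hN hs
  rw [e, LSeries_add]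
  · refine (norm_add_le _ _).trans ?_
    linarith
  · refine LSeriesSummable_of_bounded_of_one_lt_re (m := 1) (fun n _ ↦ ?_) hs
    split_ifs
    · exact hf n
    · simp
  · refine LSeriesSummable_of_bounded_of_one_lt_re (m := 1) (fun n _ ↦ ?_) hs
    split_ifs
    · simp
    · exact hf n

lemma gs_charsum {q : ℕ} [NeZero q] (χ : DirichletCharacter ℂ q) (hχ : χ ≠ 1) (n : ℕ) :
    ‖∑ k ∈ Finset.range n, χ k‖ ≤ q := by
  have hper : ∑ k ∈ Finset.range q, χ k = 0 := by
    rw [← MulChar.sum_eq_zero_of_ne_one hχ]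
    refine Finset.sum_bij (fun k _ ↦ (k : ZMod q)) (by simp) ?_ ?_ (by simp)
    · intro a ha b hb h
      rw [Finset.mem_range] at ha hb
      rw [ZMod.natCast_eq_natCast_iff'] at h
      rwa [Nat.mod_eq_of_lt ha, Nat.mod_eq_of_lt hb] at h
    · intro b _
      exact ⟨b.val, by simp [ZMod.val_lt], by simp⟩
  have hq : 0 < q := Nat.pos_of_ne_zero (NeZero.ne q)
  induction n using Nat.strong_induction_on with
  | _ n ih =>
    by_cases h : n ≤ q
    · refine (norm_sum_le _ _).trans ((Finset.sum_le_sum fun (k : ℕ) _ ↦ χ.norm_le_one (k : ZMod q)).trans ?_)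
      simpa using h
    · obtain ⟨m, rfl⟩ : ∃ m, n = q + m := ⟨n - q, by omega⟩
      rw [Finset.sum_range_add, hper, zero_add]
      simpa using ih m (by omega)

lemma gs_charsum' {q : ℕ} [NeZero q] (χ : DirichletCharacter ℂ q) (hq : q ≠ 1) (hχ : χ ≠ 1)
    (n : ℕ) : ‖∑ k ∈ Finset.Icc 1 n, χ k‖ ≤ q := by
  have := gs_charsum χ hχ (n + 1)
  have e : ∑ k ∈ Finset.range (n + 1), χ k = ∑ k ∈ Finset.Icc 1 n, χ k := by
    rw [Finset.range_eq_Ico, Finset.sum_eq_sum_Ico_succ_bot (by omega)]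
    have : χ ((0 : ℕ) : ZMod q) = 0 := by
      rw [Nat.cast_zero]; exact χ.map_zero' hq
    rw [this, zero_add]
    rfl
  rwa [e] at this


lemma gs_L_one_aux {q : ℕ} [NeZero q] (χ : DirichletCharacter ℂ q) (hχ : χ.IsPrimitive)
    (t : ℝ) (ht : t ≠ 0) (N : ℕ) (hN : 1 ≤ N) :
    ‖χ.LFunction (1 + t * I)‖ ≤
      1 + Real.log N + (if q = 1 then 1 / |t| else 0) + 2 * q * ‖(1 + t * I : ℂ)‖ / N := by
  obtain ⟨c, B, hB, hc, h2⟩ : ∃ (c : ℂ) (B : ℝ),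
      (∀ n : ℕ, ‖∑ k ∈ Finset.Icc 1 n, χ k - c * n‖ ≤ B) ∧ (‖c‖ = if q = 1 then 1 else 0) ∧
      2 * B + ‖c‖ ≤ 2 * q := by
    by_cases hq : q = 1
    · subst hq
      refine ⟨1, 0, fun n ↦ ?_, by simp, by norm_num⟩
      have h1 : ∀ k : ℕ, χ k = 1 := fun k ↦ by
        rw [Subsingleton.elim (k : ZMod 1) 1, map_one]
      simp [h1]
    · refine ⟨0, q, fun n ↦ ?_, by simp [hq], by simp⟩
      have hne : χ ≠ 1 := by
        rintro rfl
        rw [isPrimitive_def, conductor_one] at hχ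
        exact hq hχ.symm
      simpa using gs_charsum' χ hq hne n
  have hN0 : (0 : ℝ) < N := by exact_mod_cast hN
  have hne : (1 + t * I : ℂ) ≠ 1 := by simp [ht]
  have hF : ContinuousAt (fun σ : ℝ ↦ ‖χ.LFunction (σ + t * I)‖) 1 := by
    have h1 : ContinuousAt χ.LFunction (((1 : ℝ) : ℂ) + t * I) :=
      (differentiableAt_LFunction χ _ (Or.inl (by simpa using hne))).continuousAt
    have h3 : ContinuousAt (fun σ : ℝ ↦ (σ : ℂ) + t * I) 1 := by fun_prop
    exact (ContinuousAt.comp (f := fun σ : ℝ ↦ (σ : ℂ) + t * I) h1 h3).norm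
  have hG : ContinuousAt (fun σ : ℝ ↦ 1 + Real.log N + ‖c‖ / ‖(σ + t * I : ℂ) - 1‖ +
      (2 * B + ‖c‖) * ‖(σ + t * I : ℂ)‖ / N) 1 := by
    have : ‖((1 : ℝ) + t * I : ℂ) - 1‖ ≠ 0 := by simp [ht]
    fun_prop (disch := assumption)
  have hle : ‖χ.LFunction ((1 : ℝ) + t * I)‖ ≤ 1 + Real.log N + ‖c‖ / ‖((1 : ℝ) + t * I : ℂ) - 1‖ +
      (2 * B + ‖c‖) * ‖((1 : ℝ) + t * I : ℂ)‖ / N := by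
    refine le_of_tendsto_of_tendsto (hF.tendsto.mono_left (nhdsWithin_le_nhds (s := Set.Ioi 1)))
      (hG.tendsto.mono_left nhdsWithin_le_nhds) ?_
    filter_upwards [self_mem_nhdsWithin] with σ hσ
    have hσ' : 1 < ((σ : ℂ) + t * I).re := by simpa using hσ
    rw [LFunction_eq_LSeries χ hσ']
    exact gs_lseries _ (fun n ↦ χ.norm_le_one _) c B hB N hN hσ'
  rw [ofReal_one] at hle
  refine hle.trans ?_
  have e1 : ‖(1 + t * I : ℂ) - 1‖ = |t| := by simp
  have e2 : (if q = 1 then (1 : ℝ) else 0) / |t| = if q = 1 then 1 / |t| else 0 := by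
    split_ifs <;> simp
  rw [e1, hc, e2, ← hc]
  gcongr

lemma gs_L_one {q : ℕ} [NeZero q] (χ : DirichletCharacter ℂ q) (hχ : χ.IsPrimitive)
    (t : ℝ) (ht : t ≠ 0) (δ : ℝ) (hδ : 0 < δ) (hδ1 : δ ≤ 1) :
    ‖χ.LFunction (1 + t * I)‖ ≤
      (3 + 2 / δ) * (q * (1 + |t|)) ^ δ + (if q = 1 then 1 / |t| else 0) := by
  have hq : 0 < q := Nat.pos_of_ne_zero (NeZero.ne q)
  have hq1 : (1 : ℝ) ≤ q := by exact_mod_cast hq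
  set N := q * (⌈|t|⌉₊ + 1) with hNdef
  have hN : 1 ≤ N := by rw [hNdef]; exact Nat.mul_pos hq (by omega)
  have h := gs_L_one_aux χ hχ t ht N hN
  have hN0 : (0 : ℝ) < N := by exact_mod_cast hN
  have ht0 := abs_nonneg t
  have hNr : (N : ℝ) = q * (⌈|t|⌉₊ + 1) := by rw [hNdef]; push_cast; ring
  have hcl := Nat.le_ceil |t|
  have hcu := Nat.ceil_lt_add_one ht0
  have h1 : 2 * q * ‖(1 + t * I : ℂ)‖ / N ≤ 2 := by
    rw [div_le_iff₀ hN0, hNr]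
    have : ‖(1 + t * I : ℂ)‖ ≤ 1 + |t| := (norm_add_le _ _).trans (by simp)
    have : q * ‖(1 + t * I : ℂ)‖ ≤ q * (⌈|t|⌉₊ + 1) := by gcongr; linarith
    linarith
  have hX : 1 ≤ (q : ℝ) * (1 + |t|) := by nlinarith
  have h2 : (N : ℝ) ≤ 2 * (q * (1 + |t|)) := by
    rw [hNr]
    have : (q : ℝ) * (⌈|t|⌉₊ + 1) ≤ q * (2 + |t|) :=
      mul_le_mul_of_nonneg_left (by linarith) (by positivity)
    nlinarith
  have h3 : Real.log N ≤ 2 / δ * (q * (1 + |t|)) ^ δ := by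
    calc Real.log N ≤ Real.log (2 * (q * (1 + |t|))) := Real.log_le_log hN0 h2
      _ ≤ (2 * (q * (1 + |t|))) ^ δ / δ := Real.log_le_rpow_div (by positivity) hδ
      _ = 2 ^ δ * (q * (1 + |t|)) ^ δ / δ := by rw [Real.mul_rpow (by norm_num) (by positivity)]
      _ ≤ 2 ^ (1 : ℝ) * (q * (1 + |t|)) ^ δ / δ := by gcongr; norm_num
      _ = _ := by rw [Real.rpow_one]; ring
  have h4 : 1 ≤ ((q : ℝ) * (1 + |t|)) ^ δ := Real.one_le_rpow hX hδ.le
  linarith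

lemma gs_root {q : ℕ} [NeZero q] (χ : DirichletCharacter ℂ q) (hχ : χ.IsPrimitive)
    (h2 : χ ^ 2 = 1) : ‖rootNumber χ‖ = 1 := by
  have hinv : χ⁻¹ = χ := by
    rw [inv_eq_iff_mul_eq_one, ← sq, h2]
  have a := hχ.completedLFunction_one_sub 2
  have b := hχ.completedLFunction_one_sub (-1)
  rw [hinv] at a b
  have hL : LFunction χ 2 ≠ 0 := LFunction_ne_zero_of_one_le_re χ (Or.inr (by norm_num)) (by simp)
  have hΛ : completedLFunction χ 2 ≠ 0 := by
    intro h
    rw [LFunction_eq_completed_div_gammaFactor χ 2 (Or.inl (by norm_num)), h, zero_div] at hL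
    exact hL rfl
  rw [show (1 : ℂ) - 2 = -1 by norm_num] at a
  rw [show (1 : ℂ) - (-1) = 2 by norm_num, a] at b
  have hq : (q : ℂ) ≠ 0 := by exact_mod_cast NeZero.ne q
  have e : (q : ℂ) ^ ((-1 : ℂ) - 1 / 2) * (q : ℂ) ^ ((2 : ℂ) - 1 / 2) = 1 := by
    rw [← cpow_add _ _ hq]; norm_num
  have hW : rootNumber χ ^ 2 = 1 := by
    apply mul_right_cancel₀ hΛ
    linear_combination -b + (-(rootNumber χ ^ 2 * completedLFunction χ 2)) * e
  have := congrArg norm hW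
  rw [norm_pow, norm_one] at this
  exact (pow_eq_one_iff_of_nonneg (norm_nonneg _) two_ne_zero).mp this

lemma gs_gamma_ratio {q : ℕ} [NeZero q] (χ : DirichletCharacter ℂ q) (t : ℝ) (ht : t ≠ 0) :
    gammaFactor χ (1 - t * I) ≠ 0 ∧
    ‖gammaFactor χ (1 - t * I) / gammaFactor χ (t * I)‖ ≤ (1 + |t|) ^ (1 / 2 : ℝ) := by
  have key : ∀ a b : ℝ, 0 ≤ a → 0 ≤ b → a ^ 2 ≤ (1 + |t|) * b ^ 2 →
      a / b ≤ (1 + |t|) ^ (1 / 2 : ℝ) := by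
    intro a b ha hb h
    have ht0 := abs_nonneg t
    rw [← Real.sqrt_eq_rpow]
    apply Real.le_sqrt_of_sq_le
    rw [div_pow]
    exact div_le_of_le_mul₀ (by positivity) (by positivity) h
  rcases χ.even_or_odd with h | h
  · simp only [h.gammaFactor_def]
    refine ⟨Gammaℝ_ne_zero_of_re_pos (by simp), ?_⟩
    rw [norm_div]
    exact key _ _ (norm_nonneg _) (norm_nonneg _) (gs_ratio_even t ht)
  · simp only [h.gammaFactor_def]
    refine ⟨Gammaℝ_ne_zero_of_re_pos (by simp), ?_⟩
    rw [norm_div, show (1 - t * I + 1 : ℂ) = 2 - t * I by ring, add_comm (t * I : ℂ)]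
    exact key _ _ (norm_nonneg _) (norm_nonneg _) (gs_ratio_odd t ht)

lemma gs_FE {q : ℕ} [NeZero q] (χ : DirichletCharacter ℂ q) (hχ : χ.IsPrimitive)
    (h2 : χ ^ 2 = 1) (t : ℝ) (ht : t ≠ 0) :
    ‖χ.LFunction (t * I)‖ ≤
      (q * (1 + |t|)) ^ (1 / 2 : ℝ) * ‖χ.LFunction (1 + (-t : ℝ) * I)‖ := by
  have hinv : χ⁻¹ = χ := by
    rw [inv_eq_iff_mul_eq_one, ← sq, h2]
  have hq : 0 < q := Nat.pos_of_ne_zero (NeZero.ne q)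
  obtain ⟨g0, g1⟩ := gs_gamma_ratio χ t ht
  have a := hχ.completedLFunction_one_sub (1 - t * I)
  rw [hinv, show (1 : ℂ) - (1 - t * I) = t * I by ring] at a
  have b := LFunction_eq_completed_div_gammaFactor χ (1 - t * I)
    (Or.inl (by intro h; have := congrArg re h; simp at this))
  rw [eq_div_iff g0] at b
  rw [show (1 + (-t : ℝ) * I : ℂ) = 1 - t * I by push_cast; ring,
    LFunction_eq_completed_div_gammaFactor χ (t * I) (Or.inl (by simp [ht])), a, ← b]
  have e : (q : ℂ) ^ (1 - t * I - 1 / 2 : ℂ) * rootNumber χ * (LFunction χ (1 - t * I) *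
      gammaFactor χ (1 - t * I)) / gammaFactor χ (t * I) =
      (q : ℂ) ^ (1 - t * I - 1 / 2 : ℂ) * rootNumber χ * LFunction χ (1 - t * I) *
      (gammaFactor χ (1 - t * I) / gammaFactor χ (t * I)) := by ring
  rw [e, norm_mul, norm_mul, norm_mul, gs_root χ hχ h2, norm_natCast_cpow_of_pos hq]
  have e2 : (1 - t * I - 1 / 2 : ℂ).re = 1 / 2 := by simp; norm_num
  rw [e2, Real.mul_rpow (by positivity) (by positivity)]
  calc _ ≤ (q : ℝ) ^ (1 / 2 : ℝ) * 1 * ‖LFunction χ (1 - t * I)‖ * (1 + |t|) ^ (1 / 2 : ℝ) := by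
        gcongr
    _ = _ := by ring

lemma gs_L_zero (δ : ℝ) (hδ : 0 < δ) (hδ1 : δ ≤ 1) : ∃ C : ℝ, 0 < C ∧
    ∀ (q : ℕ) [NeZero q] (χ : DirichletCharacter ℂ q), χ.IsPrimitive → χ ^ 2 = 1 →
      ∀ t : ℝ, t ≠ 0 → ‖χ.LFunction (t * I)‖ ≤ C * (q * (1 + |t|)) ^ (1 / 2 + δ) := by
  have hcont : ContinuousOn (fun t : ℝ ↦ riemannZeta (t * I)) (Set.Icc (-1) 1) := by
    intro t _
    have h1 : ContinuousAt riemannZeta (t * I) :=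
      (differentiableAt_riemannZeta (by
        intro h; have := congrArg re h; simp at this)).continuousAt
    have h3 : ContinuousAt (fun t : ℝ ↦ (t : ℂ) * I) t := by fun_prop
    exact (ContinuousAt.comp (f := fun t : ℝ ↦ (t : ℂ) * I) h1 h3).continuousWithinAt
  obtain ⟨M, hM⟩ := isCompact_Icc.exists_bound_of_continuousOn hcont
  refine ⟨max M 0 + (4 + 2 / δ), by positivity, ?_⟩
  intro q _ χ hχ h2 t ht
  have ht0 := abs_nonneg t
  have hq : 0 < q := Nat.pos_of_ne_zero (NeZero.ne q)
  have hq1 : (1 : ℝ) ≤ q := by exact_mod_cast hq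
  have hX : 1 ≤ (q : ℝ) * (1 + |t|) := by nlinarith
  have h4 : 1 ≤ ((q : ℝ) * (1 + |t|)) ^ (1 / 2 + δ) := Real.one_le_rpow hX (by positivity)
  have h5 : 1 ≤ ((q : ℝ) * (1 + |t|)) ^ δ := Real.one_le_rpow hX (by positivity)
  by_cases hc : q = 1 ∧ |t| ≤ 1
  · obtain ⟨rfl, hc⟩ := hc
    rw [LFunction_modOne_eq]
    have h6 := (hM t (abs_le.mp hc)).trans (le_max_left M 0)
    have h7 : 0 ≤ max M 0 := le_max_right _ _
    have h8 : max M 0 ≤ max M 0 + (4 + 2 / δ) := by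
      have : 0 ≤ 2 / δ := by positivity
      linarith
    calc _ ≤ max M 0 := h6
      _ ≤ (max M 0 + (4 + 2 / δ)) * 1 := by rw [mul_one]; exact h8
      _ ≤ _ := by gcongr
  · have hif : (if q = 1 then 1 / |t| else 0) ≤ (1 : ℝ) := by
      split_ifs with h
      · have : 1 < |t| := by
          by_contra h'; exact hc ⟨h, not_lt.mp h'⟩
        rw [div_le_one (by linarith)]; exact this.le
      · norm_num
    have h6 := gs_L_one χ hχ (-t) (neg_ne_zero.mpr ht) δ hδ hδ1
    rw [abs_neg] at h6
    have h7 : ‖χ.LFunction (1 + (-t : ℝ) * I)‖ ≤ (max M 0 + (4 + 2 / δ)) * (q * (1 + |t|)) ^ δ := by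
      have : 0 ≤ max M 0 := le_max_right _ _
      nlinarith
    refine (gs_FE χ hχ h2 t ht).trans ?_
    rw [Real.rpow_add (by linarith)]
    calc _ ≤ ((q : ℝ) * (1 + |t|)) ^ (1 / 2 : ℝ) * ((max M 0 + (4 + 2 / δ)) * (q * (1 + |t|)) ^ δ) := by
          gcongr
      _ = _ := by ring


lemma gs_two_omega (δ : ℝ) (hδ : 0 < δ) : ∃ C : ℝ, 0 < C ∧
    ∀ n : ℕ, n ≠ 0 → (2 : ℝ) ^ n.primeFactors.card ≤ C * (n : ℝ) ^ δ := by
  set K := ⌈(2 : ℝ) ^ (1 / δ)⌉₊ with hK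
  refine ⟨2 ^ K, by positivity, fun n hn ↦ ?_⟩
  have hstep : ∀ p ∈ n.primeFactors, (2 : ℝ) ≤ (if p < K then 2 else 1) * (p : ℝ) ^ δ := by
    intro p hp
    have hp1 : (1 : ℝ) ≤ p := by exact_mod_cast (Nat.prime_of_mem_primeFactors hp).one_le
    split_ifs with h
    · have := Real.one_le_rpow hp1 hδ.le
      linarith
    · have h1 : (2 : ℝ) ^ (1 / δ) ≤ p := (Nat.le_ceil _).trans (by exact_mod_cast not_lt.mp h)
      have h2 : ((2 : ℝ) ^ (1 / δ)) ^ δ ≤ (p : ℝ) ^ δ := by gcongr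
      rw [← Real.rpow_mul (by norm_num), one_div_mul_cancel hδ.ne', Real.rpow_one] at h2
      linarith
  calc (2 : ℝ) ^ n.primeFactors.card = ∏ p ∈ n.primeFactors, (2 : ℝ) := by simp
    _ ≤ ∏ p ∈ n.primeFactors, ((if p < K then 2 else 1) * (p : ℝ) ^ δ) :=
        Finset.prod_le_prod (fun _ _ ↦ by norm_num) hstep
    _ = (∏ p ∈ n.primeFactors, (if p < K then (2 : ℝ) else 1)) *
          ∏ p ∈ n.primeFactors, (p : ℝ) ^ δ := Finset.prod_mul_distrib
    _ ≤ 2 ^ K * (n : ℝ) ^ δ := by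
        refine mul_le_mul ?_ ?_ (Finset.prod_nonneg fun _ _ ↦ by positivity) (by positivity)
        · rw [Finset.prod_ite, Finset.prod_const, Finset.prod_const_one, mul_one]
          refine pow_le_pow_right₀ (by norm_num) ?_
          calc _ ≤ (Finset.range K).card := Finset.card_le_card fun p hp ↦ by
                simpa using (Finset.mem_filter.mp hp).2
            _ = K := Finset.card_range K
        · rw [Real.finsetProd_rpow _ _ (fun _ _ ↦ by positivity)]
          refine Real.rpow_le_rpow (by positivity) ?_ hδ.le
          have h5 : ∏ p ∈ n.primeFactors, p ≤ n :=
            Nat.le_of_dvd (Nat.pos_of_ne_zero hn) (Nat.prod_primeFactors_dvd n)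
          calc ∏ p ∈ n.primeFactors, (p : ℝ) = ((∏ p ∈ n.primeFactors, p : ℕ) : ℝ) := by
                rw [Nat.cast_prod]
            _ ≤ n := Nat.cast_le.mpr h5

lemma gs_L_imprim {m : ℕ} [NeZero m] (ψ : DirichletCharacter ℂ m) (h2 : ψ ^ 2 = 1)
    (C a : ℝ) (hC : 0 < C) (ha : 0 ≤ a)
    (H : ∀ (q : ℕ) [NeZero q] (χ : DirichletCharacter ℂ q), χ.IsPrimitive → χ ^ 2 = 1 →
      ∀ t : ℝ, t ≠ 0 → ‖χ.LFunction (t * I)‖ ≤ C * (q * (1 + |t|)) ^ a)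
    (t : ℝ) (ht : t ≠ 0) :
    ‖ψ.LFunction (t * I)‖ ≤ C * (m * (1 + |t|)) ^ a * 2 ^ m.primeFactors.card := by
  haveI : NeZero ψ.conductor := ⟨ψ.conductor_ne_zero⟩
  have h1 : ψ.primitiveCharacter ^ 2 = 1 := by
    apply changeLevel_injective ψ.conductor_dvd_level
    rw [map_pow, changeLevel_primitiveCharacter, h2, map_one]
  have e := LFunction_changeLevel ψ.conductor_dvd_level ψ.primitiveCharacter (s := t * I)
    (Or.inr (by intro h; have := congrArg re h; simp at this))
  rw [changeLevel_primitiveCharacter] at e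
  have hle : (ψ.conductor : ℝ) ≤ m := by
    exact_mod_cast Nat.le_of_dvd (Nat.pos_of_ne_zero (NeZero.ne m)) ψ.conductor_dvd_level
  have hb := H ψ.conductor ψ.primitiveCharacter ψ.primitiveCharacter_isPrimitive h1 t ht
  rw [e, norm_mul, norm_prod]
  refine mul_le_mul (hb.trans (by gcongr)) ?_ (Finset.prod_nonneg fun _ _ ↦ norm_nonneg _)
    (by positivity)
  rw [← Finset.prod_const]
  refine Finset.prod_le_prod (fun _ _ ↦ norm_nonneg _) fun p hp ↦ ?_
  refine (norm_sub_le _ _).trans ?_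
  rw [norm_one, norm_mul, norm_natCast_cpow_of_pos (Nat.prime_of_mem_primeFactors hp).pos]
  have := ψ.primitiveCharacter.norm_le_one (p : ZMod ψ.conductor)
  simp
  linarith

lemma gs_f_bound (ε : ℝ) (hε : 0 < ε) : ∃ C : ℝ, 0 < C ∧
    ∀ (q₁ q₂ : ℕ) [NeZero q₁] [NeZero q₂] (χ₁ : DirichletCharacter ℂ q₁)
      (χ₂ : DirichletCharacter ℂ q₂), χ₁.IsPrimitive → χ₁ ^ 2 = 1 → χ₂.IsPrimitive → χ₂ ^ 2 = 1 →
      ∀ t : ℝ, t ≠ 0 → ‖goldfeldF χ₁ χ₂ (t * I)‖ ≤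
        C * ((q₁ * q₂ : ℕ) : ℝ) ^ (1 + ε) * (1 + |t|) ^ 3 := by
  set δ := min (ε / 3) (1 / 4) with hδd
  have hδ : 0 < δ := by positivity
  have hδ1 : δ ≤ 1 / 4 := min_le_right _ _
  have hδε : δ ≤ ε / 3 := min_le_left _ _
  obtain ⟨C, hC, H⟩ := gs_L_zero δ hδ (by linarith)
  obtain ⟨D, hD, HD⟩ := gs_two_omega δ hδ
  refine ⟨C ^ 4 * D, by positivity, ?_⟩
  intro q₁ q₂ _ _ χ₁ χ₂ p1 s1 p2 s2 t ht
  have z := H 1 (1 : DirichletCharacter ℂ 1) (by rw [isPrimitive_def, conductor_one]) (one_pow 2) t ht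
  rw [LFunction_modOne_eq, Nat.cast_one, one_mul] at z
  have l1 := H q₁ χ₁ p1 s1 t ht
  have l2 := H q₂ χ₂ p2 s2 t ht
  have l3 := gs_L_imprim (changeLevel (dvd_mul_right q₁ q₂) χ₁ * changeLevel (dvd_mul_left q₂ q₁) χ₂)
    (by rw [mul_pow, ← map_pow, ← map_pow, s1, s2, map_one, map_one, one_mul]) C (1 / 2 + δ) hC
    (by positivity) H t ht
  have hQ0 : q₁ * q₂ ≠ 0 := NeZero.ne _
  have hQ1 : (1 : ℝ) ≤ ((q₁ * q₂ : ℕ) : ℝ) := by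
    exact_mod_cast Nat.one_le_iff_ne_zero.mpr hQ0
  have l4 := HD (q₁ * q₂) hQ0
  have hT : 1 ≤ 1 + |t| := by have := abs_nonneg t; linarith
  set T := 1 + |t|
  have hT0 : 0 ≤ T := by linarith
  have hQe : ((q₁ * q₂ : ℕ) : ℝ) = q₁ * q₂ := by push_cast; rfl
  rw [goldfeldF, norm_mul, norm_mul, norm_mul]
  calc _ ≤ C * T ^ (1 / 2 + δ) * (C * (q₁ * T) ^ (1 / 2 + δ)) * (C * (q₂ * T) ^ (1 / 2 + δ)) *
        (C * (((q₁ * q₂ : ℕ) : ℝ) * T) ^ (1 / 2 + δ) * (D * ((q₁ * q₂ : ℕ) : ℝ) ^ δ)) := by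
        gcongr
        exact l3.trans (by gcongr)
    _ = C ^ 4 * D * (((q₁ * q₂ : ℕ) : ℝ) ^ (1 / 2 + δ) * ((q₁ * q₂ : ℕ) : ℝ) ^ (1 / 2 + δ) *
          ((q₁ * q₂ : ℕ) : ℝ) ^ δ) * (T ^ (1 / 2 + δ)) ^ 4 := by
        rw [Real.mul_rpow (by positivity) hT0, Real.mul_rpow (by positivity) hT0,
          Real.mul_rpow (by positivity) hT0, hQe,
          Real.mul_rpow (x := (q₁ : ℝ)) (z := 1 / 2 + δ) (by positivity) (by positivity)]
        ring
    _ = C ^ 4 * D * ((q₁ * q₂ : ℕ) : ℝ) ^ (1 / 2 + δ + (1 / 2 + δ) + δ) *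
          T ^ ((1 / 2 + δ) * (4 : ℕ)) := by
        rw [Real.rpow_add (by linarith) (1 / 2 + δ + (1 / 2 + δ)) δ,
          Real.rpow_add (by linarith) (1 / 2 + δ) (1 / 2 + δ), Real.rpow_mul_natCast hT0]
    _ ≤ C ^ 4 * D * ((q₁ * q₂ : ℕ) : ℝ) ^ (1 + ε) * T ^ ((3 : ℕ) : ℝ) := by
        refine mul_le_mul (mul_le_mul_of_nonneg_left ?_ (by positivity)) ?_ (by positivity)
          (by positivity)
        · exact Real.rpow_le_rpow_of_exponent_le hQ1 (by linarith)
        · exact Real.rpow_le_rpow_of_exponent_le hT (by push_cast; linarith)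
    _ = _ := by rw [Real.rpow_natCast]

lemma gs_factor (b t c : ℝ) (hc : 0 ≤ c) (hc1 : c ≤ 1) (hcb : c ≤ |b|) :
    c * (1 + |t|) / 2 ≤ ‖(b : ℂ) + t * I‖ := by
  have h1 := abs_re_le_norm ((b : ℂ) + t * I)
  have h2 := abs_im_le_norm ((b : ℂ) + t * I)
  simp at h1 h2
  have := abs_nonneg t
  nlinarith

theorem goldfeld_shifted_integral_bound (ε : ℝ) (hε : 0 < ε) :
    ∃ C : ℝ, 0 < C ∧
      ∀ (q₁ q₂ : ℕ) (hq₁ : 1 < q₁) (hq₂ : 1 < q₂),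
        haveI : NeZero q₁ := ⟨by omega⟩
        haveI : NeZero q₂ := ⟨by omega⟩
        ∀ (χ₁ : DirichletCharacter ℂ q₁) (χ₂ : DirichletCharacter ℂ q₂),
          χ₁.IsPrimitive → χ₁ ≠ 1 → χ₁ ^ 2 = 1 →
          χ₂.IsPrimitive → χ₂ ≠ 1 → χ₂ ^ 2 = 1 →
            ∀ w : ℝ, 0 < w → w < 1 → ∀ x : ℝ, 1 ≤ x →
              ‖(1 / (2 * (Real.pi : ℂ))) *
                  ∫ t : ℝ, goldfeldF χ₁ χ₂ (t * I) * (x : ℂ) ^ (-(w : ℂ) + t * I) /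
                    ((-(w : ℂ) + t * I) * (1 - (w : ℂ) + t * I) * (2 - (w : ℂ) + t * I) *
                      (3 - (w : ℂ) + t * I) * (4 - (w : ℂ) + t * I))‖ ≤
                C * ((q₁ * q₂ : ℕ) : ℝ) ^ (1 + ε) * x ^ (-w) / (w * (1 - w)) := by
  obtain ⟨K, hK, H⟩ := gs_f_bound ε hε
  have hJint : Integrable (fun t : ℝ ↦ (1 + ‖t‖) ^ (-2 : ℝ)) :=
    integrable_one_add_norm (by simp)
  set J := ∫ t : ℝ, (1 + ‖t‖) ^ (-2 : ℝ) with hJ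
  have hJ0 : 0 ≤ J := integral_nonneg fun t ↦ by positivity
  refine ⟨32 * K * (J + 1), by positivity, ?_⟩
  intro q₁ q₂ hq₁ hq₂ χ₁ χ₂ p1 _ s1 p2 _ s2 w hw hw1 x hx
  have : NeZero q₁ := ⟨by omega⟩
  have : NeZero q₂ := ⟨by omega⟩
  have hx0 : 0 < x := by linarith
  have hw' : 0 < 1 - w := by linarith
  set Q := ((q₁ * q₂ : ℕ) : ℝ) ^ (1 + ε) with hQ
  have hQ0 : 0 ≤ Q := by positivity
  set A := K * Q * x ^ (-w) * 32 / (w * (1 - w)) with hA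
  have hA0 : 0 ≤ A := by positivity
  have hb : ∀ᵐ t : ℝ, ‖goldfeldF χ₁ χ₂ (t * I) * (x : ℂ) ^ (-(w : ℂ) + t * I) /
                    ((-(w : ℂ) + t * I) * (1 - (w : ℂ) + t * I) * (2 - (w : ℂ) + t * I) *
                      (3 - (w : ℂ) + t * I) * (4 - (w : ℂ) + t * I))‖ ≤
      A * (1 + ‖t‖) ^ (-2 : ℝ) := by
    filter_upwards [Measure.ae_ne volume (0 : ℝ)] with t ht
    have hF := H q₁ q₂ χ₁ χ₂ p1 s1 p2 s2 t ht
    have d0 := gs_factor (-w) t w hw.le hw1.le (by rw [abs_neg]; exact le_abs_self w)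
    have d1 := gs_factor (1 - w) t (1 - w) hw'.le (by linarith) (le_abs_self _)
    have d2 := gs_factor (2 - w) t 1 zero_le_one le_rfl (le_trans (by linarith) (le_abs_self _))
    have d3 := gs_factor (3 - w) t 1 zero_le_one le_rfl (le_trans (by linarith) (le_abs_self _))
    have d4 := gs_factor (4 - w) t 1 zero_le_one le_rfl (le_trans (by linarith) (le_abs_self _))
    push_cast at d0 d1 d2 d3 d4
    have hT : 0 < 1 + |t| := by positivity
    rw [Real.norm_eq_abs, norm_div, norm_mul, norm_mul, norm_mul, norm_mul, norm_mul,
      norm_cpow_eq_rpow_re_of_pos hx0]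
    have hre : (-(w : ℂ) + t * I).re = -w := by simp
    rw [hre]
    calc _ ≤ K * Q * (1 + |t|) ^ 3 * x ^ (-w) / ((w * (1 + |t|) / 2) * ((1 - w) * (1 + |t|) / 2) *
          (1 * (1 + |t|) / 2) * (1 * (1 + |t|) / 2) * (1 * (1 + |t|) / 2)) := by
          gcongr
      _ = A * (1 + |t|) ^ (-2 : ℝ) := by
          rw [Real.rpow_neg hT.le, hA]
          rw [show ((2 : ℝ)) = ((2 : ℕ) : ℝ) by norm_num, Real.rpow_natCast]
          field_simp
          norm_num
  have hI := norm_integral_le_of_norm_le (hJint.const_mul A) hb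
  rw [integral_const_mul, ← hJ] at hI
  rw [norm_mul]
  have hp : ‖(1 / (2 * (Real.pi : ℂ)))‖ ≤ 1 := by
    rw [norm_div, norm_mul, norm_real, Real.norm_of_nonneg Real.pi_pos.le]
    simp only [norm_one, RCLike.norm_ofNat]
    rw [div_le_one (by positivity)]
    have := Real.pi_gt_three
    linarith
  calc _ ≤ 1 * (A * J) := by gcongr
    _ ≤ A * (J + 1) := by nlinarith
    _ = _ := by rw [hA]; ring
end

section
/- For every ε with 0 < ε < 1/3 there exist a constant C(ε) > 0, an integer q₁ > 1, and a primitive quadratic Dirichlet character χ₁ mod q₁, such that for every integer q₂ > 1 and every primitive quadratic Dirichlet character χ₂ mod q₂, the residue λ = L(1,χ₁)·L(1,χ₂)·L(1,χ₁χ₂) satisfies λ > C(ε)·q₂^(−2ε). -/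
open DirichletCharacter

open Complex Filter Topology Asymptotics MeasureTheory in
lemma gl_sum_range_mul {q : ℕ} [NeZero q] (χ : DirichletCharacter ℂ q) (hχ : χ ≠ 1) (k : ℕ) :
    ∑ i ∈ Finset.range (q * k), χ (i : ZMod q) = 0 := by
  induction k with
  | zero => simp
  | succ k ih =>
    rw [mul_add, mul_one, Finset.sum_range_add, ih, zero_add]
    have h1 : ∑ x ∈ Finset.range q, χ (((q * k + x : ℕ)) : ZMod q) =
        ∑ x ∈ Finset.range q, χ (x : ZMod q) := by
      refine Finset.sum_congr rfl fun x _ => ?_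
      simp
    rw [h1, ← MulChar.sum_eq_zero_of_ne_one hχ]
    refine Finset.sum_bij' (fun x _ => (x : ZMod q)) (fun a _ => a.val) ?_ ?_ ?_ ?_ ?_
    · simp
    · intro a _; simpa using ZMod.val_lt a
    · intro a ha; exact ZMod.val_cast_of_lt (Finset.mem_range.mp ha)
    · intro a _; simp
    · intros; rfl

lemma gl_norm_sum_range {q : ℕ} [NeZero q] (χ : DirichletCharacter ℂ q) (hχ : χ ≠ 1) (n : ℕ) :
    ‖∑ i ∈ Finset.range n, χ (i : ZMod q)‖ ≤ q := by
  have hq : 0 < q := Nat.pos_of_ne_zero (NeZero.ne q)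
  rw [← Nat.div_add_mod n q, Finset.sum_range_add, gl_sum_range_mul χ hχ, zero_add]
  refine (norm_sum_le _ _).trans ?_
  refine (Finset.sum_le_sum (fun i _ => χ.norm_le_one _)).trans ?_
  simpa using (Nat.mod_lt n hq).le

lemma gl_norm_sum_Icc {q : ℕ} [NeZero q] (χ : DirichletCharacter ℂ q) (hχ : χ ≠ 1) (n : ℕ) :
    ‖∑ i ∈ Finset.Icc 1 n, χ (i : ZMod q)‖ ≤ q := by
  have hq1 : q ≠ 1 := by
    rintro rfl; exact hχ (DirichletCharacter.level_one χ)
  have h := gl_norm_sum_range χ hχ (n + 1)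
  rw [Finset.range_eq_Ico, Finset.sum_eq_sum_Ico_succ_bot (by omega)] at h
  simp only [Nat.cast_zero, χ.map_zero' hq1, zero_add] at h
  exact h

open Complex Filter Topology Asymptotics MeasureTheory in
lemma gl_LFunction_eq {q : ℕ} [NeZero q] (χ : DirichletCharacter ℂ q) (hχ : χ ≠ 1) {s : ℂ}
    (hs : 0 < s.re) : χ.LFunction s =
      s * ∫ t in Set.Ioi (1 : ℝ), (∑ k ∈ Finset.Icc 1 ⌊t⌋₊, χ (k : ZMod q)) * (t : ℂ) ^ (-(s + 1)) := by
  set f : ℝ → ℂ := fun t => ∑ k ∈ Finset.Icc 1 ⌊t⌋₊, χ (k : ZMod q) with hf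
  set g : ℝ → ℂ := (Set.Ioi 1).indicator f with hg
  have key : ∀ s : ℂ, ∫ t in Set.Ioi (1 : ℝ), f t * (t : ℂ) ^ (-(s + 1)) = mellin g (-s) := by
    intro s
    rw [mellin]
    have : ∀ t : ℝ, (t : ℂ) ^ (-s - 1) • g t =
        (Set.Ioi 1).indicator (fun t => f t * (t : ℂ) ^ (-(s + 1))) t := by
      intro t
      by_cases ht : t ∈ Set.Ioi (1 : ℝ)
      · simp only [hg, Set.indicator_of_mem ht, smul_eq_mul]
        rw [mul_comm]; congr 2; ring
      · simp only [hg, Set.indicator_of_notMem ht, smul_zero]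
    simp_rw [this]
    rw [setIntegral_indicator measurableSet_Ioi]
    congr 2
    ext x; simp
  rw [key s]
  have hfm : Measurable f := by
    have : f = (fun n : ℕ => ∑ k ∈ Finset.Icc 1 n, χ (k : ZMod q)) ∘ (fun t : ℝ => ⌊t⌋₊) := rfl
    rw [this]
    exact (measurable_from_nat).comp Nat.measurable_floor
  have hgm : Measurable g := hfm.indicator measurableSet_Ioi
  have hgb : ∀ t, ‖g t‖ ≤ q := fun t => by
    by_cases ht : t ∈ Set.Ioi (1 : ℝ)
    · simp only [hg, Set.indicator_of_mem ht]; exact gl_norm_sum_Icc χ hχ _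
    · simp [hg, Set.indicator_of_notMem ht]
  have hdiff : ∀ s : ℂ, 0 < s.re → DifferentiableAt ℂ (mellin g) (-s) := by
    intro s hs
    refine mellin_differentiableAt_of_isBigO_rpow (a := 0) (b := -s.re - 1) ?_ ?_ ?_ ?_ ?_
    · have : LocallyIntegrable (fun _ : ℝ => (q : ℝ)) := locallyIntegrable_const _
      refine (this.mono hgm.aestronglyMeasurable ?_).locallyIntegrableOn _
      filter_upwards with t
      simpa using hgb t
    · simp only [neg_zero, Real.rpow_zero]
      exact IsBigO.of_bound q (by filter_upwards with t; simpa using hgb t)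
    · simpa using hs
    · have : g =ᶠ[𝓝[>] 0] fun _ => 0 := by
        have h1 : ∀ᶠ t : ℝ in 𝓝[>] 0, t < 1 := nhdsWithin_le_nhds (eventually_lt_nhds one_pos)
        filter_upwards [h1] with t ht
        exact Set.indicator_of_notMem (by simp [ht.le]) _
      exact this.trans_isBigO (isBigO_zero _ _)
    · simp
  have hU : IsOpen {s : ℂ | 0 < s.re} := isOpen_lt continuous_const continuous_re
  have hA1 : AnalyticOnNhd ℂ χ.LFunction {s : ℂ | 0 < s.re} :=
    (differentiable_LFunction hχ).differentiableOn.analyticOnNhd hU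
  have hA2 : AnalyticOnNhd ℂ (fun s => s * mellin g (-s)) {s : ℂ | 0 < s.re} := by
    refine DifferentiableOn.analyticOnNhd (fun z hz => ?_) hU
    refine (differentiableAt_id.mul ?_).differentiableWithinAt
    exact (hdiff z hz).comp z differentiable_neg.differentiableAt
  have hconv : IsPreconnected {s : ℂ | 0 < s.re} :=
    (convex_halfSpace_re_gt 0).isPreconnected
  refine hA1.eqOn_of_preconnected_of_eventuallyEq hA2 hconv (z₀ := 2) (by simp) ?_ hs
  have h2 : ∀ᶠ z : ℂ in 𝓝 2, 1 < z.re :=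
    (isOpen_lt continuous_const continuous_re).mem_nhds (by simp)
  filter_upwards [h2] with z hz
  rw [LFunction_eq_LSeries χ hz, ← key z]
  refine LSeries_eq_mul_integral _ le_rfl (by linarith) (χ.LSeriesSummable_of_one_lt_re hz) ?_
  simp only [Real.rpow_zero]
  exact IsBigO.of_bound q (by filter_upwards with t; simpa using gl_norm_sum_Icc χ hχ t)

open Complex Filter Topology Asymptotics MeasureTheory in
lemma gl_LFunction_bound {q : ℕ} [NeZero q] (χ : DirichletCharacter ℂ q) (hχ : χ ≠ 1) {s : ℂ}
    (hs : 2 / 3 ≤ s.re) (hs2 : ‖s‖ ≤ 4) : ‖χ.LFunction s‖ ≤ 6 * q := by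
  have hs0 : 0 < s.re := by linarith
  rw [gl_LFunction_eq χ hχ hs0, norm_mul]
  have h1 : ‖∫ t in Set.Ioi (1 : ℝ), (∑ k ∈ Finset.Icc 1 ⌊t⌋₊, χ (k : ZMod q)) *
      (t : ℂ) ^ (-(s + 1))‖ ≤ ∫ t in Set.Ioi (1 : ℝ), q * t ^ (-(s.re + 1)) := by
    refine norm_integral_le_of_norm_le ?_ ?_
    · exact (integrableOn_Ioi_rpow_of_lt (by linarith) one_pos).const_mul _
    · filter_upwards [ae_restrict_mem measurableSet_Ioi] with t ht
      have ht0 : 0 < t := lt_trans one_pos ht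
      rw [norm_mul, norm_cpow_eq_rpow_re_of_pos ht0]
      simp only [neg_re, add_re, one_re]
      gcongr
      exact gl_norm_sum_Icc χ hχ _
  rw [integral_const_mul, integral_Ioi_rpow_of_lt (by linarith) one_pos] at h1
  have h2 : (q:ℝ) * (-(1:ℝ) ^ (-(s.re + 1) + 1) / (-(s.re + 1) + 1)) = q / s.re := by
    rw [Real.one_rpow]; field_simp; ring_nf; field_simp
  rw [h2] at h1
  have h3 : (q:ℝ) / s.re ≤ q / (2/3) := by gcongr
  calc _ ≤ 4 * ((q:ℝ) / (2/3)) := by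
        gcongr
        exact h1.trans h3
    _ = 6 * q := by ring

lemma gl_quad_real {q : ℕ} (χ : DirichletCharacter ℂ q) (hχ2 : χ ^ 2 = 1) (a : ZMod q) :
    χ a = ((χ a).re : ℂ) := by
  have h : χ a = 0 ∨ χ a = 1 ∨ χ a = -1 :=
    MulChar.isQuadratic_iff_sq_eq_one.mpr hχ2 a
  rcases h with h | h | h <;> simp [h]

open Complex Filter Topology Asymptotics MeasureTheory in
lemma gl_LFunction_real {q : ℕ} [NeZero q] (χ : DirichletCharacter ℂ q) (hχ : χ ≠ 1)
    (hχ2 : χ ^ 2 = 1) {x : ℝ} (hx : 0 < x) : ((χ.LFunction x).re : ℂ) = χ.LFunction x := by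
  have h : χ.LFunction x = ((x * ∫ t in Set.Ioi (1 : ℝ),
      (∑ k ∈ Finset.Icc 1 ⌊t⌋₊, (χ (k : ZMod q)).re) * t ^ (-(x + 1)) : ℝ) : ℂ) := by
    rw [gl_LFunction_eq χ hχ (by simpa using hx), ofReal_mul, ← integral_complex_ofReal]
    congr 1
    refine setIntegral_congr_fun measurableSet_Ioi fun t ht => ?_
    have ht0 : 0 < t := lt_trans one_pos ht
    push_cast
    rw [ofReal_cpow ht0.le]
    congr 1
    · exact Finset.sum_congr rfl fun k _ => gl_quad_real χ hχ2 _
    · push_cast; rfl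
  rw [h, ofReal_re]

/-- The product character modulo `q₁ q₂`. -/
noncomputable abbrev glProd {q₁ q₂ : ℕ} (χ₁ : DirichletCharacter ℂ q₁) (χ₂ : DirichletCharacter ℂ q₂) :
    DirichletCharacter ℂ (q₁ * q₂) :=
  changeLevel (dvd_mul_right q₁ q₂) χ₁ * changeLevel (dvd_mul_left q₂ q₁) χ₂

lemma glProd_apply {q₁ q₂ : ℕ} (χ₁ : DirichletCharacter ℂ q₁) (χ₂ : DirichletCharacter ℂ q₂)
    (n : ℕ) : glProd χ₁ χ₂ (n : ZMod (q₁ * q₂)) = χ₁ (n : ZMod q₁) * χ₂ (n : ZMod q₂) := by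
  by_cases h : IsCoprime (n : ℤ) ((q₁ * q₂ : ℕ) : ℤ)
  · have h1 := changeLevel_eq_cast_of_dvd' χ₁ (dvd_mul_right q₁ q₂) h
    have h2 := changeLevel_eq_cast_of_dvd' χ₂ (dvd_mul_left q₂ q₁) h
    simp only [Int.cast_natCast] at h1 h2
    rw [MulChar.mul_apply, h1, h2]
  · have h0 := (apply_eq_zero_iff (glProd χ₁ χ₂) (n : ℤ)).mpr h
    simp only [Int.cast_natCast] at h0
    rw [h0]
    push_cast at h
    rw [IsCoprime.mul_right_iff, not_and_or] at h
    rcases h with h | h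
    · have := (apply_eq_zero_iff χ₁ (n : ℤ)).mpr h
      simp only [Int.cast_natCast] at this
      rw [this, zero_mul]
    · have := (apply_eq_zero_iff χ₂ (n : ℤ)).mpr h
      simp only [Int.cast_natCast] at this
      rw [this, mul_zero]

lemma glProd_sq {q₁ q₂ : ℕ} (χ₁ : DirichletCharacter ℂ q₁) (χ₂ : DirichletCharacter ℂ q₂)
    (h1 : χ₁ ^ 2 = 1) (h2 : χ₂ ^ 2 = 1) : glProd χ₁ χ₂ ^ 2 = 1 := by
  rw [glProd, mul_pow, ← map_pow, ← map_pow, h1, h2, map_one, map_one, one_mul]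

/-- `χ` as an arithmetic function. -/
noncomputable abbrev glA {q : ℕ} (χ : DirichletCharacter ℂ q) : ArithmeticFunction ℂ :=
  toArithmeticFunction (χ ·)

lemma glA_apply {q : ℕ} (χ : DirichletCharacter ℂ q) {n : ℕ} (hn : n ≠ 0) :
    glA χ n = χ (n : ZMod q) := (χ.apply_eq_toArithmeticFunction_apply hn).symm

lemma gl_twist {q₁ q₂ q₃ : ℕ} (χ₁ : DirichletCharacter ℂ q₁) (χ₂ : DirichletCharacter ℂ q₂)
    (χ₃ : DirichletCharacter ℂ q₃) 
    (h : ∀ n : ℕ, χ₃ (n : ZMod q₃) = χ₁ (n : ZMod q₁) * χ₂ (n : ZMod q₂)) {n : ℕ} (hn : n ≠ 0) :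
    (glA χ₂ * glA χ₃) n = χ₂ (n : ZMod q₂) * zetaMul χ₁ n := by
  rw [zetaMul, ArithmeticFunction.mul_apply, ArithmeticFunction.mul_apply, Finset.mul_sum]
  refine Finset.sum_congr rfl fun x hx => ?_
  obtain ⟨hx1, -⟩ := Nat.mem_divisorsAntidiagonal.mp hx
  have h1 : x.1 ≠ 0 := by rintro h; simp [h] at hx1; exact hn hx1.symm
  have h2 : x.2 ≠ 0 := by rintro h; simp [h] at hx1; exact hn hx1.symm
  have := glA_apply χ₁ h2
  simp only [glA] at this
  rw [glA_apply _ h1, glA_apply _ h2, h, this, ArithmeticFunction.natCoe_apply,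
    ArithmeticFunction.zeta_apply_ne h1, ← hx1]
  push_cast
  rw [map_mul]; ring

open scoped ComplexOrder in
lemma gl_mul_pp_nonneg (f g : ArithmeticFunction ℂ) {p : ℕ} (hp : p.Prime)
    (hf : ∀ i, 0 ≤ f (p ^ i)) (hg : ∀ i, 0 ≤ g (p ^ i)) (k : ℕ) : 0 ≤ (f * g) (p ^ k) := by
  rw [ArithmeticFunction.mul_apply]
  refine Finset.sum_nonneg fun x hx => ?_
  obtain ⟨hx1, -⟩ := Nat.mem_divisorsAntidiagonal.mp hx
  obtain ⟨i, -, hi⟩ := (Nat.dvd_prime_pow hp).mp ⟨_, hx1.symm⟩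
  obtain ⟨j, -, hj⟩ := (Nat.dvd_prime_pow hp).mp ⟨x.1, by rw [mul_comm]; exact hx1.symm⟩
  rw [hi, hj]
  exact mul_nonneg (hf i) (hg j)

lemma gl_zetaMul_neg_one_odd {q : ℕ} (χ : DirichletCharacter ℂ q) {p : ℕ} (hp : p.Prime)
    (h : χ (p : ZMod q) = -1) {k : ℕ} (hk : Odd k) : zetaMul χ (p ^ k) = 0 := by
  rw [zetaMul, ArithmeticFunction.coe_zeta_mul_apply, Nat.sum_divisors_prime_pow hp]
  have : ∀ i ∈ Finset.range (k + 1), glA χ (p ^ i) = (-1) ^ i := by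
    intro i _
    rw [glA_apply _ (pow_ne_zero _ hp.ne_zero)]
    push_cast
    rw [map_pow, h]
  rw [Finset.sum_congr rfl this, neg_one_geom_sum, if_pos (by grind)]

/-- The four-fold convolution. -/
noncomputable def glF {q₁ q₂ : ℕ} (χ₁ : DirichletCharacter ℂ q₁) (χ₂ : DirichletCharacter ℂ q₂) :
    ArithmeticFunction ℂ := zetaMul χ₁ * (glA χ₂ * glA (glProd χ₁ χ₂))

lemma glF_mult {q₁ q₂ : ℕ} (χ₁ : DirichletCharacter ℂ q₁) (χ₂ : DirichletCharacter ℂ q₂) :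
    (glF χ₁ χ₂).IsMultiplicative :=
  χ₁.isMultiplicative_zetaMul.mul ((isMultiplicative_toArithmeticFunction χ₂).mul
    (isMultiplicative_toArithmeticFunction _))

open scoped ComplexOrder in
lemma glF_nonneg {q₁ q₂ : ℕ} (χ₁ : DirichletCharacter ℂ q₁) (χ₂ : DirichletCharacter ℂ q₂)
    (h1 : χ₁ ^ 2 = 1) (h2 : χ₂ ^ 2 = 1) (n : ℕ) : 0 ≤ glF χ₁ χ₂ n := by
  rcases eq_or_ne n 0 with rfl | hn
  · simp
  rw [(glF_mult χ₁ χ₂).multiplicative_factorization _ hn]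
  refine Finset.prod_nonneg fun p hp ↦ ?_
  have hp := Nat.prime_of_mem_primeFactors hp
  have key : (∀ i, 0 ≤ (χ₁ (p : ZMod q₁)) ^ i) → 0 ≤ glF χ₁ χ₂ (p ^ (n.factorization p)) := by
    intro hpos
    have : glF χ₁ χ₂ = zetaMul χ₂ * (glA χ₁ * glA (glProd χ₁ χ₂)) := by
      simp only [glF, zetaMul]; ring
    rw [this]
    refine gl_mul_pp_nonneg _ _ hp (fun i => zetaMul_nonneg h2 _) (fun i => ?_) _
    rw [gl_twist χ₂ χ₁ _ (fun n => by rw [glProd_apply, mul_comm]) (pow_ne_zero _ hp.ne_zero)]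
    push_cast
    rw [map_pow]
    exact mul_nonneg (hpos i) (zetaMul_nonneg h2 _)
  rcases MulChar.isQuadratic_iff_sq_eq_one.mpr h1 p with h | h | h
  · exact key fun i => by rw [h]; exact pow_nonneg le_rfl i
  · exact key fun i => by rw [h]; simp
  · refine gl_mul_pp_nonneg _ _ hp (fun i => zetaMul_nonneg h1 _) (fun i => ?_) _
    rw [gl_twist χ₁ χ₂ _ (fun n => by rw [glProd_apply]) (pow_ne_zero _ hp.ne_zero)]
    rcases Nat.even_or_odd i with hi | hi
    · refine mul_nonneg ?_ (zetaMul_nonneg h1 _)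
      push_cast
      rw [map_pow]
      obtain ⟨j, rfl⟩ := hi
      rcases MulChar.isQuadratic_iff_sq_eq_one.mpr h2 p with h | h | h
      · rw [h]; exact pow_nonneg le_rfl _
      · rw [h]; simp
      · rw [h, Even.neg_one_pow ⟨j, rfl⟩]; exact zero_le_one
    · rw [gl_zetaMul_neg_one_odd χ₁ hp h hi, mul_zero]

lemma glA_summable {q : ℕ} [NeZero q] (χ : DirichletCharacter ℂ q) {s : ℂ} (hs : 1 < s.re) :
    LSeriesSummable (glA χ) s :=
  (LSeriesSummable_congr _ fun h ↦ (χ.apply_eq_toArithmeticFunction_apply h).symm).mpr <|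
      ZMod.LSeriesSummable_of_one_lt_re χ hs

lemma glF_summable {q₁ q₂ : ℕ} [NeZero q₁] [NeZero q₂] (χ₁ : DirichletCharacter ℂ q₁)
    (χ₂ : DirichletCharacter ℂ q₂) {s : ℂ} (hs : 1 < s.re) :
    LSeriesSummable (glF χ₁ χ₂) s :=
  ArithmeticFunction.LSeriesSummable_mul (χ₁.LSeriesSummable_zetaMul hs)
    (ArithmeticFunction.LSeriesSummable_mul (glA_summable _ hs) (glA_summable _ hs))

lemma glA_LSeries {q : ℕ} [NeZero q] (χ : DirichletCharacter ℂ q) {s : ℂ} (hs : 1 < s.re) :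
    LSeries (glA χ) s = χ.LFunction s := by
  rw [χ.LFunction_eq_LSeries hs]
  exact (LSeries_congr χ.apply_eq_toArithmeticFunction_apply s).symm

lemma glF_LSeries {q₁ q₂ : ℕ} [NeZero q₁] [NeZero q₂] (χ₁ : DirichletCharacter ℂ q₁)
    (χ₂ : DirichletCharacter ℂ q₂) {s : ℂ} (hs : 1 < s.re) :
    LSeries (glF χ₁ χ₂) s = riemannZeta s * χ₁.LFunction s * (χ₂.LFunction s *
      (glProd χ₁ χ₂).LFunction s) := by
  have e0 : LSeries (fun n => ((ArithmeticFunction.zeta : ArithmeticFunction ℂ) n)) s =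
      riemannZeta s := by
    simp_rw [← ArithmeticFunction.LSeries_zeta_eq_riemannZeta hs,
      ← ArithmeticFunction.natCoe_apply]
  have e1 : LSeries (fun n => zetaMul χ₁ n) s = riemannZeta s * χ₁.LFunction s := by
    rw [← e0, ← glA_LSeries χ₁ hs]
    exact ArithmeticFunction.LSeries_mul' (ArithmeticFunction.LSeriesSummable_zeta_iff.mpr hs)
      (glA_summable χ₁ hs)
  have e2 : LSeries (fun n => (glA χ₂ * glA (glProd χ₁ χ₂)) n) s = χ₂.LFunction s *
      (glProd χ₁ χ₂).LFunction s := by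
    rw [← glA_LSeries χ₂ hs, ← glA_LSeries (glProd χ₁ χ₂) hs]
    exact ArithmeticFunction.LSeries_mul' (glA_summable χ₂ hs) (glA_summable (glProd χ₁ χ₂) hs)
  rw [← e1, ← e2]
  exact ArithmeticFunction.LSeries_mul' (χ₁.LSeriesSummable_zetaMul hs)
    (ArithmeticFunction.LSeriesSummable_mul (glA_summable _ hs) (glA_summable _ hs))

open LSeries in
lemma glF_abscissa {q₁ q₂ : ℕ} [NeZero q₁] [NeZero q₂] (χ₁ : DirichletCharacter ℂ q₁)
    (χ₂ : DirichletCharacter ℂ q₂) : abscissaOfAbsConv (glF χ₁ χ₂) ≤ (1 : ℝ) := by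
  refine abscissaOfAbsConv_le_of_forall_lt_LSeriesSummable fun y hy => ?_
  exact glF_summable _ _ (by simpa using hy)

open scoped ComplexOrder in
lemma glF_LSeries_two {q₁ q₂ : ℕ} [NeZero q₁] [NeZero q₂] (χ₁ : DirichletCharacter ℂ q₁)
    (χ₂ : DirichletCharacter ℂ q₂) (h1 : χ₁ ^ 2 = 1) (h2 : χ₂ ^ 2 = 1) :
    1 ≤ LSeries (glF χ₁ χ₂) 2 := by
  have hs := glF_summable χ₁ χ₂ (s := 2) (by simp)
  have := hs.le_tsum 1 (fun n _ => by
    have := LSeries.term_nonneg (glF_nonneg χ₁ χ₂ h1 h2 n) 2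
    simpa using this)
  rw [LSeries]
  simpa [LSeries.term_def, (glF_mult χ₁ χ₂).map_one] using this

lemma gl_taylor {G : ℂ → ℂ} (hG : Differentiable ℂ G) {lam : ℝ} {b : ℕ → ℝ} (hb : ∀ m, 0 ≤ b m)
    (hb0 : 1 ≤ b 0) {Q : ℝ} (hQ : ∀ z ∈ Metric.sphere (2 : ℂ) (4 / 3), ‖G z‖ ≤ Q)
    (hd : ∀ m, iteratedDeriv m G 2 = (-1) ^ m * (m.factorial : ℂ) * ((b m - lam : ℝ) : ℂ))
    {β : ℝ} (hβ : 7 / 8 ≤ β) (hβ1 : β < 1) {M : ℕ} (hM : 1 ≤ M) :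
    1 - lam * (((2 - β) ^ M - 1) / (1 - β)) - 32 / 5 * Q * (27 / 32) ^ M ≤ (G β).re := by
  set t : ℕ → ℝ := fun m => (b m - lam) * (2 - β) ^ m with ht
  have hQ0 : 0 ≤ Q := (norm_nonneg _).trans (hQ ((2 + 4 / 3 : ℝ) : ℂ) (by
    rw [mem_sphere_iff_norm]; push_cast; rw [add_sub_cancel_left]; norm_num))
  have hsum : HasSum t (G β).re := by
    have h := Complex.hasSum_taylorSeries_of_entire hG 2 (β : ℂ)
    have h' : HasSum (fun m => ((t m : ℝ) : ℂ)) (G β) := by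
      refine Eq.mp (congrArg (fun u : ℕ → ℂ => HasSum u (G β)) (funext fun m => ?_)) h
      symm
      rw [hd m, smul_eq_mul, smul_eq_mul]
      have hf : (m.factorial : ℂ) ≠ 0 := by exact_mod_cast m.factorial_ne_zero
      have : ((β : ℂ) - 2) ^ m = (-1) ^ m * (2 - β) ^ m := by rw [← mul_pow]; congr 1; ring
      rw [this]
      have h1 : ((-1 : ℂ) ^ m) * (-1) ^ m = 1 := by rw [← mul_pow]; simp
      simp only [ht]
      push_cast
      field_simp
      linear_combination (-(b m - lam : ℂ) * (2 - β) ^ m) * h1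
    simpa using Complex.hasSum_re h'
  have hcoef : ∀ m, |b m - lam| ≤ Q * (3 / 4) ^ m := by
    intro m
    have h := Complex.norm_iteratedDeriv_le_of_forall_mem_sphere_norm_le m (by norm_num)
      hG.diffContOnCl hQ
    rw [hd m, norm_mul, norm_mul, norm_pow, norm_neg, norm_one, one_pow, one_mul,
      Complex.norm_natCast, Complex.norm_real, Real.norm_eq_abs, mul_div_assoc] at h
    have hf : (0 : ℝ) < m.factorial := by exact_mod_cast m.factorial_pos
    have h2 := le_of_mul_le_mul_left h hf
    refine h2.trans (le_of_eq ?_)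
    rw [div_eq_mul_inv, ← inv_pow]; norm_num
  have htb : ∀ m, -(Q * (27 / 32) ^ m) ≤ t m := by
    intro m
    refine (abs_le.mp ?_).1
    rw [ht]
    simp only
    rw [abs_mul, abs_pow, abs_of_pos (by linarith : 0 < 2 - β)]
    calc _ ≤ Q * (3 / 4) ^ m * (9 / 8) ^ m := by
          refine mul_le_mul (hcoef m) ?_ (pow_nonneg (by linarith) _) (by positivity)
          exact pow_le_pow_left₀ (by linarith) (by linarith) _
      _ = _ := by rw [mul_assoc, ← mul_pow]; norm_num
  have hsplit := hsum.summable.sum_add_tsum_nat_add M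
  rw [hsum.tsum_eq] at hsplit
  have hfirst : 1 - lam * (((2 - β) ^ M - 1) / (1 - β)) ≤ ∑ i ∈ Finset.range M, t i := by
    have h1 : ∑ i ∈ Finset.range M, t i =
        ∑ i ∈ Finset.range M, b i * (2 - β) ^ i - lam * ∑ i ∈ Finset.range M, (2 - β) ^ i := by
      rw [Finset.mul_sum, ← Finset.sum_sub_distrib]
      exact Finset.sum_congr rfl fun i _ => by simp only [ht]; ring
    rw [h1, geom_sum_eq (by linarith)]
    have h2 : 2 - β - 1 = 1 - β := by ring
    rw [h2]
    have h3 : b 0 * (2 - β) ^ 0 ≤ ∑ i ∈ Finset.range M, b i * (2 - β) ^ i :=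
      Finset.single_le_sum (f := fun i => b i * (2 - β) ^ i)
        (fun i _ => mul_nonneg (hb i) (pow_nonneg (by linarith) _))
        (Finset.mem_range.mpr hM)
    simp at h3
    linarith
  have hgs : HasSum (fun i : ℕ => -(Q * (27 / 32 : ℝ) ^ (i + M)))
      (-(32 / 5 * Q * (27 / 32) ^ M)) := by
    have := (hasSum_geometric_of_lt_one (r := (27/32 : ℝ)) (by norm_num) (by norm_num)).mul_left
      (-(Q * (27/32 : ℝ) ^ M))
    have e1 : (fun i : ℕ => -(Q * (27 / 32 : ℝ) ^ (i + M))) =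
        fun i : ℕ => -(Q * (27/32 : ℝ) ^ M) * (27/32 : ℝ) ^ i := by
      funext i; rw [pow_add]; ring
    have e2 : -(32 / 5 * Q * (27 / 32 : ℝ) ^ M) = -(Q * (27/32 : ℝ) ^ M) * (1 - 27/32)⁻¹ := by
      norm_num; ring
    rw [e1, e2]
    exact this
  have htail : -(32 / 5 * Q * (27 / 32) ^ M) ≤ ∑' i, t (i + M) :=
    hasSum_le (fun i => htb (i + M)) hgs ((summable_nat_add_iff M).mpr hsum.summable).hasSum
  linarith

lemma gl_numeric {B ε β : ℝ} (hB : 1 ≤ B) (hβ1 : β < 1)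
    (hβε : (1 - β) / Real.log (32 / 27) ≤ ε) (hβ0 : 0 < β) : ∃ C : ℝ, 0 < C ∧ ∀ q lam : ℝ, 1 ≤ q →
      (∀ M : ℕ, 1 ≤ M → 1 - 32 / 5 * (B * q ^ 2) * (27 / 32) ^ M ≤ lam * (2 - β) ^ M / (1 - β)) →
      C * q ^ (-(2 * ε)) < lam := by
  have hlog : 0 < Real.log (32 / 27) := Real.log_pos (by norm_num)
  have hD : 1 ≤ 64 / 5 * B := by linarith
  refine ⟨(1 - β) / 4 * Real.exp (-2) * (64 / 5 * B) ^ (-ε), by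
    have := Real.exp_pos (-2)
    have : 0 < (64 / 5 * B) ^ (-ε) := Real.rpow_pos_of_pos (by linarith) _
    have : 0 < 1 - β := by linarith
    positivity, ?_⟩
  intro q lam hq h
  set A := 64 / 5 * B * q ^ 2 with hA
  have hA1 : 1 ≤ A := by
    have : 1 ≤ q ^ 2 := one_le_pow₀ hq
    nlinarith
  have hA0 : 0 < A := by linarith
  have hL0 : 0 ≤ Real.log A / Real.log (32 / 27) := div_nonneg (Real.log_nonneg hA1) hlog.le
  set M := ⌈Real.log A / Real.log (32 / 27)⌉₊ + 1 with hM
  have hM1 : Real.log A / Real.log (32 / 27) ≤ M := by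
    rw [hM]; push_cast
    have := Nat.le_ceil (Real.log A / Real.log (32 / 27)); linarith
  have hM2 : (M : ℝ) ≤ Real.log A / Real.log (32 / 27) + 2 := by
    rw [hM]; push_cast
    have := (Nat.ceil_lt_add_one hL0).le; linarith
  have hpow : A * (27 / 32 : ℝ) ^ M ≤ 1 := by
    have h1 : Real.log A ≤ M * Real.log (32 / 27) := by
      rwa [div_le_iff₀ hlog] at hM1
    have h2 : A ≤ (32 / 27 : ℝ) ^ M := by
      rw [← Real.log_le_log_iff hA0 (by positivity), Real.log_pow]; exact h1
    calc A * (27 / 32 : ℝ) ^ M ≤ (32 / 27 : ℝ) ^ M * (27 / 32 : ℝ) ^ M := by gcongr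
      _ = 1 := by rw [← mul_pow]; norm_num
  have hmain := h M (by omega)
  have hhalf : 1 / 2 ≤ lam * (2 - β) ^ M / (1 - β) := by
    refine le_trans ?_ hmain
    have : 32 / 5 * (B * q ^ 2) * (27 / 32 : ℝ) ^ M = A * (27 / 32) ^ M / 2 := by rw [hA]; ring
    rw [this]; linarith
  have hb : 0 < 1 - β := by linarith
  have hP0 : 0 < (2 - β) ^ M := pow_pos (by linarith) _
  have hPle : (2 - β) ^ M ≤ Real.exp 2 * A ^ ε := by
    have h1 : 2 - β ≤ Real.exp (1 - β) := by
      have := Real.add_one_le_exp (1 - β); linarith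
    calc (2 - β) ^ M ≤ (Real.exp (1 - β)) ^ M := by gcongr; linarith
      _ = Real.exp (M * (1 - β)) := by rw [← Real.exp_nat_mul]
      _ ≤ Real.exp (2 + Real.log A * ε) := by
          apply Real.exp_le_exp.mpr
          have h2 : M * (1 - β) ≤ (Real.log A / Real.log (32 / 27) + 2) * (1 - β) := by gcongr
          have h3 : Real.log A / Real.log (32 / 27) * (1 - β) =
            Real.log A * ((1 - β) / Real.log (32 / 27)) := by ring
          have h4 : Real.log A * ((1 - β) / Real.log (32 / 27)) ≤ Real.log A * ε :=
            mul_le_mul_of_nonneg_left hβε (Real.log_nonneg hA1)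
          nlinarith
      _ = _ := by rw [Real.exp_add, Real.rpow_def_of_pos hA0]
  have hlam : (1 - β) / 2 ≤ lam * (2 - β) ^ M := by
    rw [le_div_iff₀ hb] at hhalf; linarith
  have hlam0 : 0 < lam := by
    by_contra hn
    push Not at hn
    have := mul_nonpos_of_nonpos_of_nonneg hn hP0.le
    linarith
  have hlam2 : (1 - β) / 2 ≤ lam * (Real.exp 2 * A ^ ε) :=
    hlam.trans (mul_le_mul_of_nonneg_left hPle hlam0.le)
  have hAe : 0 < A ^ ε := Real.rpow_pos_of_pos hA0 _
  have hq0 : 0 < q := by linarith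
  have hAinv : (64 / 5 * B) ^ (-ε) * q ^ (-(2 * ε)) = (A ^ ε)⁻¹ := by
    rw [← Real.rpow_neg hA0.le, hA,
      Real.mul_rpow (x := 64 / 5 * B) (y := q ^ 2) (by linarith) (by positivity)]
    congr 1
    rw [← Real.rpow_natCast q 2, ← Real.rpow_mul hq0.le]
    congr 1; push_cast; ring
  rw [mul_assoc, hAinv, Real.exp_neg]
  have : (1 - β) / 4 * (Real.exp 2)⁻¹ * (A ^ ε)⁻¹ = ((1 - β) / 4) / (Real.exp 2 * A ^ ε) := by
    field_simp
  rw [this, div_lt_iff₀ (by positivity)]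
  linarith

/-- `(s - 1) ζ(s)`, extended over `s = 1`. -/
noncomputable abbrev glZ : ℂ → ℂ := LFunctionTrivChar₁ 1

lemma glZ_one : glZ 1 = 1 := by simp [glZ]

lemma glZ_ne {s : ℂ} (hs : s ≠ 1) : glZ s = (s - 1) * riemannZeta s := by
  simp [glZ, Function.update_of_ne hs]

lemma glZ_diff : Differentiable ℂ glZ := differentiable_LFunctionTrivChar₁ 1

/-- `(s - 1) f(s)`, extended over `s = 1`. -/
noncomputable def glH {q₁ q₂ : ℕ} [NeZero q₁] [NeZero q₂] (χ₁ : DirichletCharacter ℂ q₁)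
    (χ₂ : DirichletCharacter ℂ q₂) (s : ℂ) : ℂ :=
  glZ s * (χ₁.LFunction s * χ₂.LFunction s * (glProd χ₁ χ₂).LFunction s)

open scoped ComplexOrder Topology in
lemma gl_key {q₁ q₂ : ℕ} [NeZero q₁] [NeZero q₂] (χ₁ : DirichletCharacter ℂ q₁)
    (χ₂ : DirichletCharacter ℂ q₂) (hn1 : χ₁ ≠ 1) (hn2 : χ₂ ≠ 1) (h1 : χ₁ ^ 2 = 1)
    (h2 : χ₂ ^ 2 = 1) (hn3 : glProd χ₁ χ₂ ≠ 1) {K : ℝ} (hK1 : 1 ≤ K)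
    (hK : ∀ z ∈ Metric.sphere (2 : ℂ) (4 / 3), ‖glZ z‖ ≤ K) {lam : ℝ}
    (hlam : χ₁.LFunction 1 * χ₂.LFunction 1 * (glProd χ₁ χ₂).LFunction 1 = lam)
    {β : ℝ} (hβ : 7 / 8 ≤ β) (hβ1 : β < 1) (hH : 0 ≤ (glH χ₁ χ₂ β).re) {M : ℕ} (hM : 1 ≤ M) :
    1 - 32 / 5 * (1296 * K * q₁ ^ 2 * (q₂ : ℝ) ^ 2) * (27 / 32) ^ M ≤
      lam * (2 - β) ^ M / (1 - β) := by
  have hHd : Differentiable ℂ (glH χ₁ χ₂) :=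
    glZ_diff.mul (((differentiable_LFunction hn1).mul (differentiable_LFunction hn2)).mul
      (differentiable_LFunction hn3))
  have hH1 : glH χ₁ χ₂ 1 = lam := by rw [glH, glZ_one, one_mul, hlam]
  set G := dslope (glH χ₁ χ₂) 1 with hGdef
  have hG : Differentiable ℂ G := by
    rw [← differentiableOn_univ]
    exact (Complex.differentiableOn_dslope Filter.univ_mem).mpr hHd.differentiableOn
  have hGs : ∀ s : ℂ, s ≠ 1 → G s = (glH χ₁ χ₂ s - lam) / (s - 1) := by
    intro s hs
    rw [hGdef, dslope_of_ne _ hs, slope_def_field, hH1]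
  have hHb : ∀ s : ℂ, 2 / 3 ≤ s.re → ‖s‖ ≤ 4 → ‖glZ s‖ ≤ K →
      ‖glH χ₁ χ₂ s‖ ≤ 216 * K * q₁ ^ 2 * (q₂ : ℝ) ^ 2 := by
    intro s hs hs' hz
    have b1 := gl_LFunction_bound χ₁ hn1 hs hs'
    have b2 := gl_LFunction_bound χ₂ hn2 hs hs'
    have b3 := gl_LFunction_bound (glProd χ₁ χ₂) hn3 hs hs'
    push_cast at b3
    rw [glH, norm_mul, norm_mul, norm_mul]
    calc _ ≤ K * (6 * q₁ * (6 * q₂) * (6 * (q₁ * q₂))) := by gcongr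
      _ = _ := by ring
  have hlamb : ‖(lam : ℂ)‖ ≤ 216 * K * q₁ ^ 2 * (q₂ : ℝ) ^ 2 := by
    rw [← hH1]
    exact hHb 1 (by norm_num) (by norm_num) (by rw [glZ_one]; simpa using hK1)
  have hQ : ∀ z ∈ Metric.sphere (2 : ℂ) (4 / 3), ‖G z‖ ≤ 1296 * K * q₁ ^ 2 * (q₂ : ℝ) ^ 2 := by
    intro z hz
    have hz' := mem_sphere_iff_norm.mp hz
    have r1 : 1 / 3 ≤ ‖z - 1‖ := by
      have := norm_sub_le (z - 1) 1
      have e : z - 1 - 1 = z - 2 := by ring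
      rw [e, hz', norm_one] at this; linarith
    have hz1 : z ≠ 1 := by
      rintro rfl; simp at r1; linarith
    have r2 : 2 / 3 ≤ z.re := by
      have := Complex.abs_re_le_norm (z - 2)
      rw [hz'] at this
      have := (abs_le.mp this).1
      simp at this; linarith
    have r3 : ‖z‖ ≤ 4 := by
      have := norm_add_le (z - 2) 2
      rw [sub_add_cancel, hz'] at this
      have h2 : ‖(2 : ℂ)‖ = 2 := by norm_num
      rw [h2] at this; linarith
    rw [hGs z hz1, norm_div, div_le_iff₀ (by linarith)]
    have := norm_sub_le (glH χ₁ χ₂ z) lam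
    have := hHb z r2 r3 (hK z hz)
    have h0 : 0 ≤ K * q₁ ^ 2 * (q₂ : ℝ) ^ 2 := by positivity
    nlinarith
  -- Taylor coefficients at `2`
  set F := LSeries (glF χ₁ χ₂) with hF
  have habs : LSeries.abscissaOfAbsConv (glF χ₁ χ₂) < ((2 : ℝ) : EReal) :=
    lt_of_le_of_lt (glF_abscissa χ₁ χ₂) (by exact_mod_cast (by norm_num : (1 : ℝ) < 2))
  have hFG : F =ᶠ[𝓝 2] (G + fun s => (lam : ℂ) * (1 * s - 1)⁻¹) := by
    have : ∀ᶠ z : ℂ in 𝓝 2, 1 < z.re :=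
      (isOpen_lt continuous_const Complex.continuous_re).mem_nhds (by simp)
    filter_upwards [this] with z hz
    have hz1 : z ≠ 1 := by rintro rfl; simp at hz
    have hz2 : z - 1 ≠ 0 := sub_ne_zero.mpr hz1
    rw [Pi.add_apply, hGs z hz1, hF, glF_LSeries χ₁ χ₂ hz, glH, glZ_ne hz1]
    field_simp
    ring
  have hder : ∀ m, iteratedDeriv m F 2 =
      iteratedDeriv m G 2 + lam * ((-1) ^ m * (m.factorial : ℂ)) := by
    intro m
    rw [hFG.iteratedDeriv_eq, iteratedDeriv_add]
    · congr 1
      rw [iteratedDeriv_const_mul_field, iteratedDeriv_eq_iterate, iter_deriv_inv_linear_sub]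
      norm_num
    · exact hG.contDiff.contDiffAt
    · refine contDiffAt_const.mul (ContDiffAt.inv (by fun_prop) (by norm_num))
  have halt := fun m => LSeries.iteratedDeriv_alternating (a := glF χ₁ χ₂)
    (fun n => glF_nonneg χ₁ χ₂ h1 h2 n) (x := 2) habs m
  have hfac : ∀ m : ℕ, (0 : ℝ) < m.factorial := fun m => by exact_mod_cast m.factorial_pos
  set b : ℕ → ℝ := fun m => ((-1) ^ m * iteratedDeriv m F ((2 : ℝ) : ℂ)).re / m.factorial with hb
  have hbc : ∀ m, iteratedDeriv m F 2 = (-1) ^ m * (m.factorial : ℂ) * b m := by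
    intro m
    have h := Complex.eq_re_of_ofReal_le (halt m)
    have h1 : ((-1 : ℂ) ^ m) * (-1) ^ m = 1 := by rw [← mul_pow]; simp
    have hf : (m.factorial : ℂ) ≠ 0 := by exact_mod_cast m.factorial_ne_zero
    simp only [hb]
    push_cast
    push_cast at h
    rw [mul_assoc, mul_div_cancel₀ _ hf, ← h, ← mul_assoc, h1, one_mul]
  have hpos : ∀ m, 0 ≤ b m := fun m =>
    div_nonneg (by simpa using (Complex.le_def.mp (halt m)).1) (hfac m).le
  have hb0 : 1 ≤ b 0 := by
    have := (Complex.le_def.mp (glF_LSeries_two χ₁ χ₂ h1 h2)).1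
    simpa [hb, hF] using this
  have ht := gl_taylor hG hpos hb0 hQ (lam := lam) (fun m => by
    have e1 := hder m
    rw [hbc m] at e1
    push_cast
    linear_combination -e1) hβ hβ1 hM
  have hb1 : 0 < 1 - β := by linarith
  have hGre : (G β).re ≤ lam / (1 - β) := by
    have hβne : (β : ℂ) ≠ 1 := by exact_mod_cast hβ1.ne
    rw [hGs β hβne]
    have : ((β : ℂ) - 1) = ((β - 1 : ℝ) : ℂ) := by push_cast; ring
    rw [this, Complex.div_ofReal_re, Complex.sub_re, Complex.ofReal_re, ← neg_div_neg_eq]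
    have e : -(β - 1) = 1 - β := by ring
    rw [e]
    gcongr
    linarith
  have e3 : lam * (2 - β) ^ M / (1 - β) =
      lam / (1 - β) + lam * (((2 - β) ^ M - 1) / (1 - β)) := by
    field_simp; ring
  rw [e3]
  linarith

lemma gl_zeta_nonneg {x : ℝ} (hx : 1 < x) : ∃ z : ℝ, 0 ≤ z ∧ riemannZeta x = z := by
  refine ⟨∑' n : ℕ, 1 / ((n : ℝ) ) ^ x, tsum_nonneg fun n => by positivity, ?_⟩
  rw [zeta_eq_tsum_one_div_nat_cpow (by simpa using hx), Complex.ofReal_tsum]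
  congr 1 with n
  rw [Complex.ofReal_div, Complex.ofReal_cpow (by positivity)]
  simp

open Filter Topology in
lemma gl_triv_one {N : ℕ} [NeZero N] (hN : 4 ≤ N) :
    ∃ r : ℝ, 0 < r ∧ (1 : DirichletCharacter ℂ N).LFunction 1 = r := by
  have hN0 : (N : ℂ) ≠ 0 := by exact_mod_cast NeZero.ne N
  set c : ℝ := (N.totient : ℝ) / N with hc
  have hcpos : 0 < c := by
    have := Nat.totient_pos.mpr (NeZero.pos N)
    have := NeZero.pos N
    positivity
  have hcprod : c = ∏ p ∈ N.primeFactors, (1 - (p : ℝ)⁻¹) := by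
    have h := Nat.totient_eq_mul_prod_factors N
    have h2 : ((N.totient : ℚ) : ℝ) = ((N * ∏ p ∈ N.primeFactors, (1 - (p : ℚ)⁻¹) : ℚ) : ℝ) := by
      rw [h]
    push_cast at h2
    have : (N : ℝ) ≠ 0 := by exact_mod_cast NeZero.ne N
    rw [hc, h2]; field_simp
  let g : ℂ → ℂ := fun s => 1 / (s - 1) / Complex.Gammaℝ s
  let T : ℂ → ℂ := fun s => (1 : DirichletCharacter ℂ N).LFunction s -
    (N : ℂ) ^ (-s) * (N.totient * g s)
  have hsum : ∑ j : ZMod N, (1 : DirichletCharacter ℂ N) j = N.totient := by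
    rw [MulChar.sum_one_eq_card_units, ZMod.card_units_eq_totient]
  have hT : Tendsto T (𝓝[≠] 1) (𝓝 ((1 : DirichletCharacter ℂ N).LFunction 1)) := by
    have h1 : Tendsto (fun s : ℂ => (N : ℂ) ^ (-s) * ∑ j : ZMod N, (1 : DirichletCharacter ℂ N) j *
        (HurwitzZeta.hurwitzZeta (ZMod.toAddCircle j) s - g s)) (𝓝 1)
        (𝓝 ((1 : DirichletCharacter ℂ N).LFunction 1)) := by
      refine Tendsto.mul ?_ (tendsto_finsetSum _ fun j _ => ?_)
      · have : Continuous fun s : ℂ => (N : ℂ) ^ (-s) :=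
          continuous_neg.const_cpow (Or.inl hN0)
        exact this.tendsto 1
      · exact (HurwitzZeta.tendsto_hurwitzZeta_sub_one_div_nhds_one _).const_mul _
    refine (h1.mono_left nhdsWithin_le_nhds).congr fun s => ?_
    simp only [T, DirichletCharacter.LFunction, ZMod.LFunction, mul_sub, Finset.sum_sub_distrib]
    rw [← Finset.sum_mul, hsum]
  let U : ℂ → ℂ := fun s => (riemannZeta s - g s) +
    ((1 - (N : ℂ) ^ (1 - s)) / (s - 1)) / Complex.Gammaℝ s
  have hU : Tendsto U (𝓝[≠] 1) (𝓝 (riemannZeta 1 + Complex.log N / 1)) := by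
    refine Tendsto.add ?_ (Tendsto.div ?_ ?_ one_ne_zero)
    · have := HurwitzZeta.tendsto_hurwitzZeta_sub_one_div_nhds_one 0
      simp only [HurwitzZeta.hurwitzZeta_zero] at this
      exact this.mono_left nhdsWithin_le_nhds
    · have hd : HasDerivAt (fun s : ℂ => (N : ℂ) ^ (1 - s)) (-Complex.log N) 1 := by
        have := ((hasDerivAt_id (1 : ℂ)).const_sub 1).const_cpow (c := (N : ℂ)) (Or.inl hN0)
        simpa using this
      have := (hasDerivAt_iff_tendsto_slope.mp hd).neg
      rw [neg_neg] at this
      refine this.congr fun s => ?_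
      rw [slope_def_field]
      simp only [sub_self, Complex.cpow_zero]
      ring
    · have : ContinuousAt Complex.Gammaℝ 1 := by
        have h : ContinuousAt (fun s => (Complex.Gammaℝ s)⁻¹) 1 :=
          Complex.differentiable_Gammaℝ_inv.continuous.continuousAt
        have h2 := h.inv₀ (by rw [Complex.Gammaℝ_one]; norm_num)
        have e : (fun s => (Complex.Gammaℝ s)⁻¹)⁻¹ = Complex.Gammaℝ := by
          ext s; simp
        rwa [e] at h2
      have h := this.tendsto
      rw [Complex.Gammaℝ_one] at h
      exact h.mono_left nhdsWithin_le_nhds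
  have hdiff := hT.sub (hU.const_mul (c : ℂ))
  have hmap : Tendsto (fun x : ℝ => (x : ℂ)) (𝓝[>] 1) (𝓝[≠] 1) := by
    refine tendsto_nhdsWithin_iff.mpr ⟨?_, ?_⟩
    · exact (Complex.continuous_ofReal.tendsto 1).mono_left nhdsWithin_le_nhds
    · filter_upwards [self_mem_nhdsWithin] with x hx
      have : x ≠ 1 := ne_of_gt hx
      simpa using this
  have hlim := hdiff.comp hmap
  have hev : ∀ x : ℝ, 1 < x → ∃ y : ℝ, 0 ≤ y ∧ T x - c * U x = y := by
    intro x hx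
    obtain ⟨z, hz0, hz⟩ := gl_zeta_nonneg hx
    have hx1 : (x : ℂ) ≠ 1 := by exact_mod_cast hx.ne'
    refine ⟨((∏ p ∈ N.primeFactors, (1 - (p : ℝ) ^ (-x))) - c) * z, mul_nonneg ?_ hz0, ?_⟩
    · rw [sub_nonneg, hcprod]
      refine Finset.prod_le_prod (fun p hp => ?_) fun p hp => ?_
      · have : (1 : ℝ) ≤ p := by exact_mod_cast (Nat.prime_of_mem_primeFactors hp).one_le
        have := inv_le_one_of_one_le₀ this
        linarith
      · have : (1 : ℝ) ≤ p := by exact_mod_cast (Nat.prime_of_mem_primeFactors hp).one_le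
        have := Real.rpow_le_rpow_of_exponent_le this (show -x ≤ -1 by linarith)
        rw [Real.rpow_neg_one] at this
        linarith
    · have hL : (1 : DirichletCharacter ℂ N).LFunction x =
          ((∏ p ∈ N.primeFactors, (1 - (p : ℝ) ^ (-x)) : ℝ) : ℂ) * z := by
        have := LFunctionTrivChar_eq_mul_riemannZeta (N := N) hx1
        rw [hz] at this
        rw [LFunctionTrivChar] at this
        rw [this, Complex.ofReal_prod]
        congr 2 with p
        rw [Complex.ofReal_sub, Complex.ofReal_cpow (by positivity)]
        simp
      have hNx : (N : ℂ) ^ (1 - (x : ℂ)) = N * (N : ℂ) ^ (-(x : ℂ)) := by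
        rw [sub_eq_add_neg, Complex.cpow_add _ _ hN0, Complex.cpow_one]
      simp only [T, U, g, hL, hNx, hz, hc]
      push_cast
      field_simp
      ring
  have hre := (Complex.continuous_re.tendsto _).comp hlim
  have him := (Complex.continuous_im.tendsto _).comp hlim
  have hre0 := ge_of_tendsto hre (b := 0) (by
    filter_upwards [self_mem_nhdsWithin] with x hx
    obtain ⟨y, hy, e⟩ := hev x hx
    simp only [Function.comp, e]; simpa using hy)
  have him0 := tendsto_nhds_unique him (tendsto_const_nhds (x := (0 : ℝ)) |>.congr' (by
    filter_upwards [self_mem_nhdsWithin] with x hx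
    obtain ⟨y, hy, e⟩ := hev x hx
    simp only [Function.comp, e]; simp))
  have hval : (c : ℂ) * (riemannZeta 1 + Complex.log N / 1) =
      ((c * ((Real.eulerMascheroniConstant - Real.log (4 * Real.pi)) / 2 + Real.log N) : ℝ) : ℂ) := by
    rw [riemannZeta_one]
    push_cast
    rw [Complex.ofReal_log (by positivity)]
    simp
  rw [hval] at hre0 him0
  simp only [Complex.sub_re, Complex.sub_im, Complex.ofReal_re, Complex.ofReal_im, sub_zero] at hre0 him0
  refine ⟨((1 : DirichletCharacter ℂ N).LFunction 1).re, ?_, ?_⟩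
  · have h1 : Real.log (4 * Real.pi) ≤ 2 * Real.log N := by
      rw [← Real.log_rpow (by positivity), ]
      apply Real.log_le_log (by positivity)
      have : (4 : ℝ) ≤ N := by exact_mod_cast hN
      have := Real.pi_lt_four
      norm_num
      nlinarith
    have h2 := Real.one_half_lt_eulerMascheroniConstant
    have : 0 < c * ((Real.eulerMascheroniConstant - Real.log (4 * Real.pi)) / 2 + Real.log N) :=
      mul_pos hcpos (by linarith)
    linarith
  · exact Complex.ext rfl (by simpa using him0)

lemma gl_three_le {q : ℕ} [NeZero q] (χ : DirichletCharacter ℂ q) (hχ : χ ≠ 1) : 3 ≤ q := by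
  by_contra h
  have h0 := NeZero.pos q
  have : q = 1 ∨ q = 2 := by omega
  apply hχ
  rcases this with rfl | rfl
  · exact level_one χ
  · ext u
    have : u = 1 := Subsingleton.elim _ _
    simp [this]

lemma gl_prod_one {q₁ q₂ : ℕ} [NeZero q₁] [NeZero q₂] (χ₁ : DirichletCharacter ℂ q₁)
    (χ₂ : DirichletCharacter ℂ q₂) (hp1 : χ₁.IsPrimitive) (hp2 : χ₂.IsPrimitive)
    (h2 : χ₂ ^ 2 = 1) (h : glProd χ₁ χ₂ = 1) :
    q₂ = q₁ ∧ χ₂.LFunction 1 = χ₁.LFunction 1 := by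
  have e : changeLevel (dvd_mul_right q₁ q₂) χ₁ = changeLevel (dvd_mul_left q₂ q₁) χ₂ := by
    have h3 : changeLevel (dvd_mul_left q₂ q₁) χ₂ * changeLevel (dvd_mul_left q₂ q₁) χ₂ = 1 := by
      rw [← map_mul, ← pow_two, h2, map_one]
    have h4 : changeLevel (dvd_mul_right q₁ q₂) χ₁ * changeLevel (dvd_mul_left q₂ q₁) χ₂ = 1 := h
    exact mul_right_cancel (h4.trans h3.symm)
  have hq : q₂ = q₁ := by
    have := congrArg conductor e
    rw [conductor_changeLevel, conductor_changeLevel] at this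
    rw [← (isPrimitive_def _).mp hp1, ← (isPrimitive_def _).mp hp2, this]
  refine ⟨hq, ?_⟩
  subst hq
  rw [changeLevel_injective _ e]

lemma gl_real_one {q : ℕ} [NeZero q] (χ : DirichletCharacter ℂ q) (hn : χ ≠ 1) (h : χ ^ 2 = 1) :
    χ.LFunction 1 = ((χ.LFunction 1).re : ℂ) := by
  have := gl_LFunction_real χ hn h (x := 1) one_pos
  rw [Complex.ofReal_one] at this
  exact this.symm

lemma gl_final {q₁ : ℕ} [NeZero q₁] (χ₁ : DirichletCharacter ℂ q₁) (hp1 : χ₁.IsPrimitive)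
    (hn1 : χ₁ ≠ 1) (h1 : χ₁ ^ 2 = 1) {ε β : ℝ} (hε : 0 < ε) (hβ : 7 / 8 ≤ β) (hβ1 : β < 1)
    (hβε : (1 - β) / Real.log (32 / 27) ≤ ε)
    (hH : ∀ (q₂ : ℕ) [NeZero q₂] (χ₂ : DirichletCharacter ℂ q₂), χ₂ ≠ 1 → χ₂ ^ 2 = 1 →
      glProd χ₁ χ₂ ≠ 1 → 0 ≤ (glH χ₁ χ₂ β).re) :
    ∃ C : ℝ, 0 < C ∧ ∀ (q₂ : ℕ) [NeZero q₂] (χ₂ : DirichletCharacter ℂ q₂), χ₂.IsPrimitive →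
      χ₂ ≠ 1 → χ₂ ^ 2 = 1 → ∃ r : ℝ,
        χ₁.LFunction 1 * χ₂.LFunction 1 * (glProd χ₁ χ₂).LFunction 1 = (r : ℂ) ∧
          C * (q₂ : ℝ) ^ (-(2 * ε)) < r := by
  have hq3 := gl_three_le χ₁ hn1
  obtain ⟨K, hK1, hK⟩ : ∃ K : ℝ, 1 ≤ K ∧ ∀ z ∈ Metric.sphere (2 : ℂ) (4 / 3), ‖glZ z‖ ≤ K := by
    obtain ⟨K, hK⟩ := (isCompact_sphere (2 : ℂ) (4 / 3)).exists_bound_of_continuousOn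
      glZ_diff.continuous.continuousOn
    exact ⟨max 1 K, le_max_left _ _, fun z hz => (hK z hz).trans (le_max_right _ _)⟩
  have hq1 : (1 : ℝ) ≤ q₁ := by exact_mod_cast NeZero.one_le
  have hB : (1 : ℝ) ≤ 1296 * K * q₁ ^ 2 := by
    have : (1 : ℝ) ≤ (q₁ : ℝ) ^ 2 := one_le_pow₀ hq1
    nlinarith
  obtain ⟨C₁, hC₁, hnum⟩ := gl_numeric hB hβ1 hβε (by linarith)
  have : NeZero (q₁ * q₁) := ⟨mul_ne_zero (NeZero.ne _) (NeZero.ne _)⟩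
  obtain ⟨t, ht, het⟩ := gl_triv_one (N := q₁ * q₁) (by nlinarith)
  set l := (χ₁.LFunction 1).re with hl
  have hle := gl_real_one χ₁ hn1 h1
  have hl0 : l ≠ 0 := by
    intro h0
    rw [← hl, h0] at hle
    exact LFunction_apply_one_ne_zero hn1 (by simpa using hle)
  have hlt : 0 < l * l * t := mul_pos (mul_self_pos.mpr hl0) ht
  refine ⟨min C₁ (l * l * t / 2), lt_min hC₁ (by linarith), ?_⟩
  intro q₂ _ χ₂ hp2 hn2 h2
  have hq2 : (1 : ℝ) ≤ q₂ := by exact_mod_cast NeZero.one_le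
  have hpow : 0 < (q₂ : ℝ) ^ (-(2 * ε)) := by positivity
  have hpow1 : (q₂ : ℝ) ^ (-(2 * ε)) ≤ 1 := Real.rpow_le_one_of_one_le_of_nonpos hq2 (by linarith)
  by_cases h3 : glProd χ₁ χ₂ = 1
  · obtain ⟨hq, hL⟩ := gl_prod_one χ₁ χ₂ hp1 hp2 h2 h3
    refine ⟨l * l * t, ?_, ?_⟩
    · rw [h3, hL]
      subst hq
      rw [het, hle]
      push_cast; rfl
    · have := min_le_right C₁ (l * l * t / 2)
      have h0 : 0 < min C₁ (l * l * t / 2) := lt_min hC₁ (by linarith)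
      nlinarith
  · have hlam : χ₁.LFunction 1 * χ₂.LFunction 1 * (glProd χ₁ χ₂).LFunction 1 =
        ((l * (χ₂.LFunction 1).re * ((glProd χ₁ χ₂).LFunction 1).re : ℝ) : ℂ) := by
      push_cast
      rw [← gl_real_one χ₂ hn2 h2, ← gl_real_one _ h3 (glProd_sq χ₁ χ₂ h1 h2), ← hle]
    refine ⟨_, hlam, lt_of_le_of_lt ?_ (hnum q₂ _ hq2 fun M hM =>
      gl_key χ₁ χ₂ hn1 hn2 h1 h2 h3 hK1 hK hlam hβ hβ1 (hH q₂ χ₂ hn2 h2 h3) hM)⟩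
    gcongr
    exact min_le_left _ _

/-- Positivity of the product in the zero-free case. -/
lemma gl_pos_of_no_zero {q₁ q₂ : ℕ} [NeZero q₁] [NeZero q₂] (χ₁ : DirichletCharacter ℂ q₁)
    (χ₂ : DirichletCharacter ℂ q₂) (hn1 : χ₁ ≠ 1) (hn2 : χ₂ ≠ 1) (h1 : χ₁ ^ 2 = 1)
    (h2 : χ₂ ^ 2 = 1) (hn3 : glProd χ₁ χ₂ ≠ 1) {β : ℝ} (hβ : 0 < β) (hβ1 : β < 1)
    (hz : 0 ≤ (glZ β).re)
    (hno : ∀ (q : ℕ) [NeZero q] (χ : DirichletCharacter ℂ q), χ ≠ 1 → χ ^ 2 = 1 →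
      ∀ x : ℝ, β ≤ x → x < 1 → χ.LFunction x ≠ 0) :
    0 ≤ (glH χ₁ χ₂ β).re := by
  have hno' : ∀ (q : ℕ) [NeZero q] (χ : DirichletCharacter ℂ q), χ ≠ 1 → χ ^ 2 = 1 →
      ∀ x : ℝ, β ≤ x → (χ.LFunction x).re ≠ 0 := by
    intro q _ χ hn h x hx h0
    have hr := gl_LFunction_real χ hn h (x := x) (by linarith)
    rw [h0] at hr
    rcases lt_or_ge x 1 with hx1 | hx1
    · exact hno q χ hn h x hx hx1 (by simpa using hr.symm)
    · exact LFunction_ne_zero_of_one_le_re χ (s := (x : ℂ)) (.inl hn)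
        (by simpa using hx1) (by simpa using hr.symm)
  let P : ℝ → ℝ := fun x => (χ₁.LFunction x).re * (χ₂.LFunction x).re *
    ((glProd χ₁ χ₂).LFunction x).re
  have hPc : ∀ x : ℝ, 0 < x → χ₁.LFunction x * χ₂.LFunction x * (glProd χ₁ χ₂).LFunction x = P x := by
    intro x hx
    simp only [P]
    push_cast
    rw [gl_LFunction_real χ₁ hn1 h1 hx, gl_LFunction_real χ₂ hn2 h2 hx,
      gl_LFunction_real _ hn3 (glProd_sq χ₁ χ₂ h1 h2) hx]
  have hcont : Continuous P := by
    have c1 := (differentiable_LFunction hn1).continuous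
    have c2 := (differentiable_LFunction hn2).continuous
    have c3 := (differentiable_LFunction hn3).continuous
    have r (f : ℂ → ℂ) (hf : Continuous f) : Continuous fun x : ℝ => (f x).re :=
      Complex.continuous_re.comp (hf.comp Complex.continuous_ofReal)
    exact ((r _ c1).mul (r _ c2)).mul (r _ c3)
  have hne : ∀ x, β ≤ x → P x ≠ 0 := fun x hx =>
    mul_ne_zero (mul_ne_zero (hno' _ _ hn1 h1 x hx) (hno' _ _ hn2 h2 x hx))
      (hno' _ _ hn3 (glProd_sq χ₁ χ₂ h1 h2) x hx)
  have hP2 : 0 < P 2 := by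
    have := glF_LSeries_two χ₁ χ₂ h1 h2
    rw [glF_LSeries χ₁ χ₂ (by norm_num), riemannZeta_two] at this
    have e := hPc 2 (by norm_num)
    push_cast at e
    have e2 : (Real.pi : ℂ) ^ 2 / 6 * χ₁.LFunction 2 * (χ₂.LFunction 2 * (glProd χ₁ χ₂).LFunction 2)
        = ((Real.pi ^ 2 / 6 * P 2 : ℝ) : ℂ) := by
      push_cast; rw [← e]; ring
    rw [e2] at this
    have h3 := (Complex.le_def.mp this).1
    rw [Complex.ofReal_re, Complex.one_re] at h3
    by_contra hneg
    have : 0 ≤ Real.pi ^ 2 / 6 := by positivity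
    nlinarith
  have hPβ : 0 < P β := by
    by_contra hneg
    obtain ⟨x, hx, hx0⟩ := intermediate_value_Icc (show β ≤ 2 by linarith) hcont.continuousOn
      (show (0 : ℝ) ∈ Set.Icc (P β) (P 2) from ⟨not_lt.mp hneg, hP2.le⟩)
    exact hne x hx.1 hx0
  rw [glH, hPc β hβ, Complex.re_mul_ofReal]
  exact mul_nonneg hz hPβ.le

lemma gl_exists_prim : ∃ χ : DirichletCharacter ℂ 3, χ.IsPrimitive ∧ χ ≠ 1 ∧ χ ^ 2 = 1 := by
  let χ : DirichletCharacter ℂ 3 := (quadraticChar (ZMod 3)).ringHomComp (Int.castRingHom ℂ)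
  have hχ : χ ≠ 1 := by
    refine (MulChar.ringHomComp_ne_one_iff (Int.cast_injective)).mpr (quadraticChar_ne_one ?_)
    rw [ZMod.ringChar_zmod_n]; norm_num
  refine ⟨χ, ?_, hχ, ?_⟩
  · rw [isPrimitive_def]
    rcases (Nat.dvd_prime Nat.prime_three).mp χ.conductor_dvd_level with h | h
    · exact absurd (eq_one_iff_conductor_eq_one.mpr h) hχ
    · exact h
  · have := (quadraticChar_isQuadratic (ZMod 3)).comp (Int.castRingHom ℂ)
    exact this.sq_eq_one

/-- Passing to the primitive character keeps a zero with positive real part. -/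
lemma gl_prim_zero {q : ℕ} [NeZero q] (χ : DirichletCharacter ℂ q) (hn : χ ≠ 1) (h : χ ^ 2 = 1)
    {x : ℝ} (hx : 0 < x) (h0 : χ.LFunction x = 0) :
    ∃ (q₁ : ℕ) (_ : NeZero q₁) (χ₁ : DirichletCharacter ℂ q₁), χ₁.IsPrimitive ∧ χ₁ ≠ 1 ∧
      χ₁ ^ 2 = 1 ∧ χ₁.LFunction x = 0 := by
  have : NeZero χ.conductor := ⟨χ.conductor_ne_zero⟩
  have hc := changeLevel_primitiveCharacter χ
  have hn' : χ.primitiveCharacter ≠ 1 := by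
    intro h1; rw [h1, map_one] at hc; exact hn hc.symm
  refine ⟨χ.conductor, inferInstance, χ.primitiveCharacter, primitiveCharacter_isPrimitive χ, hn',
    ?_, ?_⟩
  · apply changeLevel_injective χ.conductor_dvd_level
    rw [map_pow, hc, h, map_one]
  · have := LFunction_changeLevel χ.conductor_dvd_level χ.primitiveCharacter (s := x) (.inl hn')
    rw [hc, h0] at this
    rcases mul_eq_zero.mp this.symm with h1 | h1
    · exact h1
    · exfalso
      obtain ⟨p, hp, hp0⟩ := Finset.prod_eq_zero_iff.mp h1
      have hp1 : (1 : ℝ) < p := by exact_mod_cast (Nat.prime_of_mem_primeFactors hp).one_lt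
      have hnorm : ‖χ.primitiveCharacter p * (p : ℂ) ^ (-(x : ℂ))‖ < 1 := by
        rw [norm_mul]
        have a1 := χ.primitiveCharacter.norm_le_one p
        have a2 : ‖(p : ℂ) ^ (-(x : ℂ))‖ < 1 := by
          rw [Complex.norm_natCast_cpow_of_pos (Nat.prime_of_mem_primeFactors hp).pos]
          exact Real.rpow_lt_one_of_one_lt_of_neg hp1 (by simpa using hx)
        nlinarith [norm_nonneg (χ.primitiveCharacter p), norm_nonneg ((p : ℂ) ^ (-(x : ℂ)))]
      rw [← sub_eq_zero.mp hp0, norm_one] at hnorm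
      exact lt_irrefl _ hnorm

lemma gl_near {ε : ℝ} (hε : 0 < ε) : ∃ b : ℝ, 7 / 8 ≤ b ∧ b < 1 ∧
    ∀ β : ℝ, b ≤ β → β < 1 → (1 - β) / Real.log (32 / 27) ≤ ε ∧ 0 ≤ (glZ β).re := by
  have hc : Continuous fun x : ℝ => (glZ x).re :=
    Complex.continuous_re.comp (glZ_diff.continuous.comp Complex.continuous_ofReal)
  have h1 : (0 : ℝ) < (glZ ((1 : ℝ) : ℂ)).re := by rw [Complex.ofReal_one, glZ_one]; norm_num
  obtain ⟨δ, hδ, hb⟩ := Metric.eventually_nhds_iff.mp (hc.continuousAt.eventually (lt_mem_nhds h1))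
  have hlog : 0 < Real.log (32 / 27) := Real.log_pos (by norm_num)
  refine ⟨1 - min (1 / 8) (min (δ / 2) (ε * Real.log (32 / 27))), ?_, ?_, ?_⟩
  · linarith [min_le_left (1 / 8 : ℝ) (min (δ / 2) (ε * Real.log (32 / 27)))]
  · have : 0 < min (1 / 8 : ℝ) (min (δ / 2) (ε * Real.log (32 / 27))) := by positivity
    linarith
  · intro β h h'
    have m1 := (min_le_right (1 / 8 : ℝ) (min (δ / 2) (ε * Real.log (32 / 27))))
    have m2 := m1.trans (min_le_left _ _)
    have m3 := m1.trans (min_le_right _ _)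
    refine ⟨?_, (hb ?_).le⟩
    · rw [div_le_iff₀ hlog]; linarith
    · rw [Real.dist_eq, abs_lt]; constructor <;> linarith

theorem goldfeld_lambda_lower_bound (ε : ℝ) (hε : 0 < ε) (hε' : ε < 1 / 3) :
    ∃ C : ℝ, 0 < C ∧
      ∃ (q₁ : ℕ) (hq₁ : 1 < q₁),
        haveI : NeZero q₁ := ⟨by omega⟩
        ∃ χ₁ : DirichletCharacter ℂ q₁,
          χ₁.IsPrimitive ∧ χ₁ ≠ 1 ∧ χ₁ ^ 2 = 1 ∧
          ∀ (q₂ : ℕ) (hq₂ : 1 < q₂),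
            haveI : NeZero q₂ := ⟨by omega⟩
            ∀ χ₂ : DirichletCharacter ℂ q₂,
              χ₂.IsPrimitive → χ₂ ≠ 1 → χ₂ ^ 2 = 1 →
                ∃ r : ℝ,
                  χ₁.LFunction 1 * χ₂.LFunction 1 *
                    (changeLevel (dvd_mul_right q₁ q₂) χ₁ *
                      changeLevel (dvd_mul_left q₂ q₁) χ₂).LFunction 1 = (r : ℂ) ∧
                  C * (q₂ : ℝ) ^ (-(2 * ε)) < r := by
  obtain ⟨b, hb, hb1, hnear⟩ := gl_near hε
  have main : ∃ (q₁ : ℕ) (_ : NeZero q₁) (χ₁ : DirichletCharacter ℂ q₁) (β : ℝ),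
      χ₁.IsPrimitive ∧ χ₁ ≠ 1 ∧ χ₁ ^ 2 = 1 ∧ b ≤ β ∧ β < 1 ∧
      (∀ (q₂ : ℕ) [NeZero q₂] (χ₂ : DirichletCharacter ℂ q₂), χ₂ ≠ 1 → χ₂ ^ 2 = 1 →
      glProd χ₁ χ₂ ≠ 1 → 0 ≤ (glH χ₁ χ₂ β).re) := by
    by_cases hz : ∀ (q : ℕ) [NeZero q] (χ : DirichletCharacter ℂ q), χ ≠ 1 → χ ^ 2 = 1 →
      ∀ x : ℝ, b ≤ x → x < 1 → χ.LFunction x ≠ 0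
    · obtain ⟨χ₁, hp, hn, h⟩ := gl_exists_prim
      refine ⟨3, inferInstance, χ₁, b, hp, hn, h, le_rfl, hb1, ?_⟩
      intro q₂ _ χ₂ hn2 h2 hn3
      exact gl_pos_of_no_zero χ₁ χ₂ hn hn2 h h2 hn3 (by linarith) hb1 (hnear b le_rfl hb1).2 hz
    · push Not at hz
      obtain ⟨q, _, χ, hn, h, x, hx, hx1, h0⟩ := hz
      obtain ⟨q₁, i, χ₁, hp1, hn1, h1, h01⟩ := gl_prim_zero χ hn h (by linarith) h0
      refine ⟨q₁, i, χ₁, x, hp1, hn1, h1, hx, hx1, ?_⟩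
      intro q₂ _ χ₂ _ _ _
      rw [glH, h01]
      simp
  obtain ⟨q₁, i, χ₁, β, hp1, hn1, h1, hβ, hβ1, hH⟩ := main
  obtain ⟨C, hC, hfin⟩ := gl_final χ₁ hp1 hn1 h1 hε (hb.trans hβ) hβ1 (hnear β hβ hβ1).1 hH
  have hq3 := gl_three_le χ₁ hn1
  refine ⟨C, hC, q₁, by omega, χ₁, hp1, hn1, h1, ?_⟩
  intro q₂ hq₂ χ₂ hp2 hn2 h2
  have : NeZero q₂ := ⟨by omega⟩
  exact hfin q₂ χ₂ hp2 hn2 h2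
end
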